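/- arXiv:2509.10944 — 3 statements merged into one kernel-verified Lean document; each statement's English description precedes it below -/
import Mathlib

section
/- Let X be a CAT(0) space and C ⊂ X a closed convex subset with closest point projection π_C. Suppose there exists σ ≥ 0 such that dist(π_C(x), [x,y]) ≤ σ for all x ∈ X and y ∈ C. Then for any σ' > 2σ, whenever x ∈ X and y₁, y₂ ∈ C with π_C(x) ∈ [y₁,y₂], the geodesic triangle [x,y₁] ∪ [y₁,y₂] ∪ [y₂,x] is σ'-slim. -/
open Set Metric

/-- `γ` is a unit-speed geodesic on the interval `[a,b]`. -/
def IsGeodesicOn {X : Type*} [MetricSpace X] (γ : ℝ → X) (a b : ℝ) : Prop :=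
  ∀ s ∈ Set.Icc a b, ∀ t ∈ Set.Icc a b, dist (γ s) (γ t) = |s - t|

/-- `γ` is a unit-speed geodesic from `x` to `y`, parametrized on `[0, dist x y]`. -/
def GeodFromTo {X : Type*} [MetricSpace X] (γ : ℝ → X) (x y : X) : Prop :=
  IsGeodesicOn γ 0 (dist x y) ∧ γ 0 = x ∧ γ (dist x y) = y

/-- The geodesic segment traced by a geodesic `γ` from `x` to `y`. -/
def geodSeg {X : Type*} [MetricSpace X] (γ : ℝ → X) (x y : X) : Set X :=
  γ '' Set.Icc 0 (dist x y)

/-- A CAT(0) space: a geodesic metric space satisfying the CN (Bruhat--Tits)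
midpoint inequality, which characterizes CAT(0) among geodesic spaces. -/
class CAT0 (X : Type*) [MetricSpace X] : Prop where
  geodesic : ∀ x y : X, ∃ γ : ℝ → X, GeodFromTo γ x y
  cn : ∀ x y z m : X, dist y m = dist y z / 2 → dist m z = dist y z / 2 →
    dist x m ^ 2 ≤ (dist x y ^ 2 + dist x z ^ 2) / 2 - dist y z ^ 2 / 4

/-- A subset is (geodesically) convex if it contains every geodesic between its points. -/
def GeodConvex {X : Type*} [MetricSpace X] (C : Set X) : Prop :=
  ∀ γ : ℝ → X, ∀ a b : ℝ, a ≤ b → IsGeodesicOn γ a b → γ a ∈ C → γ b ∈ C →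
    ∀ t ∈ Set.Icc a b, γ t ∈ C

/-- `p` is the closest point projection onto `C`. -/
def IsClosestPointProj {X : Type*} [MetricSpace X] (C : Set X) (p : X → X) : Prop :=
  ∀ x : X, p x ∈ C ∧ ∀ z ∈ C, dist x (p x) ≤ dist x z

/-- `ℓ` is a (complete, unit-speed) geodesic line. -/
def IsGeodLine {X : Type*} [MetricSpace X] (ℓ : ℝ → X) : Prop :=
  ∀ s t : ℝ, dist (ℓ s) (ℓ t) = |s - t|

/-- A geodesic triangle with sides `S₁, S₂, S₃` is `σ'`-slim if each side is contained
in the `σ'`-neighborhood of the union of the other two. -/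
def SlimTri {X : Type*} [MetricSpace X] (σ' : ℝ) (S₁ S₂ S₃ : Set X) : Prop :=
  (∀ z ∈ S₁, Metric.infDist z (S₂ ∪ S₃) ≤ σ') ∧
  (∀ z ∈ S₂, Metric.infDist z (S₁ ∪ S₃) ≤ σ') ∧
  (∀ z ∈ S₃, Metric.infDist z (S₁ ∪ S₂) ≤ σ')

/-- A function on `[0,1]` that is midpoint convex and continuous is bounded by the maximum of
its values at the endpoints. -/
theorem le_max_of_midpoint_convex {g : ℝ → ℝ} (hg : ContinuousOn g (Icc 0 1))
    (hmid : ∀ s ∈ Icc (0 : ℝ) 1, ∀ t ∈ Icc (0 : ℝ) 1, g ((s + t) / 2) ≤ (g s + g t) / 2)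
    {t : ℝ} (ht : t ∈ Icc (0 : ℝ) 1) : g t ≤ max (g 0) (g 1) := by
  obtain ⟨m, hm, hmax⟩ := isCompact_Icc.exists_isMaxOn ⟨t, ht⟩ hg
  rw [isMaxOn_iff] at hmax
  refine (hmax t ht).trans ?_
  obtain ⟨hm0, hm1⟩ := hm
  rcases le_total m (1 / 2) with h | h
  · have hs : 2 * m ∈ Icc (0 : ℝ) 1 := ⟨by linarith, by linarith⟩
    have h1 := hmid 0 (by simp) _ hs
    rw [show (0 + 2 * m) / 2 = m by ring] at h1
    exact le_max_of_le_left (by linarith [hmax _ hs])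
  · have hs : 2 * m - 1 ∈ Icc (0 : ℝ) 1 := ⟨by linarith, by linarith⟩
    have h1 := hmid _ hs 1 (by simp)
    rw [show (2 * m - 1 + 1) / 2 = m by ring] at h1
    exact le_max_of_le_right (by linarith [hmax _ hs])

theorem IsGeodesicOn.continuousOn {X : Type*} [MetricSpace X] {γ : ℝ → X} {a b : ℝ}
    (h : IsGeodesicOn γ a b) : ContinuousOn γ (Icc a b) := by
  refine LipschitzOnWith.continuousOn (K := 1) (LipschitzOnWith.of_dist_le_mul ?_)
  intro s hs t ht
  simp [h s hs t ht, Real.dist_eq]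

/-- The midline of a triangle in a CAT(0) space is at most half the base. -/
theorem CAT0.dist_midpoints_le_half {X : Type*} [MetricSpace X] [CAT0 X] {x y z m n : X}
    (hm₁ : dist x m = dist x y / 2) (hm₂ : dist m y = dist x y / 2)
    (hn₁ : dist x n = dist x z / 2) (hn₂ : dist n z = dist x z / 2) :
    dist m n ≤ dist y z / 2 := by
  have h1 := CAT0.cn m x z n hn₁ hn₂
  have h2 := CAT0.cn z x y m hm₁ hm₂
  rw [dist_comm m x, hm₁, dist_comm m z] at h1
  rw [dist_comm z x, dist_comm z y] at h2
  refine abs_le_of_sq_le_sq' ?_ (by positivity) |>.2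
  nlinarith

/-- The distance between the midpoints of two opposite sides of a quadrilateral in a CAT(0)
space is at most the mean length of the other two sides. -/
theorem CAT0.dist_midpoints_le_mean {X : Type*} [MetricSpace X] [CAT0 X] {x y x' y' m n : X}
    (hm₁ : dist x m = dist x y / 2) (hm₂ : dist m y = dist x y / 2)
    (hn₁ : dist x' n = dist x' y' / 2) (hn₂ : dist n y' = dist x' y' / 2) :
    dist m n ≤ (dist x x' + dist y y') / 2 := by
  obtain ⟨γ, hγ, h0, h1⟩ := CAT0.geodesic x y'
  have hD : 0 ≤ dist x y' := dist_nonneg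
  have hl : dist x (γ (dist x y' / 2)) = dist x y' / 2 := by
    have := hγ 0 (by simp) (dist x y' / 2) ⟨by linarith, by linarith⟩
    rw [h0] at this
    rw [this, zero_sub, abs_neg, abs_of_nonneg (by linarith)]
  have hr : dist (γ (dist x y' / 2)) y' = dist x y' / 2 := by
    have := hγ (dist x y' / 2) ⟨by linarith, by linarith⟩ (dist x y') (by simp)
    rw [h1] at this
    rw [this, abs_of_nonpos (by linarith)]
    ring
  have e1 := CAT0.dist_midpoints_le_half hm₁ hm₂ hl hr
  have e2 := CAT0.dist_midpoints_le_half (x := y') (y := x) (z := x')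
    (m := γ (dist x y' / 2)) (n := n)
    (by rw [dist_comm, hr, dist_comm x]) (by rw [dist_comm, hl, dist_comm x])
    (by rw [dist_comm, hn₂, dist_comm x']) (by rw [dist_comm, hn₁, dist_comm x'])
  linarith [dist_triangle m (γ (dist x y' / 2)) n]

/-- Affinely parametrized geodesic arcs in a CAT(0) space are at most as far apart as their
endpoints. -/
theorem IsGeodesicOn.exists_dist_le_max {X : Type*} [MetricSpace X] [CAT0 X] {γ γ' : ℝ → X}
    {A B A' B' a b a' b' t : ℝ} (h : IsGeodesicOn γ A B) (h' : IsGeodesicOn γ' A' B')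
    (ha : a ∈ Icc A B) (hb : b ∈ Icc A B) (ha' : a' ∈ Icc A' B') (hb' : b' ∈ Icc A' B')
    (ht : t ∈ uIcc a b) :
    ∃ t' ∈ Icc A' B', dist (γ t) (γ' t') ≤ max (dist (γ a) (γ' a')) (dist (γ b) (γ' b')) := by
  have maps {a b A B : ℝ} (ha : a ∈ Icc A B) (hb : b ∈ Icc A B) :
      MapsTo (AffineMap.lineMap a b : ℝ → ℝ) (Icc 0 1) (Icc A B) :=
    fun u hu => (convex_Icc A B).lineMap_mem ha hb hu
  have midpt {γ : ℝ → X} {a b A B : ℝ} (h : IsGeodesicOn γ A B) (ha : a ∈ Icc A B)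
      (hb : b ∈ Icc A B) : dist (γ a) (γ ((a + b) / 2)) = dist (γ a) (γ b) / 2 ∧
      dist (γ ((a + b) / 2)) (γ b) = dist (γ a) (γ b) / 2 := by
    have hc : (a + b) / 2 ∈ Icc A B :=
      ⟨by linarith [ha.1, hb.1], by linarith [ha.2, hb.2]⟩
    rw [h a ha _ hc, h _ hc b hb, h a ha b hb, show a - (a + b) / 2 = (a - b) / 2 by ring,
      show (a + b) / 2 - b = (a - b) / 2 by ring, abs_div, abs_two]
    simp
  rw [← segment_eq_uIcc, segment_eq_image_lineMap] at ht
  obtain ⟨u, hu, rfl⟩ := ht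
  refine ⟨AffineMap.lineMap a' b' u, maps ha' hb' hu, ?_⟩
  have key := le_max_of_midpoint_convex
    (g := fun u => dist (γ (AffineMap.lineMap a b u)) (γ' (AffineMap.lineMap a' b' u)))
    (continuous_dist.comp_continuousOn <| ContinuousOn.prodMk
      (h.continuousOn.comp AffineMap.lineMap_continuous.continuousOn (maps ha hb))
      (h'.continuousOn.comp AffineMap.lineMap_continuous.continuousOn (maps ha' hb'))) ?_ hu
  · simpa using key
  · intro s hs r hr
    have e (a b : ℝ) : AffineMap.lineMap a b ((s + r) / 2) =
        ((AffineMap.lineMap a b s : ℝ) + AffineMap.lineMap a b r) / 2 := by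
      simp only [AffineMap.lineMap_apply_ring']
      ring
    have m := midpt h (maps ha hb hs) (maps ha hb hr)
    have m' := midpt h' (maps ha' hb' hs) (maps ha' hb' hr)
    simp only [e]
    exact CAT0.dist_midpoints_le_mean m.1 m.2 m'.1 m'.2

theorem GeodFromTo.reverse {X : Type*} [MetricSpace X] {γ : ℝ → X} {x y : X}
    (h : GeodFromTo γ x y) : GeodFromTo (fun t => γ (dist x y - t)) y x := by
  obtain ⟨h, h0, h1⟩ := h
  refine ⟨fun s hs t ht => ?_, by simpa using h1, by simpa [dist_comm y x] using h0⟩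
  rw [dist_comm y x] at hs ht
  rw [h _ ⟨by linarith [hs.2], by linarith [hs.1]⟩ _ ⟨by linarith [ht.2], by linarith [ht.1]⟩,
    abs_sub_comm]
  congr 1
  ring

/-- The distance to a geodesic segment is attained. -/
theorem GeodFromTo.exists_dist_eq_infDist {X : Type*} [MetricSpace X] {γ : ℝ → X} {x y : X}
    (h : GeodFromTo γ x y) (z : X) :
    ∃ t ∈ Icc 0 (dist x y), dist z (γ t) = infDist z (geodSeg γ x y) := by
  obtain ⟨_, ⟨t, ht, rfl⟩, e⟩ := (isCompact_Icc.image_of_continuousOn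
    h.1.continuousOn).exists_infDist_eq_dist
      ((nonempty_Icc.2 (dist_nonneg (x := x) (y := y))).image γ) z
  exact ⟨t, ht, e.symm⟩

/-- Theorem 3.1, (3) ⇒ (4): if `dist (π_C x) [x,y] ≤ σ` for all `x ∈ X`, `y ∈ C`, then
for every `σ' > 2σ`, every triangle `[x,y₁] ∪ [y₁,y₂] ∪ [y₂,x]` with `y₁, y₂ ∈ C` and
`π_C x ∈ [y₁,y₂]` is `σ'`-slim. -/
theorem slim_of_proj_close
    {X : Type*} [MetricSpace X] [CAT0 X]
    (C : Set X) (hclosed : IsClosed C) (hconv : GeodConvex C)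
    (p : X → X) (hp : IsClosestPointProj C p)
    (σ : ℝ) (hσ : 0 ≤ σ)
    (hproj : ∀ x : X, ∀ y ∈ C, ∀ γ : ℝ → X, GeodFromTo γ x y →
      Metric.infDist (p x) (geodSeg γ x y) ≤ σ) :
    ∀ σ' : ℝ, 2 * σ < σ' →
      ∀ x : X, ∀ y₁ ∈ C, ∀ y₂ ∈ C, ∀ γ₁ γ₀ γ₂ : ℝ → X,
        GeodFromTo γ₁ x y₁ → GeodFromTo γ₀ y₁ y₂ → GeodFromTo γ₂ y₂ x →
        p x ∈ geodSeg γ₀ y₁ y₂ →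
        SlimTri σ' (geodSeg γ₁ x y₁) (geodSeg γ₀ y₁ y₂) (geodSeg γ₂ y₂ x) := by
  intro σ' hσ' x y₁ hy₁ y₂ hy₂ γ₁ γ₀ γ₂ h₁ h₀ h₂ hpx
  obtain ⟨q, hq, hqp⟩ := hpx
  obtain ⟨s, hs, hsd⟩ : ∃ s ∈ Icc 0 (dist x y₁), dist (p x) (γ₁ s) ≤ σ := by
    obtain ⟨s, hs, e⟩ := h₁.exists_dist_eq_infDist (p x)
    exact ⟨s, hs, e.trans_le (hproj x y₁ hy₁ γ₁ h₁)⟩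
  obtain ⟨r, hr, hrd⟩ : ∃ r ∈ Icc 0 (dist y₂ x), dist (p x) (γ₂ r) ≤ σ := by
    obtain ⟨r, hr, e⟩ := h₂.reverse.exists_dist_eq_infDist (p x)
    rw [dist_comm x y₂] at hr
    exact ⟨dist y₂ x - r, ⟨by linarith [hr.2], by linarith [hr.1]⟩,
      e.trans_le (hproj x y₂ hy₂ _ h₂.reverse)⟩
  have hsr : dist (γ₁ s) (γ₂ r) ≤ 2 * σ := by
    linarith [dist_triangle_left (γ₁ s) (γ₂ r) (p x)]
  rw [← hqp] at hsd hrd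
  obtain ⟨g₁, h₁0, h₁1⟩ := h₁
  obtain ⟨g₀, h₀0, h₀1⟩ := h₀
  obtain ⟨g₂, h₂0, h₂1⟩ := h₂
  have left₁ : (0 : ℝ) ∈ Icc 0 (dist x y₁) := left_mem_Icc.2 dist_nonneg
  have left₀ : (0 : ℝ) ∈ Icc 0 (dist y₁ y₂) := left_mem_Icc.2 dist_nonneg
  have left₂ : (0 : ℝ) ∈ Icc 0 (dist y₂ x) := left_mem_Icc.2 dist_nonneg
  have right₁ : dist x y₁ ∈ Icc 0 (dist x y₁) := right_mem_Icc.2 dist_nonneg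
  have right₀ : dist y₁ y₂ ∈ Icc 0 (dist y₁ y₂) := right_mem_Icc.2 dist_nonneg
  have right₂ : dist y₂ x ∈ Icc 0 (dist y₂ x) := right_mem_Icc.2 dist_nonneg
  have near {γ γ' : ℝ → X} {B B' a b a' b' t : ℝ} {S : Set X} (h : IsGeodesicOn γ 0 B)
      (h' : IsGeodesicOn γ' 0 B') (ha : a ∈ Icc 0 B) (hb : b ∈ Icc 0 B) (ha' : a' ∈ Icc 0 B')
      (hb' : b' ∈ Icc 0 B') (hS : image γ' (Icc 0 B') ⊆ S) (ht : t ∈ uIcc a b)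
      (hab : γ a = γ' a') (hd : dist (γ b) (γ' b') ≤ 2 * σ) : infDist (γ t) S ≤ σ' := by
    obtain ⟨t', ht', hle⟩ := h.exists_dist_le_max h' ha hb ha' hb' ht
    rw [hab, dist_self, max_eq_right dist_nonneg] at hle
    exact (infDist_le_dist_of_mem (hS (mem_image_of_mem γ' ht'))).trans (by linarith)
  refine ⟨?_, ?_, ?_⟩
  · rintro _ ⟨t, ht, rfl⟩
    rcases le_total t s with hts | hts
    · exact near g₁ g₂ left₁ hs right₂ hr subset_union_right (mem_uIcc_of_le ht.1 hts)
        (h₁0.trans h₂1.symm) hsr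
    · exact near g₁ g₀ right₁ hs left₀ hq subset_union_left (mem_uIcc_of_ge hts ht.2)
        (h₁1.trans h₀0.symm) (by rw [dist_comm]; linarith)
  · rintro _ ⟨t, ht, rfl⟩
    rcases le_total t q with htq | htq
    · exact near g₀ g₁ left₀ hq right₁ hs subset_union_left (mem_uIcc_of_le ht.1 htq)
        (h₀0.trans h₁1.symm) (by linarith)
    · exact near g₀ g₂ right₀ hq left₂ hr subset_union_right (mem_uIcc_of_ge htq ht.2)
        (h₀1.trans h₂0.symm) (by linarith)
  · rintro _ ⟨t, ht, rfl⟩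
    rcases le_total t r with htr | htr
    · exact near g₂ g₀ left₂ hr right₀ hq subset_union_right (mem_uIcc_of_le ht.1 htr)
        (h₂0.trans h₀1.symm) (by rw [dist_comm]; linarith)
    · exact near g₂ g₁ right₂ hr left₁ hs subset_union_left (mem_uIcc_of_ge htr ht.2)
        (h₂1.trans h₁0.symm) (by rw [dist_comm]; exact hsr)
end

section
/- Let X be a proper CAT(0) space, Γ ⊂ Isom(X) a non-elementary rank one discrete subgroup with finite critical exponent, and Γ₀ ⊂ Γ a subgroup acting cocompactly on a closed convex subset C ⊂ X. Then Γ₀ has infinite index in Γ if and only if δ(Γ₀) < δ(Γ). -/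
open Set Metric

/-- `r` is a unit-speed geodesic ray (parametrized on `[0,∞)`). -/
def IsGeodRay {X : Type*} [MetricSpace X] (r : ℝ → X) : Prop :=
  ∀ s t : ℝ, 0 ≤ s → 0 ≤ t → dist (r s) (r t) = |s - t|

/-- Two rays are asymptotic if they stay at bounded distance. -/
def AsympRay {X : Type*} [MetricSpace X] (r₁ r₂ : ℝ → X) : Prop :=
  ∃ M : ℝ, ∀ t : ℝ, 0 ≤ t → dist (r₁ t) (r₂ t) ≤ M

/-- `ℓ` bounds a (Euclidean) half-plane. -/
def BoundsHalfPlane {X : Type*} [MetricSpace X] (ℓ : ℝ → X) : Prop :=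
  ∃ f : ℝ × ℝ → X,
    (∀ p q : ℝ × ℝ, 0 ≤ p.2 → 0 ≤ q.2 →
      dist (f p) (f q) = Real.sqrt ((p.1 - q.1) ^ 2 + (p.2 - q.2) ^ 2)) ∧
    ∀ t : ℝ, f (t, 0) = ℓ t

/-- A subgroup of the isometry group is discrete (acts metrically properly):
orbit balls are finite. -/
def IsDiscreteSubgroup {X : Type*} [MetricSpace X] (Γ : Subgroup (X ≃ᵢ X)) : Prop :=
  ∀ x : X, ∀ R : ℝ, {g : Γ | dist ((g : X ≃ᵢ X) x) x ≤ R}.Finite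

/-- A subgroup has rank one if it contains an isometry translating a geodesic line
that does not bound a half-plane. -/
def RankOne {X : Type*} [MetricSpace X] (Γ : Subgroup (X ≃ᵢ X)) : Prop :=
  ∃ g ∈ Γ, ∃ ℓ : ℝ → X, IsGeodLine ℓ ∧ ¬ BoundsHalfPlane ℓ ∧
    ∃ τ : ℝ, 0 < τ ∧ ∀ t : ℝ, (g : X ≃ᵢ X) (ℓ t) = ℓ (t + τ)

/-- The orbit counting function of `Γ` at basepoint `o`. -/
noncomputable def orbitCount {X : Type*} [MetricSpace X]
    (Γ : Subgroup (X ≃ᵢ X)) (o : X) (R : ℝ) : ℕ :=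
  Nat.card {g : Γ | dist ((g : X ≃ᵢ X) o) o ≤ R}

/-- The critical exponent of `Γ`:
`δ(Γ) = limsup_{R → ∞} (1/R) log #{g ∈ Γ : dist (g o) o ≤ R}`. -/
noncomputable def critExp {X : Type*} [MetricSpace X]
    (Γ : Subgroup (X ≃ᵢ X)) (o : X) : ℝ :=
  Filter.limsup (fun R : ℝ => Real.log (orbitCount Γ o R) / R) Filter.atTop

/-- `Γ` has finite critical exponent. -/
def HasFiniteCritExp {X : Type*} [MetricSpace X]
    (Γ : Subgroup (X ≃ᵢ X)) (o : X) : Prop :=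
  ∃ a : ℝ, ∀ R : ℝ, 1 ≤ R → Real.log (orbitCount Γ o R) / R ≤ a

/-- The geodesic ray `r` from `o` represents a point of the limit set of `Γ`: it is
the limit of geodesic segments from `o` to orbit points going to infinity. -/
def InLimitSet {X : Type*} [MetricSpace X]
    (Γ : Subgroup (X ≃ᵢ X)) (o : X) (r : ℝ → X) : Prop :=
  IsGeodRay r ∧ r 0 = o ∧
  ∃ g : ℕ → X ≃ᵢ X, (∀ n, g n ∈ Γ) ∧
    Filter.Tendsto (fun n => dist o (g n o)) Filter.atTop Filter.atTop ∧
    ∃ γ : ℕ → ℝ → X, (∀ n, GeodFromTo (γ n) o (g n o)) ∧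
      ∀ t : ℝ, 0 ≤ t →
        Filter.Tendsto (fun n => γ n (min t (dist o (g n o)))) Filter.atTop (nhds (r t))

/-- `Γ` is non-elementary: its limit set contains at least three points (three
pairwise non-asymptotic rays). -/
def NonElementary {X : Type*} [MetricSpace X] (Γ : Subgroup (X ≃ᵢ X)) (o : X) : Prop :=
  ∃ r₁ r₂ r₃ : ℝ → X, InLimitSet Γ o r₁ ∧ InLimitSet Γ o r₂ ∧ InLimitSet Γ o r₃ ∧
    ¬ AsympRay r₁ r₂ ∧ ¬ AsympRay r₁ r₃ ∧ ¬ AsympRay r₂ r₃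

namespace RankOneGap

/-- A continuous midpoint-convex function on `[0, D]` that is nonpositive at both ends is
nonpositive. -/
lemma nonpos_of_midpoint_convex {G : ℝ → ℝ} {D : ℝ} (hD : 0 ≤ D)
    (hc : ContinuousOn G (Icc 0 D)) (h0 : G 0 ≤ 0) (h1 : G D ≤ 0)
    (hmid : ∀ s d, 0 ≤ d → 0 ≤ s - d → s + d ≤ D → G s ≤ (G (s - d) + G (s + d)) / 2) :
    ∀ s ∈ Icc 0 D, G s ≤ 0 := by
  obtain ⟨m, hm, hmax⟩ := isCompact_Icc.exists_isMaxOn (nonempty_Icc.2 hD) hc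
  by_contra! hcon
  obtain ⟨s, hs, hpos⟩ := hcon
  have hGm : 0 < G m := hpos.trans_le (hmax hs)
  set K : Set ℝ := Icc 0 D ∩ G ⁻¹' {G m} with hK
  have hKc : IsCompact K :=
    isCompact_Icc.of_isClosed_subset (hc.preimage_isClosed_of_isClosed isClosed_Icc
      isClosed_singleton) inter_subset_left
  have hKn : K.Nonempty := ⟨m, hm, rfl⟩
  have hs0 : sInf K ∈ K := hKc.sInf_mem hKn
  set a := sInf K with ha
  have hGa : G a = G m := hs0.2
  have ha0 : 0 < a := by
    rcases hs0.1.1.eq_or_lt with h | h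
    · rw [← h] at hGa; linarith
    · exact h
  have haD : a < D := by
    rcases hs0.1.2.eq_or_lt with h | h
    · rw [h] at hGa; linarith
    · exact h
  set d := min a (D - a) with hd
  have hd0 : 0 < d := lt_min ha0 (by linarith)
  have hda : d ≤ a := min_le_left _ _
  have hdD : d ≤ D - a := min_le_right _ _
  have key := hmid a d hd0.le (by linarith) (by linarith)
  have hp : G (a + d) ≤ G m := hmax ⟨by linarith, by linarith⟩
  have hq' : G (a - d) ≤ G m := hmax ⟨by linarith, by linarith⟩
  have hq : G (a - d) ≠ G m := fun h => by
    have : a ≤ a - d := csInf_le hKc.bddBelow ⟨⟨by linarith, by linarith⟩, h⟩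
    linarith
  have := lt_of_le_of_ne hq' hq
  linarith

variable {X : Type*} [MetricSpace X]

lemma mul_dist_mem_Icc {l : ℝ} (hl : l ∈ Icc (0 : ℝ) 1) (x y : X) :
    l * dist x y ∈ Icc 0 (dist x y) :=
  ⟨mul_nonneg hl.1 dist_nonneg, mul_le_of_le_one_left dist_nonneg hl.2⟩

/-- `z` lies on the geodesic segment from `x` to `y`. -/
def Btw (x z y : X) : Prop := dist x z + dist z y = dist x y

lemma Btw.symm {x z y : X} (h : Btw x z y) : Btw y z x := by
  unfold Btw at *; rw [dist_comm y z, dist_comm z x, dist_comm y x]; linarith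

lemma Btw.trans_right {x z y q : X} (h : Btw x z y) (h' : Btw z q y) : Btw x q y := by
  unfold Btw at *
  linarith [dist_triangle x z q, dist_triangle x q y]

lemma Btw.middle_of_right {x z y q : X} (h : Btw x z y) (h' : Btw z q y) : Btw x z q := by
  unfold Btw at *
  linarith [dist_triangle x z q, dist_triangle x q y]

lemma Btw.exists_fraction {x z y : X} (h : Btw x z y) :
    ∃ l ∈ Icc (0 : ℝ) 1, dist x z = l * dist x y ∧ dist z y = (1 - l) * dist x y := by
  unfold Btw at h
  rcases (dist_nonneg (x := x) (y := y)).eq_or_lt with h0 | h0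
  · have h1 := dist_nonneg (x := x) (y := z)
    have h2 := dist_nonneg (x := z) (y := y)
    exact ⟨0, by simp, by linarith, by linarith⟩
  · refine ⟨dist x z / dist x y, ⟨by positivity, ?_⟩, by field_simp, ?_⟩
    · rw [div_le_one h0]; linarith [dist_nonneg (x := z) (y := y)]
    · field_simp; linarith

section CatZero

variable [CAT0 X]

/-- The point at fraction `l` of a geodesic from `x` to `y`. -/
noncomputable def pt (x y : X) (l : ℝ) : X :=
  Classical.choose (CAT0.geodesic x y) (l * dist x y)

lemma pt_zero (x y : X) : pt x y 0 = x := by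
  simpa [pt] using (Classical.choose_spec (CAT0.geodesic x y)).2.1

lemma pt_one (x y : X) : pt x y 1 = y := by
  simpa [pt] using (Classical.choose_spec (CAT0.geodesic x y)).2.2

lemma dist_pt_pt (x y : X) {l m : ℝ} (hl : l ∈ Icc (0 : ℝ) 1) (hm : m ∈ Icc (0 : ℝ) 1) :
    dist (pt x y l) (pt x y m) = |l - m| * dist x y := by
  have := (Classical.choose_spec (CAT0.geodesic x y)).1 _ (mul_dist_mem_Icc hl x y) _
    (mul_dist_mem_Icc hm x y)
  rw [pt, pt, this, ← sub_mul, abs_mul, abs_of_nonneg (dist_nonneg (x := x) (y := y))]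

lemma dist_left_pt (x y : X) {l : ℝ} (hl : l ∈ Icc (0 : ℝ) 1) :
    dist x (pt x y l) = l * dist x y := by
  have := dist_pt_pt x y (l := 0) (by simp) hl
  rwa [pt_zero, zero_sub, abs_neg, abs_of_nonneg hl.1] at this

lemma dist_pt_right (x y : X) {l : ℝ} (hl : l ∈ Icc (0 : ℝ) 1) :
    dist (pt x y l) y = (1 - l) * dist x y := by
  have := dist_pt_pt x y hl (m := 1) (by simp)
  rwa [pt_one, abs_sub_comm, abs_of_nonneg (by linarith [hl.2])] at this

lemma continuousOn_pt (x y : X) : ContinuousOn (pt x y) (Icc 0 1) := by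
  have : LipschitzOnWith (Real.toNNReal (dist x y)) (pt x y) (Icc 0 1) := by
    refine LipschitzOnWith.of_dist_le_mul fun l hl m hm => ?_
    rw [dist_pt_pt x y hl hm, Real.coe_toNNReal _ dist_nonneg, Real.dist_eq, mul_comm]
  exact this.continuousOn

lemma dist_sq_pt_le (p x y : X) {l : ℝ} (hl : l ∈ Icc (0 : ℝ) 1) :
    dist p (pt x y l) ^ 2 ≤
      (1 - l) * dist p x ^ 2 + l * dist p y ^ 2 - l * (1 - l) * dist x y ^ 2 := by
  have := nonpos_of_midpoint_convex (G := fun l => dist p (pt x y l) ^ 2 -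
      ((1 - l) * dist p x ^ 2 + l * dist p y ^ 2 - l * (1 - l) * dist x y ^ 2))
      zero_le_one ?_ ?_ ?_ ?_ l hl
  · simpa using this
  · have := continuousOn_pt x y
    fun_prop
  · simp [pt_zero]
  · simp [pt_one]
  · intro s d hd h0 h1
    have hm : s - d ∈ Icc (0 : ℝ) 1 := ⟨h0, by linarith⟩
    have hs : s ∈ Icc (0 : ℝ) 1 := ⟨by linarith, by linarith⟩
    have hp : s + d ∈ Icc (0 : ℝ) 1 := ⟨by linarith, h1⟩
    have e : dist (pt x y (s - d)) (pt x y (s + d)) = 2 * d * dist x y := by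
      rw [dist_pt_pt x y hm hp, show s - d - (s + d) = -(2 * d) by ring, abs_neg,
        abs_of_nonneg (by linarith)]
    have e1 : dist (pt x y (s - d)) (pt x y s) = d * dist x y := by
      rw [dist_pt_pt x y hm hs, show s - d - s = -d by ring, abs_neg, abs_of_nonneg hd]
    have e2 : dist (pt x y s) (pt x y (s + d)) = d * dist x y := by
      rw [dist_pt_pt x y hs hp, show s - (s + d) = -d by ring, abs_neg, abs_of_nonneg hd]
    have := CAT0.cn p (pt x y (s - d)) (pt x y (s + d)) (pt x y s)
      (by rw [e, e1]; ring) (by rw [e, e2]; ring)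
    rw [e] at this
    nlinarith

lemma eq_pt {x y z : X} {l : ℝ} (hl : l ∈ Icc (0 : ℝ) 1) (h0 : dist x z = l * dist x y)
    (h1 : dist z y = (1 - l) * dist x y) : z = pt x y l := by
  have := dist_sq_pt_le z x y hl
  rw [dist_comm z x, h0, h1] at this
  have : dist z (pt x y l) ^ 2 ≤ 0 := by linarith
  exact dist_eq_zero.1 (pow_eq_zero_iff two_ne_zero |>.1 (le_antisymm this (sq_nonneg _)))

/-- Stewart's inequality for a point dividing a geodesic segment. -/
lemma stewart {p x y z : X} {l : ℝ} (hl : l ∈ Icc (0 : ℝ) 1) (h0 : dist x z = l * dist x y)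
    (h1 : dist z y = (1 - l) * dist x y) :
    dist p z ^ 2 ≤ (1 - l) * dist p x ^ 2 + l * dist p y ^ 2 - l * (1 - l) * dist x y ^ 2 := by
  rw [eq_pt hl h0 h1]; exact dist_sq_pt_le p x y hl

lemma btw_pt (x y : X) {l : ℝ} (hl : l ∈ Icc (0 : ℝ) 1) : Btw x (pt x y l) y := by
  rw [Btw, dist_left_pt x y hl, dist_pt_right x y hl]; ring

lemma Btw.eq_pt {x z y : X} (h : Btw x z y) : ∃ l ∈ Icc (0 : ℝ) 1, z = pt x y l := by
  obtain ⟨l, hl, h0, h1⟩ := h.exists_fraction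
  exact ⟨l, hl, RankOneGap.eq_pt hl h0 h1⟩

/-- Distance between geodesics issuing from a common point. -/
lemma dist_pt_pt_le_left (x y y' : X) {l : ℝ} (hl : l ∈ Icc (0 : ℝ) 1) :
    dist (pt x y l) (pt x y' l) ≤ l * dist y y' := by
  have h1 := dist_sq_pt_le (pt x y l) x y' hl
  have h2 := dist_sq_pt_le y' x y hl
  rw [dist_comm (pt x y l) x, dist_left_pt x y hl] at h1
  rw [dist_comm y' (pt x y l), dist_comm y' x, dist_comm y' y] at h2
  refine abs_le_of_sq_le_sq' ?_ (mul_nonneg hl.1 dist_nonneg) |>.2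
  nlinarith [mul_le_mul_of_nonneg_left h2 hl.1]

lemma pt_swap (x y : X) {l : ℝ} (hl : l ∈ Icc (0 : ℝ) 1) : pt x y l = pt y x (1 - l) := by
  refine eq_pt ⟨by linarith [hl.2], by linarith [hl.1]⟩ ?_ ?_
  · rw [dist_comm, dist_pt_right x y hl, dist_comm x y]
  · rw [dist_comm, dist_left_pt x y hl, dist_comm x y]; ring

/-- Convexity of the distance between two geodesics. -/
lemma dist_pt_pt_le (x y x' y' : X) {l : ℝ} (hl : l ∈ Icc (0 : ℝ) 1) :
    dist (pt x y l) (pt x' y' l) ≤ (1 - l) * dist x x' + l * dist y y' := by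
  have h1 := dist_pt_pt_le_left x y y' hl
  have h2 := dist_pt_pt_le_left y' x x' (l := 1 - l) ⟨by linarith [hl.2], by linarith [hl.1]⟩
  rw [← pt_swap x y' hl, ← pt_swap x' y' hl] at h2
  linarith [dist_triangle (pt x y l) (pt x y' l) (pt x' y' l)]

/-- The sum of the squares of the diagonals of a quadrilateral is at most the sum of the
squares of its sides. -/
lemma quadrilateral (x a c z : X) :
    dist x c ^ 2 + dist a z ^ 2 ≤
      dist x a ^ 2 + dist a c ^ 2 + dist c z ^ 2 + dist z x ^ 2 := by
  have hh : (1 / 2 : ℝ) ∈ Icc (0 : ℝ) 1 := ⟨by norm_num, by norm_num⟩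
  have h1 := dist_sq_pt_le a x c hh
  have h2 := dist_sq_pt_le z x c hh
  have h3 := dist_triangle_right a z (pt x c (1 / 2))
  rw [dist_comm a x] at h1
  rw [dist_comm z c] at h2
  nlinarith [sq_nonneg (dist a (pt x c (1 / 2)) - dist z (pt x c (1 / 2))),
    dist_nonneg (x := a) (y := z), pow_le_pow_left₀ dist_nonneg h3 2]

lemma mem_of_btw {C : Set X} (hC : GeodConvex C) {x y z : X} (hx : x ∈ C)
    (hy : y ∈ C) (h : Btw x z y) : z ∈ C := by
  obtain ⟨l, hl, rfl⟩ := h.eq_pt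
  obtain ⟨h0, h1, h2⟩ := Classical.choose_spec (CAT0.geodesic x y)
  exact hC _ 0 (dist x y) dist_nonneg h0 (by rwa [h1]) (by rwa [h2]) _ (mul_dist_mem_Icc hl x y)

end CatZero

end RankOneGap

namespace RankOneGap

variable {X : Type*} [MetricSpace X]

/-- `ℓ t` is a nearest point to `x` on the line `ℓ`. -/
def IsProj (ℓ : ℝ → X) (x : X) (t : ℝ) : Prop := ∀ s, dist x (ℓ t) ≤ dist x (ℓ s)

/-- The parameter of the nearest-point projection of `x` to the line `ℓ`. -/
noncomputable def prm (ℓ : ℝ → X) (x : X) : ℝ := Classical.epsilon (IsProj ℓ x)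

/-- The distance from `x` to its projection on the line `ℓ`. -/
noncomputable def ht (ℓ : ℝ → X) (x : X) : ℝ := dist x (ℓ (prm ℓ x))

lemma ht_nonneg (ℓ : ℝ → X) (x : X) : 0 ≤ ht ℓ x := dist_nonneg

lemma isProj_prm {ℓ : ℝ → X} (hℓ : IsGeodLine ℓ) (x : X) : IsProj ℓ x (prm ℓ x) := by
  have hc : Continuous ℓ :=
    (Isometry.of_dist_eq fun s t => by rw [hℓ, Real.dist_eq]).continuous
  have hlim : Filter.Tendsto (fun s => dist x (ℓ s)) (Filter.cocompact ℝ) Filter.atTop := by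
    have h1 : Filter.Tendsto (fun s : ℝ => ‖s‖ - dist x (ℓ 0)) (Filter.cocompact ℝ)
        Filter.atTop :=
      Filter.tendsto_atTop_add_const_right _ _ (tendsto_norm_cocompact_atTop (E := ℝ))
    refine Filter.tendsto_atTop_mono (fun s => ?_) h1
    have := dist_triangle_left (ℓ s) (ℓ 0) x
    rw [hℓ, sub_zero] at this
    rw [Real.norm_eq_abs]; linarith
  obtain ⟨t, ht⟩ := (continuous_const.dist hc).exists_forall_le hlim
  exact Classical.epsilon_spec (p := IsProj ℓ x) ⟨t, ht⟩

lemma ht_le {ℓ : ℝ → X} (hℓ : IsGeodLine ℓ) (x : X) (s : ℝ) : ht ℓ x ≤ dist x (ℓ s) :=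
  isProj_prm hℓ x s

lemma ht_le_ht_add_dist {ℓ : ℝ → X} (hℓ : IsGeodLine ℓ) (x y : X) :
    ht ℓ x ≤ ht ℓ y + dist x y := by
  have := ht_le hℓ x (prm ℓ y)
  have h2 := dist_triangle x y (ℓ (prm ℓ y))
  unfold ht at *; linarith

lemma isProj_translate {ℓ : ℝ → X} {g : X ≃ᵢ X} {τ : ℝ} (hg : ∀ t, g (ℓ t) = ℓ (t + τ))
    {x : X} {t : ℝ}
    (h : IsProj ℓ x t) : IsProj ℓ (g x) (t + τ) := by
  intro s
  have := h (s - τ)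
  rw [← g.dist_eq, ← g.dist_eq x, hg, hg] at this
  simpa using this

section CatZero

variable [CAT0 X] {ℓ : ℝ → X}

lemma IsProj.sq_add_sq_le (hℓ : IsGeodLine ℓ) {x : X} {t : ℝ} (h : IsProj ℓ x t) (s : ℝ) :
    dist x (ℓ t) ^ 2 + (s - t) ^ 2 ≤ dist x (ℓ s) ^ 2 := by
  have key : ∀ m : ℝ, 0 < m → m < 1 →
      dist x (ℓ t) ^ 2 + (s - t) ^ 2 - m * (s - t) ^ 2 ≤ dist x (ℓ s) ^ 2 := by
    intro m hm0 hm1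
    have h1 := stewart (p := x) (x := ℓ t) (y := ℓ s) (z := ℓ (t + m * (s - t)))
      (l := m) ⟨hm0.le, hm1.le⟩
      (by rw [hℓ, hℓ, show t - (t + m * (s - t)) = m * (t - s) by ring, abs_mul,
            abs_of_pos hm0])
      (by rw [hℓ, hℓ, show t + m * (s - t) - s = (1 - m) * (t - s) by ring, abs_mul,
            abs_of_pos (by linarith)])
    have h2 := pow_le_pow_left₀ dist_nonneg (h (t + m * (s - t))) 2
    rw [hℓ t s, sq_abs] at h1
    have h3 : m * (dist x (ℓ t) ^ 2 + (s - t) ^ 2 - m * (s - t) ^ 2) ≤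
        m * dist x (ℓ s) ^ 2 := by nlinarith
    exact le_of_mul_le_mul_left h3 hm0
  have hlim : Filter.Tendsto (fun m : ℝ => dist x (ℓ t) ^ 2 + (s - t) ^ 2 - m * (s - t) ^ 2)
      (nhdsWithin 0 (Ioi 0)) (nhds (dist x (ℓ t) ^ 2 + (s - t) ^ 2 - 0 * (s - t) ^ 2)) := by
    apply Filter.Tendsto.mono_left _ nhdsWithin_le_nhds
    apply Continuous.tendsto; fun_prop
  have := le_of_tendsto hlim (b := dist x (ℓ s) ^ 2) (by
    filter_upwards [Ioo_mem_nhdsGT (zero_lt_one' ℝ)] with m hm using key m hm.1 hm.2)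
  linarith

lemma IsProj.abs_sub_le_dist (hℓ : IsGeodLine ℓ) {x y : X} {s t : ℝ} (hx : IsProj ℓ x s)
    (hy : IsProj ℓ y t) : |s - t| ≤ dist x y := by
  have h1 := hx.sq_add_sq_le hℓ t
  have h2 := hy.sq_add_sq_le hℓ s
  have h3 := quadrilateral x (ℓ s) (ℓ t) y
  rw [hℓ, sq_abs, dist_comm (ℓ s) y, dist_comm (ℓ t) y, dist_comm y x] at h3
  refine abs_le_of_sq_le_sq ?_ dist_nonneg
  nlinarith

lemma IsProj.eq_prm (hℓ : IsGeodLine ℓ) {x : X} {t : ℝ} (h : IsProj ℓ x t) : prm ℓ x = t := by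
  have := (isProj_prm hℓ x).abs_sub_le_dist hℓ h
  rw [dist_self] at this
  exact sub_eq_zero.1 (abs_nonpos_iff.1 this)

lemma IsProj.ht_eq (hℓ : IsGeodLine ℓ) {x : X} {t : ℝ} (h : IsProj ℓ x t) :
    ht ℓ x = dist x (ℓ t) := by rw [ht, h.eq_prm hℓ]

lemma abs_prm_sub_le (hℓ : IsGeodLine ℓ) (x y : X) : |prm ℓ x - prm ℓ y| ≤ dist x y :=
  (isProj_prm hℓ x).abs_sub_le_dist hℓ (isProj_prm hℓ y)

lemma continuous_prm (hℓ : IsGeodLine ℓ) : Continuous (prm ℓ) :=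
  (LipschitzWith.of_dist_le_mul (K := 1) fun x y => by
    simpa [Real.dist_eq] using abs_prm_sub_le hℓ x y).continuous

/-- Points on the perpendicular from `x` to `ℓ` have the same projection as `x`. -/
lemma isProj_pt (hℓ : IsGeodLine ℓ) (x : X) {m : ℝ} (hm : m ∈ Icc (0 : ℝ) 1) :
    IsProj ℓ (pt (ℓ (prm ℓ x)) x m) (prm ℓ x) := by
  intro s
  have h1 := ht_le hℓ x s
  have h2 := dist_triangle_left x (ℓ s) (pt (ℓ (prm ℓ x)) x m)
  rw [dist_pt_right _ _ hm] at h2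
  rw [dist_comm, dist_left_pt _ _ hm]
  rw [ht, dist_comm] at h1
  linarith

lemma prm_pt (hℓ : IsGeodLine ℓ) (x : X) {m : ℝ} (hm : m ∈ Icc (0 : ℝ) 1) :
    prm ℓ (pt (ℓ (prm ℓ x)) x m) = prm ℓ x := (isProj_pt hℓ x hm).eq_prm hℓ

lemma ht_pt (hℓ : IsGeodLine ℓ) (x : X) {m : ℝ} (hm : m ∈ Icc (0 : ℝ) 1) :
    ht ℓ (pt (ℓ (prm ℓ x)) x m) = m * ht ℓ x := by
  rw [(isProj_pt hℓ x hm).ht_eq hℓ, dist_comm, dist_left_pt _ _ hm, ht, dist_comm]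

lemma exists_btw_prm (hℓ : IsGeodLine ℓ) {x y : X} {t : ℝ} (h1 : prm ℓ x ≤ t)
    (h2 : t ≤ prm ℓ y) : ∃ z, Btw x z y ∧ prm ℓ z = t := by
  have hc : ContinuousOn (fun m => prm ℓ (pt x y m)) (Icc 0 1) :=
    (continuous_prm hℓ).comp_continuousOn (continuousOn_pt x y)
  obtain ⟨m, hm, e⟩ := intermediate_value_Icc zero_le_one hc
    (show t ∈ Icc _ _ by simpa [pt_zero, pt_one] using ⟨h1, h2⟩)
  exact ⟨_, btw_pt x y hm, e⟩

lemma prm_translate (hℓ : IsGeodLine ℓ) {g : X ≃ᵢ X} {τ : ℝ} (hg : ∀ t, g (ℓ t) = ℓ (t + τ))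
    (x : X) : prm ℓ (g x) = prm ℓ x + τ :=
  (isProj_translate hg (isProj_prm hℓ x)).eq_prm hℓ

lemma ht_translate (hℓ : IsGeodLine ℓ) {g : X ≃ᵢ X} {τ : ℝ} (hg : ∀ t, g (ℓ t) = ℓ (t + τ))
    (x : X) : ht ℓ (g x) = ht ℓ x := by
  rw [ht, prm_translate hℓ hg, ← hg, g.dist_eq, ht]

end CatZero

lemma pow_translate {ℓ : ℝ → X} {g : X ≃ᵢ X} {τ : ℝ} (hg : ∀ t, g (ℓ t) = ℓ (t + τ)) (n : ℕ)
    (t : ℝ) : (g ^ n) (ℓ t) = ℓ (t + n * τ) := by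
  induction n generalizing t with
  | zero => simp
  | succ n ih =>
    rw [pow_succ, IsometryEquiv.mul_apply, hg, ih]
    congr 1; push_cast; ring

lemma inv_translate {ℓ : ℝ → X} {g : X ≃ᵢ X} {τ : ℝ} (hg : ∀ t, g (ℓ t) = ℓ (t + τ))
    (t : ℝ) : g⁻¹ (ℓ t) = ℓ (t + -τ) := by
  apply g.injective
  rw [IsometryEquiv.apply_inv_self, hg]; congr 1; ring

lemma zpow_translate {ℓ : ℝ → X} {g : X ≃ᵢ X} {τ : ℝ} (hg : ∀ t, g (ℓ t) = ℓ (t + τ)) (n : ℤ)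
    (t : ℝ) : (g ^ n) (ℓ t) = ℓ (t + n * τ) := by
  obtain ⟨k, rfl | rfl⟩ := n.eq_nat_or_neg
  · simpa using pow_translate hg k t
  · rw [zpow_neg, zpow_natCast, ← inv_pow, pow_translate (inv_translate hg)]
    congr 1; push_cast; ring

end RankOneGap

namespace RankOneGap

variable {X : Type*} [MetricSpace X] [CAT0 X] {ℓ : ℝ → X}

/-- A family of perpendicular rays along `ℓ` whose distance at equal heights does not grow
spans a flat half-plane. -/
lemma boundsHalfPlane_of_perpendiculars (hℓ : IsGeodLine ℓ) (F : ℝ → ℝ → X)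
    (hzero : ∀ t, F t 0 = ℓ t)
    (hray : ∀ t u v, 0 ≤ u → 0 ≤ v → dist (F t u) (F t v) = |u - v|)
    (hpar : ∀ s t u, 0 ≤ u → dist (F s u) (F t u) ≤ |s - t|)
    (hproj : ∀ t u, 0 ≤ u → IsProj ℓ (F t u) t) :
    BoundsHalfPlane ℓ := by
  have hpar_eq : ∀ s t u, 0 ≤ u → dist (F s u) (F t u) = |s - t| := fun s t u hu =>
    le_antisymm (hpar s t u hu) ((hproj s u hu).abs_sub_le_dist hℓ (hproj t u hu))
  have hbase : ∀ s t u, 0 ≤ u → dist (F t u) (ℓ s) ^ 2 ≤ (t - s) ^ 2 + u ^ 2 := by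
    intro s t u hu
    have h1 := (hproj s u hu).sq_add_sq_le hℓ t
    have h2 := quadrilateral (F t u) (ℓ t) (ℓ s) (F s u)
    have h3 : ∀ r, dist (F r u) (ℓ r) = u := fun r => by
      rw [← hzero, hray r u 0 hu le_rfl, sub_zero, abs_of_nonneg hu]
    rw [h3, dist_comm (ℓ s), h3, hℓ, sq_abs, hpar_eq s t u hu, sq_abs, dist_comm (ℓ t)] at h2
    rw [h3] at h1
    nlinarith
  have hupper : ∀ s t u v, 0 ≤ v → v ≤ u →
      dist (F t u) (F s v) ^ 2 ≤ (t - s) ^ 2 + (u - v) ^ 2 := by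
    intro s t u v hv hvu
    rcases hv.eq_or_lt with rfl | hv0
    · rw [hzero, sub_zero]; exact hbase s t u hvu
    have hu0 : 0 < u := hv0.trans_le hvu
    have hd : dist (ℓ s) (F s u) = u := by
      rw [← hzero, hray s 0 u le_rfl hu0.le, zero_sub, abs_neg, abs_of_pos hu0]
    have h1 := stewart (p := F t u) (x := ℓ s) (y := F s u) (z := F s v) (l := v / u)
      ⟨by positivity, by rw [div_le_one hu0]; exact hvu⟩
      (by rw [hd, ← hzero, hray s 0 v le_rfl hv, zero_sub, abs_neg, abs_of_pos hv0]; field_simp)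
      (by rw [hd, hray s v u hv hu0.le, abs_sub_comm, abs_of_nonneg (by linarith)]; field_simp)
    rw [hd, hpar_eq t s u hu0.le, sq_abs] at h1
    have h2 := hbase s t u hu0.le
    have h3 : 0 ≤ 1 - v / u := by rw [sub_nonneg, div_le_one hu0]; exact hvu
    have h4 := mul_le_mul_of_nonneg_left h2 h3
    have h5 : (1 - v / u) * ((t - s) ^ 2 + u ^ 2) + v / u * (t - s) ^ 2 -
        v / u * (1 - v / u) * u ^ 2 = (t - s) ^ 2 + (u - v) ^ 2 := by field_simp; ring
    linarith
  have hlower : ∀ s t u v, 0 ≤ v → v ≤ u →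
      (t - s) ^ 2 + (u - v) ^ 2 ≤ dist (F t u) (F s v) ^ 2 := by
    intro s t u v hv hvu
    have hu : 0 ≤ u := hv.trans hvu
    have hw : 0 ≤ 2 * u - v := by linarith
    have h1 := CAT0.cn (F t u) (F s v) (F s (2 * u - v)) (F s u)
      (by rw [hray s v u hv hu, hray s v _ hv hw, abs_sub_comm, abs_sub_comm v,
            abs_of_nonneg (by linarith), abs_of_nonneg (by linarith)]; ring)
      (by rw [hray s u _ hu hw, hray s v _ hv hw, abs_sub_comm, abs_sub_comm v,
            abs_of_nonneg (by linarith), abs_of_nonneg (by linarith)]; ring)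
    have h2 := hupper t s (2 * u - v) u hu (by linarith)
    rw [dist_comm (F s _) (F t u)] at h2
    rw [hpar_eq t s u hu, sq_abs, hray s v _ hv hw, sq_abs] at h1
    nlinarith
  have hsq : ∀ s t u v, 0 ≤ u → 0 ≤ v →
      dist (F t u) (F s v) ^ 2 = (t - s) ^ 2 + (u - v) ^ 2 := by
    intro s t u v hu hv
    rcases le_total v u with h | h
    · exact le_antisymm (hupper s t u v hv h) (hlower s t u v hv h)
    · rw [dist_comm, le_antisymm (hupper t s v u hu h) (hlower t s v u hu h)]; ring
  refine ⟨fun p => F p.1 p.2, fun p q hp hq => ?_, hzero⟩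
  rw [← hsq q.1 p.1 p.2 q.2 hp hq, Real.sqrt_sq dist_nonneg]

/-- Along a geodesic whose length barely exceeds the distance of the projections of its
endpoints, distances barely exceed the distances of the projections. -/
lemma dist_le_of_thin (hℓ : IsGeodLine ℓ) {x y z w : X} {e : ℝ}
    (hd : dist x y ≤ prm ℓ y - prm ℓ x + e) (hz : Btw x z y) (hw : Btw x w y) :
    dist z w ≤ |prm ℓ z - prm ℓ w| + e := by
  obtain ⟨l, hl, rfl⟩ := hz.eq_pt
  obtain ⟨m, hm, rfl⟩ := hw.eq_pt
  have main : ∀ l m : ℝ, l ∈ Icc (0 : ℝ) 1 → m ∈ Icc (0 : ℝ) 1 → l ≤ m →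
      dist (pt x y l) (pt x y m) ≤ |prm ℓ (pt x y l) - prm ℓ (pt x y m)| + e := by
    intro l m hl hm hlm
    have h1 := abs_prm_sub_le hℓ x (pt x y l)
    have h2 := abs_prm_sub_le hℓ (pt x y m) y
    rw [dist_left_pt x y hl] at h1
    rw [dist_pt_right x y hm] at h2
    rw [dist_pt_pt x y hl hm, abs_sub_comm l m, abs_of_nonneg (sub_nonneg.2 hlm)]
    linarith [neg_abs_le (prm ℓ x - prm ℓ (pt x y l)), neg_abs_le (prm ℓ (pt x y m) - prm ℓ y),
      neg_abs_le (prm ℓ (pt x y l) - prm ℓ (pt x y m))]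
  rcases le_total l m with h | h
  · exact main l m hl hm h
  · rw [dist_comm, abs_sub_comm]; exact main m l hm hl h

/-- Equal-height points on two perpendiculars over a thin geodesic. -/
lemma dist_perpendicular_le (hℓ : IsGeodLine ℓ) {z w : X} {u b e k : ℝ} (hu : 0 ≤ u)
    (hk : 0 < k) (huk : u ≤ k) (hz : k ≤ ht ℓ z) (hw : k ≤ ht ℓ w) (he : 0 ≤ e)
    (hb : |prm ℓ z - prm ℓ w| = b) (hzw : dist z w ≤ b + e) :
    dist (pt (ℓ (prm ℓ z)) z (u / ht ℓ z)) (pt (ℓ (prm ℓ w)) w (u / ht ℓ w)) ≤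
      b + e + u * (b + e) / k := by
  have hz0 : 0 < ht ℓ z := hk.trans_le hz
  have hw0 : 0 < ht ℓ w := hk.trans_le hw
  have hl : u / ht ℓ z ∈ Icc (0 : ℝ) 1 :=
    ⟨by positivity, by rw [div_le_one hz0]; exact huk.trans hz⟩
  have hm : u / ht ℓ w ∈ Icc (0 : ℝ) 1 :=
    ⟨by positivity, by rw [div_le_one hw0]; exact huk.trans hw⟩
  have h1 := dist_pt_pt_le (ℓ (prm ℓ z)) z (ℓ (prm ℓ w)) w hl
  rw [hℓ, hb] at h1
  have h2 := dist_pt_pt (ℓ (prm ℓ w)) w hl hm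
  rw [dist_comm (ℓ (prm ℓ w)) w] at h2
  change _ = _ * ht ℓ w at h2
  have h3 : |u / ht ℓ z - u / ht ℓ w| * ht ℓ w = u * |ht ℓ w - ht ℓ z| / ht ℓ z := by
    rw [show u / ht ℓ z - u / ht ℓ w = u * (ht ℓ w - ht ℓ z) / (ht ℓ z * ht ℓ w) by
      field_simp, abs_div, abs_mul, abs_of_nonneg hu, abs_of_pos (mul_pos hz0 hw0)]
    field_simp
  have h4 : |ht ℓ w - ht ℓ z| ≤ b + e := by
    refine abs_le.2 ⟨?_, ?_⟩
    · linarith [ht_le_ht_add_dist hℓ z w]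
    · linarith [ht_le_ht_add_dist hℓ w z, dist_comm w z]
  have h5 : u * |ht ℓ w - ht ℓ z| / ht ℓ z ≤ u * (b + e) / k := by
    have : 0 ≤ b + e := (abs_nonneg _).trans h4
    gcongr
  have h6 : (1 - u / ht ℓ z) * b + u / ht ℓ z * dist z w ≤ b + e := by
    nlinarith [mul_le_mul_of_nonneg_left hzw hl.1, mul_le_of_le_one_left he hl.2]
  linarith [dist_triangle (pt (ℓ (prm ℓ z)) z (u / ht ℓ z))
    (pt (ℓ (prm ℓ w)) w (u / ht ℓ z)) (pt (ℓ (prm ℓ w)) w (u / ht ℓ w))]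

end RankOneGap

namespace RankOneGap

variable {X : Type*} [MetricSpace X] [CAT0 X] {ℓ : ℝ → X}

/-- If a periodic line bounds no half-plane, then high above the line the distance of points
uniformly exceeds the distance of their projections. -/
lemma exists_excess [ProperSpace X] (hℓ : IsGeodLine ℓ) (hflat : ¬ BoundsHalfPlane ℓ)
    {g : X ≃ᵢ X} {τ : ℝ} (hτ : 0 < τ) (hg : ∀ t, g (ℓ t) = ℓ (t + τ)) :
    ∃ K > 0, ∃ ε > 0, ∀ x y, 2 * K ≤ ht ℓ x → 2 * K ≤ ht ℓ y → prm ℓ y = prm ℓ x + K →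
      K + ε ≤ dist x y := by
  by_contra! hcon
  have hseq : ∀ n : ℕ, ∃ x y : X, 2 * (n + 1 : ℝ) ≤ ht ℓ x ∧ prm ℓ y = prm ℓ x + (n + 1) ∧
      dist x y ≤ prm ℓ y - prm ℓ x + 1 / (n + 1 : ℝ) ∧ prm ℓ x ≤ -(n + 1) / 2 ∧
      -(n + 1) / 2 - τ ≤ prm ℓ x := by
    intro n
    obtain ⟨x, y, hx, hy, hxy, hd⟩ := hcon (n + 1) (by positivity) (1 / (n + 1 : ℝ))
      (by positivity)
    set j : ℤ := ⌊(-(n + 1 : ℝ) / 2 - prm ℓ x) / τ⌋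
    have hj := zpow_translate hg j
    have h1 : (j : ℝ) * τ ≤ -(n + 1) / 2 - prm ℓ x := by
      rw [← le_div_iff₀ hτ]; exact Int.floor_le _
    have h2 : -(n + 1) / 2 - prm ℓ x < ((j : ℝ) + 1) * τ := by
      rw [← div_lt_iff₀ hτ]; exact Int.lt_floor_add_one _
    refine ⟨(g ^ j) x, (g ^ j) y, ?_⟩
    rw [ht_translate hℓ hj, prm_translate hℓ hj, prm_translate hℓ hj, IsometryEquiv.dist_eq]
    refine ⟨hx, by rw [hxy]; ring, by linarith, by linarith, by linarith⟩
  choose x y hx hxy hd hlo hhi using hseq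
  have hpts : ∀ (n : ℕ) (t : ℝ), ∃ z, prm ℓ (x n) ≤ t → t ≤ prm ℓ (y n) →
      Btw (x n) z (y n) ∧ prm ℓ z = t := by
    intro n t
    by_cases h : prm ℓ (x n) ≤ t ∧ t ≤ prm ℓ (y n)
    · obtain ⟨z, hz⟩ := exists_btw_prm hℓ h.1 h.2
      exact ⟨z, fun _ _ => hz⟩
    · exact ⟨x n, fun h1 h2 => (h ⟨h1, h2⟩).elim⟩
  choose z hz using hpts
  set U : Ultrafilter ℕ := Filter.hyperfilter ℕ
  have hU : (U : Filter ℕ) ≤ Filter.atTop := Nat.hyperfilter_le_atTop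
  have hlarge : ∀ b : ℝ, ∀ᶠ n : ℕ in U, b ≤ n := fun b =>
    hU (tendsto_natCast_atTop_atTop.eventually_ge_atTop b)
  have hgood : ∀ t : ℝ, ∀ᶠ n : ℕ in U, Btw (x n) (z n t) (y n) ∧ prm ℓ (z n t) = t ∧
      n ≤ ht ℓ (z n t) := by
    intro t
    filter_upwards [hlarge (2 * |t| + 2 * τ)] with n hn
    have hb := abs_le.1 (le_refl |t|)
    have hbt := hz n t (by linarith [hlo n]) (by linarith [hhi n, hxy n])
    refine ⟨hbt.1, hbt.2, ?_⟩
    have h1 := ht_le_ht_add_dist hℓ (x n) (z n t)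
    have h2 : dist (x n) (z n t) ≤ dist (x n) (y n) := by
      rw [← hbt.1]; linarith [dist_nonneg (x := z n t) (y := y n)]
    have h3 : 1 / (n + 1 : ℝ) ≤ 1 := by
      rw [div_le_one (by positivity)]; linarith [n.cast_nonneg (α := ℝ)]
    linarith [hx n, hd n, hxy n]
  set f : ℕ → ℝ → ℝ → X := fun n t u =>
    pt (ℓ (prm ℓ (z n t))) (z n t) (u / ht ℓ (z n t)) with hf
  have hfrac : ∀ t u : ℝ, 0 ≤ u → ∀ᶠ n : ℕ in U, 0 < ht ℓ (z n t) ∧ prm ℓ (z n t) = t ∧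
      u / ht ℓ (z n t) ∈ Icc (0 : ℝ) 1 := by
    intro t u hu
    filter_upwards [hgood t, hlarge (u + 1)] with n hn hnu
    have h0 : 0 < ht ℓ (z n t) := by linarith [hn.2.2]
    exact ⟨h0, hn.2.1, by positivity, by rw [div_le_one h0]; linarith [hn.2.2]⟩
  have hlim : ∀ t u : ℝ, ∃ p, 0 ≤ u → Filter.Tendsto (fun n => f n t u) U (nhds p) := by
    intro t u
    by_cases hu : 0 ≤ u
    · have hball : ∀ᶠ n : ℕ in U, f n t u ∈ closedBall (ℓ t) u := by
        filter_upwards [hfrac t u hu] with n hn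
        rw [mem_closedBall, dist_comm, hf]
        simp only
        rw [hn.2.1]
        have := dist_left_pt (ℓ t) (z n t) hn.2.2
        have e : dist (ℓ t) (z n t) = ht ℓ (z n t) := by rw [ht, hn.2.1, dist_comm]
        rw [this, e, div_mul_cancel₀ _ hn.1.ne']
      obtain ⟨p, -, hp⟩ := (isCompact_closedBall (ℓ t) u).ultrafilter_le_nhds
        (U.map fun n => f n t u) (Filter.le_principal_iff.2 hball)
      exact ⟨p, fun _ => hp⟩
    · exact ⟨ℓ t, fun h => (hu h).elim⟩
  choose F hF using hlim
  refine hflat (boundsHalfPlane_of_perpendiculars hℓ F ?_ ?_ ?_ ?_)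
  · intro t
    refine tendsto_nhds_unique (hF t 0 le_rfl) (tendsto_const_nhds.congr' ?_)
    filter_upwards [hfrac t 0 le_rfl] with n hn
    simp only [hf, zero_div, pt_zero, hn.2.1]
  · intro t u v hu hv
    refine tendsto_nhds_unique ((hF t u hu).dist (hF t v hv)) (tendsto_const_nhds.congr' ?_)
    filter_upwards [hfrac t u hu, hfrac t v hv] with n h1 h2
    simp only [hf]
    rw [dist_pt_pt _ _ h1.2.2 h2.2.2, dist_comm, ← ht, ← sub_div, abs_div, abs_of_pos h1.1,
      div_mul_cancel₀ _ h1.1.ne']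
  · intro s t u hu
    have hone : Filter.Tendsto (fun n : ℕ => 1 / (n + 1 : ℝ)) U (nhds 0) :=
      tendsto_one_div_add_atTop_nhds_zero_nat.mono_left hU
    have hinv : Filter.Tendsto (fun n : ℕ => ((n : ℝ))⁻¹) U (nhds 0) :=
      tendsto_inv_atTop_nhds_zero_nat.mono_left hU
    have hbound : Filter.Tendsto (fun n : ℕ => |s - t| + 1 / (n + 1 : ℝ) +
        u * (|s - t| + 1 / (n + 1 : ℝ)) * (n : ℝ)⁻¹) U
        (nhds (|s - t| + 0 + u * (|s - t| + 0) * 0)) :=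
      (hone.const_add _).add (((hone.const_add _).const_mul u).mul hinv)
    rw [mul_zero, add_zero, add_zero] at hbound
    refine le_of_tendsto_of_tendsto ((hF s u hu).dist (hF t u hu)) hbound ?_
    filter_upwards [hgood s, hgood t, hlarge (u + 1)] with n h1 h2 h3
    have hb : |prm ℓ (z n s) - prm ℓ (z n t)| = |s - t| := by rw [h1.2.1, h2.2.1]
    have := dist_le_of_thin hℓ (hd n) h1.1 h2.1
    rw [hb] at this
    rw [← div_eq_mul_inv]
    exact dist_perpendicular_le hℓ hu (by linarith) (by linarith) h1.2.2 h2.2.2 (by positivity)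
      hb this
  · intro t u hu s
    refine le_of_tendsto_of_tendsto ((hF t u hu).dist tendsto_const_nhds)
      ((hF t u hu).dist tendsto_const_nhds) ?_
    filter_upwards [hfrac t u hu] with n hn
    have := isProj_pt hℓ (z n t) hn.2.2 s
    simp only [hf]
    rwa [hn.2.1] at this ⊢

/-- The excess of the distance over the distance of projections grows linearly with height. -/
lemma excess_of_height (hℓ : IsGeodLine ℓ) {K ε : ℝ} (hK : 0 < K)
    (hex : ∀ x y, 2 * K ≤ ht ℓ x → 2 * K ≤ ht ℓ y → prm ℓ y = prm ℓ x + K → K + ε ≤ dist x y)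
    {x y : X} {w : ℝ} (hw : 2 * K ≤ w) (hx : w ≤ ht ℓ x) (hy : w ≤ ht ℓ y)
    (hxy : prm ℓ y = prm ℓ x + K) : K + ε * w / (2 * K) ≤ dist x y := by
  have hw0 : 0 < w := by linarith
  have hl : 2 * K / w ∈ Icc (0 : ℝ) 1 := ⟨by positivity, by rwa [div_le_one hw0]⟩
  have hhigh : ∀ q, w ≤ ht ℓ q → 2 * K ≤ ht ℓ (pt (ℓ (prm ℓ q)) q (2 * K / w)) := by
    intro q hq
    rw [ht_pt hℓ q hl, div_mul_eq_mul_div, le_div_iff₀ hw0]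
    gcongr
  have h1 := hex _ _ (hhigh x hx) (hhigh y hy) (by rw [prm_pt hℓ x hl, prm_pt hℓ y hl, hxy])
  have h2 := dist_pt_pt_le (ℓ (prm ℓ x)) x (ℓ (prm ℓ y)) y hl
  rw [hℓ, hxy, show prm ℓ x - (prm ℓ x + K) = -K by ring, abs_neg, abs_of_pos hK, ← hxy] at h2
  have h3 : ε ≤ 2 * K / w * (dist x y - K) := by linarith
  have h4 : ε * w / (2 * K) ≤ dist x y - K := by
    rw [div_le_iff₀ (by positivity)]
    rw [div_mul_eq_mul_div, le_div_iff₀ hw0] at h3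
    linarith
  linarith

lemma excess_of_blocks (hℓ : IsGeodLine ℓ) {K ε : ℝ} (hK : 0 < K)
    (hex : ∀ x y, 2 * K ≤ ht ℓ x → 2 * K ≤ ht ℓ y → prm ℓ y = prm ℓ x + K → K + ε ≤ dist x y)
    {w : ℝ} (hw : 2 * K ≤ w) (m : ℕ) {x y : X} (hhigh : ∀ q, Btw x q y → w ≤ ht ℓ q)
    (hxy : prm ℓ x + m * K ≤ prm ℓ y) : m * (K + ε * w / (2 * K)) ≤ dist x y := by
  induction m generalizing x with
  | zero => simp
  | succ m ih =>
    push_cast at hxy ⊢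
    have hmK : 0 ≤ m * K := by positivity
    obtain ⟨z, hz, hzp⟩ := exists_btw_prm hℓ (x := x) (y := y) (t := prm ℓ x + K)
      (by linarith) (by linarith)
    have h1 := excess_of_height hℓ hK hex hw (hhigh x (by simp [Btw])) (hhigh z hz) hzp
    have h2 := ih (fun q hq => hhigh q (hz.trans_right hq)) (by rw [hzp]; linarith)
    rw [← hz]; linarith

/-- Perpendiculars over distant points of the line diverge fast. -/
lemma exists_divergence (hℓ : IsGeodLine ℓ) {K ε : ℝ} (hK : 0 < K) (hε : 0 < ε)
    (hex : ∀ x y, 2 * K ≤ ht ℓ x → 2 * K ≤ ht ℓ y → prm ℓ y = prm ℓ x + K → K + ε ≤ dist x y) :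
    ∃ M > 0, ∀ x y k, M ≤ k → ht ℓ x = k → ht ℓ y = k → M ≤ |prm ℓ x - prm ℓ y| →
      3 / 2 * k ≤ dist x y := by
  obtain ⟨m, hm⟩ := exists_nat_ge (12 * K / ε)
  rw [div_le_iff₀ hε] at hm
  have hone : ∀ x y k, 8 * K ≤ k → ht ℓ x = k → ht ℓ y = k → prm ℓ x + m * K ≤ prm ℓ y →
      3 / 2 * k ≤ dist x y := by
    intro x y k hk hx hy hxy
    by_contra! hlt
    have := excess_of_blocks hℓ hK hex (w := k / 4) (by linarith) m (x := x) (y := y)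
      (fun q hq => by
        have h1 := ht_le_ht_add_dist hℓ x q
        have h2 := ht_le_ht_add_dist hℓ y q
        rw [dist_comm y q] at h2
        unfold Btw at hq
        linarith) hxy
    have h2 : 3 / 2 * k ≤ m * (ε * (k / 4) / (2 * K)) := by
      rw [mul_div_assoc', le_div_iff₀ (by positivity)]
      nlinarith
    have h3 : 0 ≤ m * K := by positivity
    linarith
  refine ⟨m * K + 8 * K, by positivity, fun x y k hk hx hy hxy => ?_⟩
  have hmK : 0 ≤ m * K := by positivity
  rcases le_abs'.1 hxy with h | h
  · exact hone x y k (by linarith) hx hy (by linarith)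
  · rw [dist_comm]; exact hone y x k (by linarith) hy hx (by linarith)

/-- The line `ℓ` is contracting: a geodesic whose endpoints project far from `ℓ t`, on both
sides, passes near `ℓ t`. -/
def Contr (ℓ : ℝ → X) (M : ℝ) : Prop :=
  ∀ x y t, prm ℓ x + M ≤ t → t + M ≤ prm ℓ y → ∃ z, Btw x z y ∧ dist z (ℓ t) ≤ 20 * M

lemma ht_le_of_obtuse (hℓ : IsGeodLine ℓ) {M : ℝ} (hM : 0 < M)
    (hdiv : ∀ x y k, M ≤ k → ht ℓ x = k → ht ℓ y = k → M ≤ |prm ℓ x - prm ℓ y| →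
      3 / 2 * k ≤ dist x y) {x z : X} (hxz : |prm ℓ x - prm ℓ z| = M)
    (hob : ht ℓ z ^ 2 + dist x z ^ 2 ≤ dist (ℓ (prm ℓ z)) x ^ 2) : ht ℓ z ≤ 20 * M := by
  set k := ht ℓ z with hk
  set H := ht ℓ x with hH
  set c := ℓ (prm ℓ z) with hc
  set a := ℓ (prm ℓ x) with ha
  by_contra! hlt
  have hzc : dist z c = k := rfl
  have hxa : dist x a = H := rfl
  have hac : dist a c = M := by rw [ha, hc, hℓ, hxz]
  have hq := quadrilateral x a c z
  have hp := (isProj_prm hℓ z).sq_add_sq_le hℓ (prm ℓ x)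
  rw [← sq_abs (prm ℓ x - prm ℓ z), hxz, ← hc, hzc, ← ha, dist_comm z a] at hp
  rw [hxa, hac, dist_comm c z, hzc, dist_comm z x, dist_comm x c] at hq
  have hkH : k ≤ H := by
    refine abs_le_of_sq_le_sq' ?_ (ht_nonneg ℓ x) |>.2
    linarith
  have hH0 : 0 < H := by linarith
  have hk0 : 0 < k := by linarith
  have hm : k / H ∈ Icc (0 : ℝ) 1 := ⟨by positivity, by rwa [div_le_one hH0]⟩
  have h1 := hdiv z (pt a x (k / H)) k (by linarith) rfl
    (by rw [ht_pt hℓ x hm, div_mul_cancel₀ _ hH0.ne'])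
    (by rw [prm_pt hℓ x hm, abs_sub_comm, hxz])
  have h2 := dist_pt_pt_le c x a x hm
  rw [dist_self, mul_zero, add_zero, dist_comm c a, hac] at h2
  have h2' : (1 - k / H) * M ≤ M := by nlinarith [hm.1]
  have h3 := dist_sq_pt_le z c x hm
  rw [hzc, dist_comm z x] at h3
  set L := dist c x
  have hL : L ≤ H + M := by
    have := dist_triangle_left c x a
    rw [hac, dist_comm a x, hxa] at this; linarith
  have hmL : k / H * L ≤ k + M := by
    have : k / H * L ≤ k / H * (H + M) := by gcongr
    have e : k / H * (H + M) = k + k / H * M := by field_simp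
    nlinarith [mul_le_of_le_one_left hM.le hm.2]
  have hmL0 : 0 ≤ k / H * L := mul_nonneg hm.1 dist_nonneg
  have h4 : dist z (pt c x (k / H)) ^ 2 ≤ k ^ 2 + (k + M) ^ 2 := by
    have e1 : k / H * dist x z ^ 2 ≤ k / H * (L ^ 2 - k ^ 2) := by
      gcongr; linarith
    have e2 : (k / H * L) ^ 2 ≤ (k + M) ^ 2 := by gcongr
    nlinarith [mul_nonneg hm.1 (sq_nonneg k)]
  have h5 := dist_triangle z (pt c x (k / H)) (pt a x (k / H))
  have h6 : (3 / 2 * k - M) ^ 2 ≤ dist z (pt c x (k / H)) ^ 2 := by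
    apply pow_le_pow_left₀ <;> linarith
  nlinarith

lemma contr_of_divergence (hℓ : IsGeodLine ℓ) {M : ℝ} (hM : 0 < M)
    (hdiv : ∀ x y k, M ≤ k → ht ℓ x = k → ht ℓ y = k → M ≤ |prm ℓ x - prm ℓ y| →
      3 / 2 * k ≤ dist x y) : Contr ℓ M := by
  intro x y t hx hy
  obtain ⟨z, hz, hzt⟩ := exists_btw_prm hℓ (x := x) (y := y) (t := t) (by linarith) (by linarith)
  obtain ⟨y', hy', hyt⟩ := exists_btw_prm hℓ (x := z) (y := y) (t := t + M)
    (by linarith) (by linarith)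
  obtain ⟨x', hx', hxt⟩ := exists_btw_prm hℓ (x := x) (y := z) (t := t - M)
    (by linarith) (by linarith)
  have h1 : Btw x z y' := hz.middle_of_right hy'
  have h2 : Btw x' z y' := (h1.symm.middle_of_right hx'.symm).symm
  refine ⟨z, hz, ?_⟩
  have hht : ht ℓ z = dist z (ℓ t) := by rw [ht, hzt]
  rw [← hht]
  obtain ⟨l, hl, e1, e2⟩ := h2.exists_fraction
  have hs := stewart (p := ℓ (prm ℓ z)) hl e1 e2
  rw [dist_comm (ℓ (prm ℓ z)) z, ← ht] at hs
  have hcase : ht ℓ z ^ 2 + dist x' z ^ 2 ≤ dist (ℓ (prm ℓ z)) x' ^ 2 ∨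
      ht ℓ z ^ 2 + dist y' z ^ 2 ≤ dist (ℓ (prm ℓ z)) y' ^ 2 := by
    by_contra! hc
    rw [dist_comm y' z, e1, e2] at hc
    rcases hl.1.eq_or_lt with h0 | h0
    · subst h0; linarith
    · nlinarith [mul_lt_mul_of_pos_left hc.2 h0,
        mul_le_mul_of_nonneg_left hc.1.le (sub_nonneg.2 hl.2)]
  rcases hcase with h | h
  · refine ht_le_of_obtuse hℓ hM hdiv ?_ h
    rw [hxt, hzt, show t - M - t = -M by ring, abs_neg, abs_of_pos hM]
  · refine ht_le_of_obtuse hℓ hM hdiv ?_ h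
    rw [hyt, hzt, show t + M - t = M by ring, abs_of_pos hM]

lemma exists_contr [ProperSpace X] (hℓ : IsGeodLine ℓ) (hflat : ¬ BoundsHalfPlane ℓ)
    {g : X ≃ᵢ X} {τ : ℝ} (hτ : 0 < τ) (hg : ∀ t, g (ℓ t) = ℓ (t + τ)) :
    ∃ M > 0, Contr ℓ M := by
  obtain ⟨K, hK, ε, hε, hex⟩ := exists_excess hℓ hflat hτ hg
  obtain ⟨M, hM, hdiv⟩ := exists_divergence hℓ hK hε hex
  exact ⟨M, hM, contr_of_divergence hℓ hM hdiv⟩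

end RankOneGap

namespace RankOneGap

variable {X : Type*} [MetricSpace X]

lemma isGeodLine_comp {ℓ : ℝ → X} (hℓ : IsGeodLine ℓ) (g : X ≃ᵢ X) :
    IsGeodLine fun t => g (ℓ t) := fun s t => by rw [g.dist_eq, hℓ]

lemma isGeodLine_neg {ℓ : ℝ → X} (hℓ : IsGeodLine ℓ) : IsGeodLine fun t => ℓ (-t) :=
  fun s t => by rw [hℓ, show -s - -t = -(s - t) by ring, abs_neg]

/-- The elements of a discrete group moving `x` into a given ball form a finite set. -/
lemma finite_dist_le {Γ : Subgroup (X ≃ᵢ X)} (hdisc : IsDiscreteSubgroup Γ) (x y : X) (D : ℝ) :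
    {g : X ≃ᵢ X | g ∈ Γ ∧ dist (g x) y ≤ D}.Finite := by
  refine ((hdisc x (D + dist x y)).image Subtype.val).subset fun g hg => ?_
  refine ⟨⟨g, hg.1⟩, ?_, rfl⟩
  have := dist_triangle_right (g x) x y
  simp only [mem_ofPred_eq]
  linarith [hg.2]

lemma index_ne_zero_of_finite_cover {G : Type*} [Group G] {Γ Γ₀ : Subgroup G} {F : Set G}
    (hF : F.Finite) (hle : Γ₀ ≤ Γ) (hcov : ∀ g ∈ Γ, ∃ γ ∈ Γ₀, γ⁻¹ * g ∈ F) :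
    (Γ₀.subgroupOf Γ).index ≠ 0 := by
  have hfin : Finite {g : Γ | (g : G) ∈ F} := (hF.preimage Subtype.val_injective.injOn).to_subtype
  have : Finite (Γ ⧸ Γ₀.subgroupOf Γ) := by
    refine Finite.of_surjective
      (fun φ : {g : Γ | (g : G) ∈ F} => ((φ.1⁻¹ : Γ) : Γ ⧸ Γ₀.subgroupOf Γ)) fun q => ?_
    obtain ⟨g, rfl⟩ := QuotientGroup.mk_surjective q
    obtain ⟨γ, hγ, hF⟩ := hcov (g⁻¹ : Γ) (g⁻¹).2
    refine ⟨⟨⟨γ, hle hγ⟩⁻¹ * g⁻¹, hF⟩, ?_⟩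
    rw [QuotientGroup.eq, Subgroup.mem_subgroupOf]
    simpa using Γ₀.inv_mem hγ
  exact Subgroup.index_ne_zero_of_finite

lemma exists_finite_cover_of_index_ne_zero {G : Type*} [Group G] {Γ Γ₀ : Subgroup G}
    (h : (Γ₀.subgroupOf Γ).index ≠ 0) :
    ∃ F : Set G, F.Finite ∧ F ⊆ Γ ∧ ∀ g ∈ Γ, ∃ φ ∈ F, g * φ⁻¹ ∈ Γ₀ := by
  have : (Γ₀.subgroupOf Γ).FiniteIndex := ⟨h⟩
  refine ⟨range fun q : Γ ⧸ Γ₀.subgroupOf Γ => ((q.out⁻¹ : Γ) : G), finite_range _, ?_, ?_⟩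
  · rintro _ ⟨q, rfl⟩; exact (q.out⁻¹).2
  · intro g hg
    refine ⟨_, ⟨((⟨g, hg⟩⁻¹ : Γ) : Γ ⧸ Γ₀.subgroupOf Γ), rfl⟩, ?_⟩
    have := QuotientGroup.eq.1 (Quotient.out_eq' ((⟨g, hg⟩⁻¹ : Γ) : Γ ⧸ Γ₀.subgroupOf Γ))
    rw [Subgroup.mem_subgroupOf] at this
    simpa using Γ₀.inv_mem this

/-- `c` is a nearest point of `C` to `x`. -/
def IsNearest (C : Set X) (x c : X) : Prop := c ∈ C ∧ ∀ c' ∈ C, dist x c ≤ dist x c'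

lemma exists_isNearest [ProperSpace X] {C : Set X} (hclosed : IsClosed C) (hne : C.Nonempty)
    (x : X) : ∃ c, IsNearest C x c := by
  obtain ⟨c, hc, e⟩ := hclosed.exists_infDist_eq_dist hne x
  exact ⟨c, hc, fun c' hc' => e ▸ infDist_le_dist_of_mem hc'⟩

lemma IsNearest.map {Γ₀ : Subgroup (X ≃ᵢ X)} {C : Set X}
    (hinv : ∀ g ∈ Γ₀, (g : X ≃ᵢ X) '' C = C) {γ : X ≃ᵢ X} (hγ : γ ∈ Γ₀)
    {x c : X} (h : IsNearest C x c) : IsNearest C (γ x) (γ c) := by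
  refine ⟨hinv γ hγ ▸ mem_image_of_mem _ h.1, fun c' hc' => ?_⟩
  rw [← hinv γ hγ] at hc'
  obtain ⟨d, hd, rfl⟩ := hc'
  rw [γ.dist_eq, γ.dist_eq]; exact h.2 d hd

section CatZero

variable [CAT0 X] {ℓ : ℝ → X}

lemma prm_comp (hℓ : IsGeodLine ℓ) (g : X ≃ᵢ X) (x : X) :
    prm (fun t => g (ℓ t)) (g x) = prm ℓ x :=
  IsProj.eq_prm (isGeodLine_comp hℓ g) fun s => by
    rw [g.dist_eq, g.dist_eq]; exact isProj_prm hℓ x s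

lemma prm_neg (hℓ : IsGeodLine ℓ) (x : X) : prm (fun t => ℓ (-t)) x = -prm ℓ x :=
  IsProj.eq_prm (isGeodLine_neg hℓ) fun s => by
    simpa using isProj_prm hℓ x (-s)

lemma Contr.comp {M : ℝ} (h : Contr ℓ M) (hℓ : IsGeodLine ℓ) (g : X ≃ᵢ X) :
    Contr (fun t => g (ℓ t)) M := by
  intro x y t hx hy
  obtain ⟨x, rfl⟩ := g.surjective x
  obtain ⟨y, rfl⟩ := g.surjective y
  rw [prm_comp hℓ] at hx hy
  obtain ⟨z, hz, hd⟩ := h x y t hx hy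
  exact ⟨g z, by simpa only [Btw, g.dist_eq] using hz, by rwa [g.dist_eq]⟩

lemma Contr.neg {M : ℝ} (h : Contr ℓ M) (hℓ : IsGeodLine ℓ) : Contr (fun t => ℓ (-t)) M := by
  intro x y t hx hy
  rw [prm_neg hℓ] at hx hy
  obtain ⟨z, hz, hd⟩ := h y x (-t) (by linarith) (by linarith)
  exact ⟨z, hz.symm, hd⟩

variable {Γ Γ₀ : Subgroup (X ≃ᵢ X)} {C : Set X} {o' : X} {R : ℝ}

lemma exists_mem_near_of_unbounded (hle : Γ₀ ≤ Γ) (hdisc : IsDiscreteSubgroup Γ)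
    (hconv : GeodConvex C) (hinv : ∀ g ∈ Γ₀, (g : X ≃ᵢ X) '' C = C) (ho' : o' ∈ C)
    (hcocpt : ∀ x ∈ C, ∃ g ∈ Γ₀, dist x ((g : X ≃ᵢ X) o') ≤ R)
    {h : X ≃ᵢ X} (hh : h ∈ Γ) {τ : ℝ} (hτ : 0 < τ)
    (htr : ∀ t, h (ℓ t) = ℓ (t + τ)) {M : ℝ} (hc : Contr ℓ M)
    (hunb : ∀ T, ∃ x ∈ C, T ≤ prm ℓ x) : ∃ c ∈ C, dist c (ℓ 0) ≤ 20 * M := by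
  have hnear : ∀ t, prm ℓ o' + M ≤ t → ∃ c ∈ C, dist c (ℓ t) ≤ 20 * M := by
    intro t ht
    obtain ⟨x, hx, hxt⟩ := hunb (t + M)
    obtain ⟨z, hz, hzd⟩ := hc o' x t ht hxt
    exact ⟨z, mem_of_btw hconv ho' hx hz, hzd⟩
  obtain ⟨n₀, hn₀⟩ := exists_nat_ge ((prm ℓ o' + M) / τ)
  rw [div_le_iff₀ hτ] at hn₀
  have hγ : ∀ n : ℕ, ∃ γ ∈ Γ₀, dist ((γ⁻¹ * h ^ (n + n₀)) (ℓ 0)) o' ≤ 20 * M + R := by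
    intro n
    obtain ⟨c, hcC, hcd⟩ := hnear ((n + n₀ : ℕ) * τ) (by
      push_cast
      have : 0 ≤ n * τ := by positivity
      linarith)
    obtain ⟨γ, hγ, hγd⟩ := hcocpt c hcC
    refine ⟨γ, hγ, ?_⟩
    rw [← γ.dist_eq, IsometryEquiv.mul_apply, IsometryEquiv.apply_inv_self,
      pow_translate htr, zero_add]
    linarith [dist_triangle_left (ℓ ((n + n₀ : ℕ) * τ)) (γ o') c]
  choose γ hγ hγd using hγ
  have hfin := finite_dist_le hdisc (ℓ 0) o' (20 * M + R)
  have hnotinj : ¬ Function.Injective fun n : ℕ => (γ n)⁻¹ * h ^ (n + n₀) := fun hinj =>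
    Set.infinite_of_injective_forall_mem hinj (fun n =>
      (⟨Γ.mul_mem (Γ.inv_mem (hle (hγ n))) (Γ.pow_mem hh _), hγd n⟩ :
        (γ n)⁻¹ * h ^ (n + n₀) ∈ {g : X ≃ᵢ X | g ∈ Γ ∧ dist (g (ℓ 0)) o' ≤ 20 * M + R})) hfin
  have hex : ∃ n m : ℕ, n < m ∧ (γ n)⁻¹ * h ^ (n + n₀) = (γ m)⁻¹ * h ^ (m + n₀) := by
    rw [Function.Injective] at hnotinj
    push Not at hnotinj
    obtain ⟨n, m, e, hne⟩ := hnotinj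
    rcases lt_or_gt_of_ne hne with hlt | hlt
    · exact ⟨n, m, hlt, e⟩
    · exact ⟨m, n, hlt, e.symm⟩
  obtain ⟨n, m, hnm, e⟩ := hex
  obtain ⟨j, rfl⟩ := Nat.exists_eq_add_of_lt hnm
  have hj : h ^ (j + 1) ∈ Γ₀ := by
    have e' : h ^ (j + 1) = γ (n + j + 1) * (γ n)⁻¹ := by
      refine mul_right_cancel (b := h ^ (n + n₀)) ?_
      rw [← pow_add, mul_assoc, e, mul_inv_cancel_left]
      congr 1; ring
    rw [e']; exact Γ₀.mul_mem (hγ _) (Γ₀.inv_mem (hγ _))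
  obtain ⟨i, hi⟩ := exists_nat_ge ((prm ℓ o' + M) / ((j + 1 : ℕ) * τ))
  rw [div_le_iff₀ (by positivity)] at hi
  obtain ⟨c, hcC, hcd⟩ := hnear _ hi
  have hp := pow_translate (pow_translate htr (j + 1)) i 0
  have hmem : ((h ^ (j + 1)) ^ i)⁻¹ ∈ Γ₀ := Γ₀.inv_mem (Γ₀.pow_mem hj i)
  refine ⟨((h ^ (j + 1)) ^ i)⁻¹ c, ?_, ?_⟩
  · rw [← hinv _ hmem]; exact mem_image_of_mem _ hcC
  · rwa [← ((h ^ (j + 1)) ^ i).dist_eq, IsometryEquiv.apply_inv_self, hp, zero_add]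

/-- A subgroup of infinite index has a translate of `ℓ` on which `C` projects to a bounded
set. -/
lemma exists_bounded_projection (hle : Γ₀ ≤ Γ) (hdisc : IsDiscreteSubgroup Γ)
    (hconv : GeodConvex C) (hinv : ∀ g ∈ Γ₀, (g : X ≃ᵢ X) '' C = C) (ho' : o' ∈ C)
    (hcocpt : ∀ x ∈ C, ∃ g ∈ Γ₀, dist x ((g : X ≃ᵢ X) o') ≤ R)
    (hℓ : IsGeodLine ℓ) {h : X ≃ᵢ X} (hh : h ∈ Γ) {τ : ℝ} (hτ : 0 < τ)
    (htr : ∀ t, h (ℓ t) = ℓ (t + τ)) {M : ℝ} (hc : Contr ℓ M)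
    (hindex : (Γ₀.subgroupOf Γ).index = 0) :
    ∃ g ∈ Γ, ∃ T, ∀ x ∈ C, |prm (fun t => g (ℓ t)) x| ≤ T := by
  by_contra! hcon
  refine index_ne_zero_of_finite_cover (finite_dist_le hdisc (ℓ 0) o' (20 * M + R)) hle
    (fun g hg => ?_) hindex
  have hℓg := isGeodLine_comp hℓ g
  have hcg := hc.comp hℓ g
  have hconj : g * h * g⁻¹ ∈ Γ := Γ.mul_mem (Γ.mul_mem hg hh) (Γ.inv_mem hg)
  have htrg : ∀ t, (g * h * g⁻¹) (g (ℓ t)) = g (ℓ (t + τ)) := fun t => by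
    simp [IsometryEquiv.mul_apply, htr]
  have hnear : ∃ c ∈ C, dist c (g (ℓ 0)) ≤ 20 * M := by
    by_cases hup : ∀ T, ∃ x ∈ C, T ≤ prm (fun t => g (ℓ t)) x
    · exact exists_mem_near_of_unbounded hle hdisc hconv hinv ho' hcocpt hconj hτ htrg hcg hup
    · push Not at hup
      obtain ⟨T, hT⟩ := hup
      have hdown : ∀ S, ∃ x ∈ C, S ≤ prm (fun t => g (ℓ (-t))) x := by
        intro S
        obtain ⟨x, hx, hlt⟩ := hcon g hg (max S T)
        refine ⟨x, hx, ?_⟩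
        rw [prm_neg hℓg]
        rcases lt_abs.1 hlt with h1 | h1
        · exact absurd (hT x hx) (not_lt.2 ((le_max_right S T).trans h1.le))
        · exact (le_max_left S T).trans h1.le
      have htrn : ∀ t, (g * h * g⁻¹)⁻¹ (g (ℓ (-t))) = g (ℓ (-(t + τ))) := fun t => by
        rw [inv_translate (ℓ := fun t => g (ℓ t)) htrg]
        simp only [neg_add]
      simpa using exists_mem_near_of_unbounded hle hdisc hconv hinv ho' hcocpt
        (Γ.inv_mem hconj) hτ htrn (hcg.neg hℓg) hdown
  obtain ⟨c, hcC, hcd⟩ := hnear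
  obtain ⟨γ, hγ, hγd⟩ := hcocpt c hcC
  refine ⟨γ, hγ, Γ.mul_mem (Γ.inv_mem (hle hγ)) hg, ?_⟩
  rw [← γ.dist_eq, IsometryEquiv.mul_apply, IsometryEquiv.apply_inv_self]
  linarith [dist_triangle_left (g (ℓ 0)) (γ o') c]

/-- An isometry mapping the points projecting far from `o'` on `C` to points projecting
near `o'`. -/
lemma exists_pingpong (hℓ : IsGeodLine ℓ) {h : X ≃ᵢ X} (hh : h ∈ Γ) {τ : ℝ} (hτ : 0 < τ)
    (htr : ∀ t, h (ℓ t) = ℓ (t + τ)) {M : ℝ} (hM : 0 < M) (hc : Contr ℓ M) (ho' : o' ∈ C)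
    {T : ℝ} (hT : ∀ x ∈ C, |prm ℓ x| ≤ T) :
    ∃ f ∈ Γ, ∃ r ≥ 0, ∀ x c c', IsNearest C x c → r < dist c o' → IsNearest C (f x) c' →
      dist c' o' ≤ r := by
  have hT0 : 0 ≤ T := (abs_nonneg _).trans (hT o' ho')
  set r := 2 * (20 * M + (T + M) + dist (ℓ 0) o') with hr
  have hpass : ∀ (y c : X) (z : X) (t : ℝ), IsNearest C y c → |t| ≤ T + M → Btw c z y →
      dist z (ℓ t) ≤ 20 * M → dist c o' ≤ r := by
    intro y c z t hy ht hz hd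
    have h1 : dist (ℓ t) (ℓ 0) ≤ T + M := by rw [hℓ, sub_zero]; exact ht
    have h2 := hy.2 o' ho'
    have h3 := dist_triangle y z o'
    have h4 := dist_triangle4 z (ℓ t) (ℓ 0) o'
    have h5 := dist_triangle c z o'
    unfold Btw at hz
    rw [dist_comm c y, dist_comm z y] at hz
    linarith
  have hfar : ∀ y c, IsNearest C y c → T + 2 * M < |prm ℓ y| → dist c o' ≤ r := by
    intro y c hy hlt
    have hcT := abs_le.1 (hT c hy.1)
    rcases lt_abs.1 hlt with h1 | h1
    · obtain ⟨z, hz, hd⟩ := hc c y (prm ℓ c + M) le_rfl (by linarith)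
      exact hpass y c z _ hy (abs_le.2 ⟨by linarith, by linarith⟩) hz hd
    · obtain ⟨z, hz, hd⟩ := hc y c (prm ℓ c - M) (by linarith) (by linarith)
      exact hpass y c z _ hy (abs_le.2 ⟨by linarith, by linarith⟩) hz.symm hd
  obtain ⟨n, hn⟩ := exists_nat_gt (2 * (T + 2 * M) / τ)
  rw [div_lt_iff₀ hτ] at hn
  refine ⟨h ^ n, Γ.pow_mem hh n, r, by positivity, fun x c c' hx hlt hx' => ?_⟩
  have h1 : |prm ℓ x| ≤ T + 2 * M := not_lt.1 fun h' => hlt.not_ge (hfar x c hx h')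
  refine hfar _ c' hx' ?_
  rw [prm_translate hℓ (pow_translate htr n)]
  exact lt_abs.2 (Or.inl (by linarith [(abs_le.1 h1).1]))

lemma IsNearest.unique (hconv : GeodConvex C) {x c c' : X} (h : IsNearest C x c)
    (h' : IsNearest C x c') : c = c' := by
  have hh : (1 / 2 : ℝ) ∈ Icc (0 : ℝ) 1 := ⟨by norm_num, by norm_num⟩
  have h1 := dist_sq_pt_le x c c' hh
  have h2 := pow_le_pow_left₀ dist_nonneg (h.2 _ (mem_of_btw hconv h.1 h'.1 (btw_pt c c' hh))) 2
  have h3 := pow_le_pow_left₀ dist_nonneg (h'.2 _ h.1) 2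
  have h4 : dist c c' ^ 2 ≤ 0 := by nlinarith
  exact dist_eq_zero.1 (pow_eq_zero_iff two_ne_zero |>.1 (le_antisymm h4 (sq_nonneg _)))

end CatZero

end RankOneGap

namespace RankOneGap

variable {X : Type*} [MetricSpace X]

/-! ### Orbit counting -/

lemma dist_mul_apply_le (g h : X ≃ᵢ X) (o : X) :
    dist ((g * h) o) o ≤ dist (g o) o + dist (h o) o := by
  have := dist_triangle (g (h o)) (g o) o
  rw [g.dist_eq] at this
  rw [IsometryEquiv.mul_apply]
  linarith

lemma dist_inv_apply (g : X ≃ᵢ X) (x y : X) : dist (g⁻¹ x) y = dist x (g y) := by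
  rw [← g.dist_eq, IsometryEquiv.apply_inv_self]

/-- Changing the base point changes displacements by a bounded amount. -/
lemma dist_apply_le_add (g : X ≃ᵢ X) (x y : X) :
    dist (g x) x ≤ dist (g y) y + 2 * dist x y := by
  have := dist_triangle4 (g x) (g y) y x
  rw [g.dist_eq, dist_comm y x] at this
  linarith

lemma orbitCount_eq_ncard (Γ : Subgroup (X ≃ᵢ X)) (o : X) (R : ℝ) :
    orbitCount Γ o R = {g : X ≃ᵢ X | g ∈ Γ ∧ dist (g o) o ≤ R}.ncard := by
  have h : {g : X ≃ᵢ X | g ∈ Γ ∧ dist (g o) o ≤ R} =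
      Subtype.val '' {g : Γ | dist ((g : X ≃ᵢ X) o) o ≤ R} := by
    ext g; simp [and_comm]
  rw [h, ncard_image_of_injective _ Subtype.val_injective]
  rfl

section Counting

variable {Γ Γ₀ : Subgroup (X ≃ᵢ X)} {o : X}

lemma isDiscreteSubgroup_mono (hdisc : IsDiscreteSubgroup Γ) (hle : Γ₀ ≤ Γ) :
    IsDiscreteSubgroup Γ₀ := fun x R =>
  ((finite_dist_le hdisc x x R).preimage Subtype.val_injective.injOn).subset
    fun g hg => ⟨hle g.2, hg⟩

lemma orbitCount_mono (hdisc : IsDiscreteSubgroup Γ) {R S : ℝ} (h : R ≤ S) :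
    orbitCount Γ o R ≤ orbitCount Γ o S := by
  rw [orbitCount_eq_ncard, orbitCount_eq_ncard]
  exact ncard_le_ncard (fun g hg => ⟨hg.1, hg.2.trans h⟩) (finite_dist_le hdisc o o S)

lemma orbitCount_le_of_le (hdisc : IsDiscreteSubgroup Γ) (hle : Γ₀ ≤ Γ) (R : ℝ) :
    orbitCount Γ₀ o R ≤ orbitCount Γ o R := by
  rw [orbitCount_eq_ncard, orbitCount_eq_ncard]
  exact ncard_le_ncard (fun g hg => ⟨hle hg.1, hg.2⟩) (finite_dist_le hdisc o o R)

lemma one_le_orbitCount (hdisc : IsDiscreteSubgroup Γ) {R : ℝ} (hR : 0 ≤ R) :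
    1 ≤ orbitCount Γ o R := by
  rw [orbitCount_eq_ncard, Nat.one_le_iff_ne_zero, ne_eq,
    ncard_eq_zero (finite_dist_le hdisc o o R)]
  exact Set.Nonempty.ne_empty ⟨1, Γ.one_mem, by simpa using hR⟩

lemma log_orbitCount_div_nonneg {R : ℝ} (hR : 0 ≤ R) :
    0 ≤ Real.log (orbitCount Γ o R) / R := div_nonneg (Real.log_natCast_nonneg _) hR

lemma isCoboundedUnder_log_orbitCount : Filter.IsCoboundedUnder (· ≤ ·) Filter.atTop
    fun R : ℝ => Real.log (orbitCount Γ o R) / R := by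
  refine Filter.IsBoundedUnder.isCoboundedUnder_le
    (Filter.isBoundedUnder_of_eventually_ge (a := 0) ?_)
  filter_upwards [Filter.eventually_ge_atTop 0] with R hR using log_orbitCount_div_nonneg hR

lemma isBoundedUnder_log_orbitCount (hfin : HasFiniteCritExp Γ o) :
    Filter.IsBoundedUnder (· ≤ ·) Filter.atTop
      fun R : ℝ => Real.log (orbitCount Γ o R) / R := by
  obtain ⟨a, ha⟩ := hfin
  refine Filter.isBoundedUnder_of_eventually_le (a := a) ?_
  filter_upwards [Filter.eventually_ge_atTop 1] with R hR using ha R hR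

lemma hasFiniteCritExp_mono (hdisc : IsDiscreteSubgroup Γ) (hle : Γ₀ ≤ Γ)
    (hfin : HasFiniteCritExp Γ o) : HasFiniteCritExp Γ₀ o := by
  obtain ⟨a, ha⟩ := hfin
  refine ⟨a, fun R hR => le_trans ?_ (ha R hR)⟩
  have h1 : (1 : ℝ) ≤ orbitCount Γ₀ o R := by
    exact_mod_cast one_le_orbitCount (isDiscreteSubgroup_mono hdisc hle) (zero_le_one.trans hR)
  have h2 : (orbitCount Γ₀ o R : ℝ) ≤ orbitCount Γ o R := by
    exact_mod_cast orbitCount_le_of_le hdisc hle R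
  have h3 := Real.log_le_log (by linarith) h2
  gcongr

lemma critExp_nonneg (hfin : HasFiniteCritExp Γ o) : 0 ≤ critExp Γ o := by
  refine Filter.le_limsup_of_frequently_le (Filter.Eventually.frequently ?_)
    (isBoundedUnder_log_orbitCount hfin)
  filter_upwards [Filter.eventually_ge_atTop 0] with R hR using log_orbitCount_div_nonneg hR

lemma exists_orbitCount_le_exp (hdisc : IsDiscreteSubgroup Γ) (hfin : HasFiniteCritExp Γ o) {s : ℝ}
    (hs : critExp Γ o < s) : ∃ Q : ℝ, ∀ R ≥ 0, (orbitCount Γ o R : ℝ) ≤ Q * Real.exp (s * R) := by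
  have hs0 : 0 ≤ s := (critExp_nonneg hfin).trans hs.le
  have h := Filter.eventually_lt_of_limsup_lt hs (isBoundedUnder_log_orbitCount hfin)
  obtain ⟨R₀, hR₀⟩ := Filter.eventually_atTop.1 (h.and (Filter.eventually_gt_atTop 0))
  have hR₀0 : 0 < R₀ := (hR₀ R₀ le_rfl).2
  have h1 : (1 : ℝ) ≤ orbitCount Γ o R₀ := by exact_mod_cast one_le_orbitCount hdisc hR₀0.le
  refine ⟨orbitCount Γ o R₀, fun R hR => ?_⟩
  have h2 : 1 ≤ Real.exp (s * R) := Real.one_le_exp (by positivity)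
  rcases le_total R R₀ with hle | hle
  · have h3 : (orbitCount Γ o R : ℝ) ≤ orbitCount Γ o R₀ := by
      exact_mod_cast orbitCount_mono hdisc hle
    nlinarith
  · obtain ⟨h3, h4⟩ := hR₀ R hle
    rw [div_lt_iff₀ h4, Real.log_lt_iff_lt_exp (by
      exact_mod_cast one_le_orbitCount hdisc hR)] at h3
    nlinarith

lemma critExp_le_of_orbitCount_le (hdisc : IsDiscreteSubgroup Γ) {s Q : ℝ}
    (h : ∀ R ≥ 0, (orbitCount Γ o R : ℝ) ≤ Q * Real.exp (s * R)) : critExp Γ o ≤ s := by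
  have hQ : 0 < Q := by
    have h1 := h 0 le_rfl
    have h2 : (1 : ℝ) ≤ orbitCount Γ o 0 := by exact_mod_cast one_le_orbitCount hdisc le_rfl
    simp only [mul_zero, Real.exp_zero, mul_one] at h1
    linarith
  have hlim : Filter.Tendsto (fun R : ℝ => Real.log Q / R + s) Filter.atTop (nhds s) := by
    simpa using (Filter.tendsto_id.const_div_atTop (Real.log Q)).add_const s
  rw [← hlim.limsup_eq]
  refine Filter.limsup_le_limsup ?_ isCoboundedUnder_log_orbitCount hlim.isBoundedUnder_le
  filter_upwards [Filter.eventually_gt_atTop 0] with R hR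
  have h1 : (1 : ℝ) ≤ orbitCount Γ o R := by exact_mod_cast one_le_orbitCount hdisc hR.le
  have h2 := Real.log_le_log (by linarith) (h R hR.le)
  rw [Real.log_mul hQ.ne' (Real.exp_pos _).ne', Real.log_exp] at h2
  rw [div_le_iff₀ hR, add_mul, div_mul_cancel₀ _ hR.ne']
  exact h2

/-- Passing to a finite index subgroup does not decrease the critical exponent. -/
lemma critExp_le_of_index_ne_zero (hdisc : IsDiscreteSubgroup Γ) (hle : Γ₀ ≤ Γ)
    (hfin : HasFiniteCritExp Γ o) (h : (Γ₀.subgroupOf Γ).index ≠ 0) :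
    critExp Γ o ≤ critExp Γ₀ o := by
  obtain ⟨F, hF, -, hcov⟩ := exists_finite_cover_of_index_ne_zero h
  obtain ⟨D, hD⟩ : ∃ D, ∀ φ ∈ F, dist (φ⁻¹ o) o ≤ D := by
    obtain ⟨D, hD⟩ := (hF.image fun φ : X ≃ᵢ X => dist (φ⁻¹ o) o).bddAbove
    exact ⟨D, fun φ hφ => hD ⟨φ, hφ, rfl⟩⟩
  refine le_of_forall_gt_imp_ge_of_dense fun s hs => ?_
  obtain ⟨Q, hQ⟩ := exists_orbitCount_le_exp (isDiscreteSubgroup_mono hdisc hle)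
    (hasFiniteCritExp_mono hdisc hle hfin) hs
  refine critExp_le_of_orbitCount_le hdisc (Q := F.ncard * (Q * Real.exp (s * |D|)))
    fun R hR => ?_
  have h1 : orbitCount Γ o R ≤ orbitCount Γ₀ o (R + |D|) * F.ncard := by
    rw [orbitCount_eq_ncard, orbitCount_eq_ncard, ← ncard_prod]
    choose! c hcF hc using hcov
    refine ncard_le_ncard_of_injOn (fun g => (g * (c g)⁻¹, c g)) ?_ ?_
      ((finite_dist_le (isDiscreteSubgroup_mono hdisc hle) o o _).prod hF)
    · rintro g ⟨hg, hd⟩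
      refine ⟨⟨hc g hg, (dist_mul_apply_le _ _ _).trans ?_⟩, hcF g hg⟩
      exact add_le_add hd ((hD _ (hcF g hg)).trans (le_abs_self D))
    · intro g _ g' _ he
      simp only [Prod.mk.injEq] at he
      rw [he.2] at he
      exact mul_right_cancel he.1
  have h2 := hQ (R + |D|) (by positivity)
  calc (orbitCount Γ o R : ℝ) ≤ orbitCount Γ₀ o (R + |D|) * F.ncard := by exact_mod_cast h1
    _ ≤ Q * Real.exp (s * (R + |D|)) * F.ncard := by gcongr
    _ = _ := by rw [mul_add, Real.exp_add]; ring

end Counting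

end RankOneGap

namespace RankOneGap

variable {X : Type*} [MetricSpace X]

section Divergence

variable [CAT0 X] {Γ₀ : Subgroup (X ≃ᵢ X)} {o o' : X} {C : Set X} {D : ℝ}

/-- The orbit counting function of a convex cocompact group is almost submultiplicative. -/
lemma exists_orbitCount_add_le (hdisc : IsDiscreteSubgroup Γ₀) (o : X) (hconv : GeodConvex C)
    (hinv : ∀ g ∈ Γ₀, (g : X ≃ᵢ X) '' C = C) (ho' : o' ∈ C)
    (hcocpt : ∀ x ∈ C, ∃ g ∈ Γ₀, dist x ((g : X ≃ᵢ X) o') ≤ D) :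
    ∃ κ ≥ 0, ∀ R ≥ 0, ∀ S ≥ 0,
      orbitCount Γ₀ o (R + S) ≤ orbitCount Γ₀ o (R + κ) * orbitCount Γ₀ o (S + κ) := by
  have hD : 0 ≤ D := by
    obtain ⟨g, -, hg⟩ := hcocpt o' ho'
    exact dist_nonneg.trans hg
  refine ⟨D + 4 * dist o o', by positivity, fun R hR S hS => ?_⟩
  have hsplit : ∀ γ : X ≃ᵢ X, γ ∈ Γ₀ ∧ dist (γ o) o ≤ R + S → ∃ β ∈ Γ₀,
      dist (β o) o ≤ R + (D + 4 * dist o o') ∧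
      dist ((β⁻¹ * γ) o) o ≤ S + (D + 4 * dist o o') := by
    rintro γ ⟨hγ, hd⟩
    have h1 := dist_apply_le_add γ o' o
    rw [dist_comm o' o] at h1
    have hγo : γ o' ∈ C := hinv γ hγ ▸ mem_image_of_mem _ ho'
    obtain ⟨z, hz, hz1, hz2⟩ : ∃ z, Btw o' z (γ o') ∧ dist o' z ≤ R ∧
        dist z (γ o') ≤ S + 2 * dist o o' := by
      rcases le_total (dist o' (γ o')) R with h | h
      · exact ⟨γ o', by simp [Btw], h, by rw [dist_self]; positivity⟩
      · rcases (dist_nonneg (x := o') (y := γ o')).eq_or_lt with h0 | h0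
        · exact ⟨γ o', by simp [Btw], by linarith, by rw [dist_self]; positivity⟩
        have hl : R / dist o' (γ o') ∈ Icc (0 : ℝ) 1 := ⟨by positivity, (div_le_one h0).2 h⟩
        have h2 := dist_left_pt o' (γ o') hl
        rw [div_mul_cancel₀ _ h0.ne'] at h2
        have h3 := btw_pt o' (γ o') hl
        refine ⟨_, h3, h2.le, ?_⟩
        unfold Btw at h3
        linarith [dist_comm o' (γ o')]
    obtain ⟨β, hβ, hβz⟩ := hcocpt z (mem_of_btw hconv ho' hγo hz)
    refine ⟨β, hβ, ?_, ?_⟩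
    · have h2 := dist_apply_le_add β o o'
      have h3 := dist_triangle_left (β o') o' z
      rw [dist_comm z o'] at h3
      linarith [dist_nonneg (x := o) (y := o')]
    · have h2 := dist_apply_le_add (β⁻¹ * γ) o o'
      have h3 := dist_triangle_left (γ o') (β o') z
      rw [IsometryEquiv.mul_apply β⁻¹ γ o', dist_inv_apply] at h2
      linarith [dist_nonneg (x := o) (y := o')]
  choose! b hb hb1 hb2 using hsplit
  rw [orbitCount_eq_ncard, orbitCount_eq_ncard, orbitCount_eq_ncard, ← ncard_prod]
  refine ncard_le_ncard_of_injOn (fun g => (b g, (b g)⁻¹ * g)) ?_ ?_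
    ((finite_dist_le hdisc o o _).prod (finite_dist_le hdisc o o _))
  · exact fun g hg => ⟨⟨hb g hg, hb1 g hg⟩,
      Γ₀.mul_mem (Γ₀.inv_mem (hb g hg)) hg.1, hb2 g hg⟩
  · intro g _ g' _ he
    simp only [Prod.mk.injEq] at he
    rw [he.1] at he
    exact mul_left_cancel he.2

end Divergence

variable {Γ Γ₀ : Subgroup (X ≃ᵢ X)} {o o' : X}

/-- Submultiplicativity gives a purely exponential lower bound on orbit counts. -/
lemma exp_le_orbitCount (hdisc : IsDiscreteSubgroup Γ₀) {κ : ℝ} (hκ : 0 ≤ κ)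
    (hsub : ∀ R ≥ 0, ∀ S ≥ 0,
      orbitCount Γ₀ o (R + S) ≤ orbitCount Γ₀ o (R + κ) * orbitCount Γ₀ o (S + κ))
    {n : ℕ} (hn : 0 < n) :
    Real.exp (critExp Γ₀ o * n) ≤ orbitCount Γ₀ o (n + 2 * κ) := by
  have hn' : (0 : ℝ) < n := Nat.cast_pos.2 hn
  have hone : ∀ R : ℝ, 0 ≤ R → (1 : ℝ) ≤ orbitCount Γ₀ o R := fun R hR => by
    exact_mod_cast one_le_orbitCount hdisc hR
  set N : ℝ := ((orbitCount Γ₀ o (n + 2 * κ) : ℕ) : ℝ) with hN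
  have hN1 : 1 ≤ N := hone _ (by positivity)
  have hpow : ∀ k : ℕ, (orbitCount Γ₀ o ((k + 1) * n + 2 * κ) : ℝ) ≤ N ^ (k + 1) := by
    intro k
    induction k with
    | zero => simp [hN]
    | succ k ih =>
      have h := hsub ((k + 1) * n + κ) (by positivity) (n + κ) (by positivity)
      have h' : (orbitCount Γ₀ o ((k + 1) * n + κ + (n + κ)) : ℝ) ≤
        orbitCount Γ₀ o ((k + 1) * n + κ + κ) * orbitCount Γ₀ o (n + κ + κ) := by exact_mod_cast h
      rw [add_assoc _ κ κ, add_assoc _ κ κ, ← two_mul] at h'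
      rw [show ((k + 1 : ℕ) + 1 : ℝ) * n + 2 * κ = (k + 1) * n + κ + (n + κ) by push_cast; ring,
        pow_succ N (k + 1)]
      exact h'.trans (by gcongr)
  have hs : critExp Γ₀ o ≤ Real.log N / n := by
    refine critExp_le_of_orbitCount_le hdisc (Q := N) fun R hR => ?_
    have h1 : R ≤ (⌊R / n⌋₊ + 1) * n + 2 * κ := by
      have := Nat.lt_floor_add_one (R / n)
      rw [div_lt_iff₀ hn'] at this
      linarith
    have h2 : (⌊R / n⌋₊ : ℝ) ≤ R / n := Nat.floor_le (by positivity)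
    calc (orbitCount Γ₀ o R : ℝ) ≤ orbitCount Γ₀ o ((⌊R / n⌋₊ + 1) * n + 2 * κ) := by
          exact_mod_cast orbitCount_mono hdisc h1
      _ ≤ N ^ (⌊R / n⌋₊ + 1) := hpow _
      _ = N * Real.exp (Real.log N * ⌊R / n⌋₊) := by
          rw [pow_succ', mul_comm (Real.log N), Real.exp_nat_mul, Real.exp_log (by linarith)]
      _ ≤ N * Real.exp (Real.log N / n * R) := by
          rw [show Real.log N / n * R = Real.log N * (R / n) by ring]
          have := Real.log_nonneg hN1
          gcongr
  rw [le_div_iff₀ hn'] at hs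
  rwa [← Real.le_log_iff_exp_le (by linarith)]

/-- The Poincaré series diverges at the critical exponent. -/
lemma not_summable_exp (hdisc : IsDiscreteSubgroup Γ₀) (hfin : HasFiniteCritExp Γ₀ o)
    [Infinite Γ₀] {κ : ℝ}
    (hlow : ∀ n : ℕ, 0 < n → Real.exp (critExp Γ₀ o * n) ≤ orbitCount Γ₀ o (n + 2 * κ)) :
    ¬ Summable fun γ : Γ₀ => Real.exp (-(critExp Γ₀ o * dist ((γ : X ≃ᵢ X) o) o)) := by
  intro hsum
  set δ := critExp Γ₀ o with hδ
  rcases (critExp_nonneg hfin).eq_or_lt with h0 | hpos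
  · rw [← hδ] at h0
    simp only [← h0, zero_mul, neg_zero, Real.exp_zero] at hsum
    exact one_ne_zero ((summable_const_iff (1 : ℝ)).1 hsum)
  rw [← hδ] at hpos
  obtain ⟨T, hT⟩ := summable_iff_vanishing_norm.1 hsum (Real.exp (-(δ * (2 * κ))) / 2)
    (by positivity)
  have hbound : ∀ n : ℕ, 0 < n → Real.exp (δ * n) ≤ 2 * T.card := by
    intro n hn
    classical
    set B := (hdisc o (n + 2 * κ)).toFinset with hB
    have hcard : orbitCount Γ₀ o (n + 2 * κ) = B.card := by
      rw [hB, ← ncard_eq_toFinset_card _ (hdisc o (n + 2 * κ))]; rfl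
    have h1 := hT (B \ T) Finset.sdiff_disjoint
    have h2 : (B \ T).card • Real.exp (-(δ * (n + 2 * κ))) ≤
        ∑ γ ∈ B \ T, Real.exp (-(δ * dist ((γ : X ≃ᵢ X) o) o)) := by
      refine Finset.card_nsmul_le_sum _ _ _ fun γ hγ => ?_
      have : dist ((γ : X ≃ᵢ X) o) o ≤ n + 2 * κ :=
        (Finite.mem_toFinset (hdisc o (n + 2 * κ))).1 (Finset.mem_sdiff.1 hγ).1
      gcongr
    have h3 : (B.card : ℝ) ≤ (B \ T).card + T.card := by
      exact_mod_cast Finset.card_le_card_sdiff_add_card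
    rw [Real.norm_eq_abs] at h1
    have h4 := h2.trans ((le_abs_self _).trans h1.le)
    rw [nsmul_eq_mul, show -(δ * (n + 2 * κ)) = -(δ * n) + -(δ * (2 * κ)) by ring, Real.exp_add,
      Real.exp_neg (δ * n)] at h4
    have h5 := hlow n hn
    rw [hcard] at h5
    have h6 : ((B \ T).card : ℝ) ≤ Real.exp (δ * n) / 2 := by
      have e1 := Real.exp_pos (-(δ * (2 * κ)))
      have e2 := Real.exp_pos (δ * n)
      rw [← mul_assoc, ← div_eq_mul_inv, le_div_iff₀ two_pos, mul_right_comm,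
        mul_le_iff_le_one_left e1, div_mul_eq_mul_div, div_le_one e2] at h4
      linarith
    linarith
  obtain ⟨n, hn⟩ := exists_nat_gt (2 * T.card / δ)
  rw [div_lt_iff₀ hpos] at hn
  have hn0 : 0 < n := Nat.pos_of_ne_zero fun h => by
    rw [h, Nat.cast_zero, zero_mul] at hn
    exact absurd hn (not_lt.2 (by positivity))
  have := hbound n hn0
  have := Real.add_one_le_exp (δ * n)
  linarith

/-- A separated subset of the orbit carries an arbitrarily large part of the Poincaré series. -/
lemma exists_separated (hdisc : IsDiscreteSubgroup Γ₀) {δ : ℝ} (hδ : 0 ≤ δ)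
    (hdiv : ¬ Summable fun γ : Γ₀ => Real.exp (-(δ * dist ((γ : X ≃ᵢ X) o) o)))
    (o' : X) {ρ : ℝ} (hρ : 0 ≤ ρ) (Q : ℝ) :
    ∃ T : Finset (X ≃ᵢ X), (∀ γ ∈ T, γ ∈ Γ₀ ∧ ρ < dist (γ o') o') ∧
      (∀ γ ∈ T, ∀ γ' ∈ T, dist (γ o') (γ' o') ≤ ρ → γ = γ') ∧
      Q < ∑ γ ∈ T, Real.exp (-(δ * dist (γ o) o)) := by
  classical
  let sep : Set (X ≃ᵢ X) → Prop := fun S =>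
    S ⊆ Γ₀ ∧ ∀ γ ∈ S, ∀ γ' ∈ S, dist (γ o') (γ' o') ≤ ρ → γ = γ'
  obtain ⟨S, hS1, hS⟩ := zorn_subset_nonempty {S | sep S} (by
    refine fun c hc hch _ => ⟨⋃₀ c, ⟨sUnion_subset fun s hs => (hc hs).1, ?_⟩,
      fun s => subset_sUnion_of_mem⟩
    rintro γ ⟨s, hs, hγ⟩ γ' ⟨s', hs', hγ'⟩
    rcases hch.total hs hs' with h | h
    · exact (hc hs').2 γ (h hγ) γ' hγ'
    · exact (hc hs).2 γ hγ γ' (h hγ')) {1} (by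
    refine ⟨by simp, ?_⟩
    rintro _ rfl _ rfl _; rfl)
  have hsepS : sep S := hS.prop
  have h1S : (1 : X ≃ᵢ X) ∈ S := hS1 rfl
  have hnear : ∀ γ : Γ₀, ∃ σ : S, dist ((γ : X ≃ᵢ X) o') ((σ : X ≃ᵢ X) o') ≤ ρ := by
    intro γ
    by_contra! hfar
    have hmem : (γ : X ≃ᵢ X) ∈ S := by
      have hs : sep (insert (γ : X ≃ᵢ X) S) := by
        refine ⟨insert_subset γ.2 hsepS.1, ?_⟩
        rintro a (rfl | ha) b (rfl | hb) hab
        · rfl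
        · exact absurd hab (hfar ⟨b, hb⟩).not_ge
        · exact absurd (dist_comm (a o') _ ▸ hab) (hfar ⟨a, ha⟩).not_ge
        · exact hsepS.2 a ha b hb hab
      exact hS.le_of_ge hs (subset_insert _ _) (mem_insert _ _)
    have := hfar ⟨γ, hmem⟩
    rw [dist_self] at this
    linarith
  have hF := finite_dist_le hdisc o' o' ρ
  set F := {g : X ≃ᵢ X | g ∈ Γ₀ ∧ dist (g o') o' ≤ ρ}
  have hdivS : ¬ Summable fun σ : S => Real.exp (-(δ * dist ((σ : X ≃ᵢ X) o) o)) := by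
    intro hsum
    choose p hp using hnear
    have hpF : ∀ γ : Γ₀, (p γ : X ≃ᵢ X)⁻¹ * γ ∈ F := fun γ =>
      ⟨Γ₀.mul_mem (Γ₀.inv_mem (hsepS.1 (p γ).2)) γ.2, by
        rw [IsometryEquiv.mul_apply, dist_inv_apply]; exact hp γ⟩
    have : Fintype F := hF.fintype
    have hinj : Function.Injective fun γ : Γ₀ => ((⟨_, hpF γ⟩, p γ) : F × S) := by
      intro γ γ' he
      simp only [Prod.mk.injEq, Subtype.mk.injEq] at he
      rw [he.2] at he
      exact Subtype.ext (mul_left_cancel he.1)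
    have hprod : Summable fun q : F × S => Real.exp (δ * (ρ + 2 * dist o o')) *
        Real.exp (-(δ * dist ((q.2 : X ≃ᵢ X) o) o)) := by
      have := (Summable.of_finite (f := fun _ : F => (1 : ℝ))).mul_of_nonneg
        (hsum.mul_left (Real.exp (δ * (ρ + 2 * dist o o')))) (fun _ => zero_le_one)
        (fun _ => by positivity)
      simpa using this
    refine hdiv (Summable.of_nonneg_of_le (fun _ => (Real.exp_pos _).le) (fun γ => ?_)
      (hprod.comp_injective hinj))
    simp only [Function.comp_apply]
    rw [← Real.exp_add]
    have h1 := dist_triangle4 ((p γ : X ≃ᵢ X) o) ((p γ : X ≃ᵢ X) o') ((γ : X ≃ᵢ X) o')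
      ((γ : X ≃ᵢ X) o)
    have h2 := dist_triangle ((p γ : X ≃ᵢ X) o) ((γ : X ≃ᵢ X) o) o
    rw [IsometryEquiv.dist_eq, IsometryEquiv.dist_eq, dist_comm o' o,
      dist_comm _ ((γ : X ≃ᵢ X) o')] at h1
    have h3 := hp γ
    have h4 : dist ((p γ : X ≃ᵢ X) o) o ≤ ρ + 2 * dist o o' + dist ((γ : X ≃ᵢ X) o) o := by
      linarith
    have h5 := mul_le_mul_of_nonneg_left h4 hδ
    gcongr
    linarith
  obtain ⟨T, hT⟩ : ∃ T : Finset S, Q + 1 <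
      ∑ σ ∈ T, Real.exp (-(δ * dist ((σ : X ≃ᵢ X) o) o)) := by
    by_contra! h
    exact hdivS (summable_of_sum_le (fun _ => (Real.exp_pos _).le) h)
  refine ⟨(T.map (Function.Embedding.subtype _)).erase 1, fun γ hγ => ?_, ?_, ?_⟩
  · obtain ⟨h1, h2⟩ := Finset.mem_erase.1 hγ
    obtain ⟨σ, -, rfl⟩ := Finset.mem_map.1 h2
    refine ⟨hsepS.1 σ.2, not_le.1 fun h => h1 (hsepS.2 _ σ.2 1 h1S h)⟩
  · intro γ hγ γ' hγ'
    obtain ⟨σ, -, rfl⟩ := Finset.mem_map.1 (Finset.mem_of_mem_erase hγ)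
    obtain ⟨σ', -, rfl⟩ := Finset.mem_map.1 (Finset.mem_of_mem_erase hγ')
    exact hsepS.2 _ σ.2 _ σ'.2
  · have h1 : ∑ σ ∈ T, Real.exp (-(δ * dist ((σ : X ≃ᵢ X) o) o)) =
        ∑ γ ∈ T.map (Function.Embedding.subtype _), Real.exp (-(δ * dist (γ o) o)) := by
      rw [Finset.sum_map]; rfl
    rw [h1] at hT
    have h2 := Finset.sum_le_sum_of_subset_of_nonneg
      (Finset.subset_insert_iff.2 (Finset.Subset.refl
        ((T.map (Function.Embedding.subtype _)).erase (1 : X ≃ᵢ X))))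
      (f := fun γ => Real.exp (-(δ * dist (γ o) o))) fun _ _ _ => (Real.exp_pos _).le
    rw [Finset.sum_insert (Finset.notMem_erase _ _)] at h2
    have h3 : Real.exp (-(δ * dist ((1 : X ≃ᵢ X) o) o)) = 1 := by simp
    linarith

end RankOneGap

namespace RankOneGap

variable {X : Type*} [MetricSpace X] {Γ Γ₀ : Subgroup (X ≃ᵢ X)} {o o' : X} {C : Set X}

/-- Products `γ f w` along a ping-pong configuration are free, so the Poincaré sums over words of
length `k` grow like the `k`-th power of the sum over letters. -/
lemma exists_words [CAT0 X] [ProperSpace X] (hle : Γ₀ ≤ Γ) (hclosed : IsClosed C)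
    (hconv : GeodConvex C) (hinv : ∀ g ∈ Γ₀, (g : X ≃ᵢ X) '' C = C) (ho' : o' ∈ C)
    {f : X ≃ᵢ X} (hf : f ∈ Γ) {r : ℝ} (hr : 0 ≤ r)
    (hpp : ∀ x c c', IsNearest C x c → r < dist c o' → IsNearest C (f x) c' → dist c' o' ≤ r)
    {T : Finset (X ≃ᵢ X)} (hT : ∀ γ ∈ T, γ ∈ Γ₀ ∧ 2 * r < dist (γ o') o')
    (hsep : ∀ γ ∈ T, ∀ γ' ∈ T, dist (γ o') (γ' o') ≤ 2 * r → γ = γ')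
    {s : ℝ} (hs : 0 ≤ s) {L : ℝ} (hL : ∀ γ ∈ T, dist (γ o) o + dist (f o) o ≤ L)
    (hne : T.Nonempty) (k : ℕ) :
    ∃ W : Finset (X ≃ᵢ X), (∀ w ∈ W, w ∈ Γ ∧ dist (w o) o ≤ k * L) ∧
      (∑ γ ∈ T, Real.exp (-(s * (dist (γ o) o + dist (f o) o)))) ^ k ≤
        ∑ w ∈ W, Real.exp (-(s * dist (w o) o)) := by
  classical
  obtain ⟨γ₀, hγ₀⟩ := hne
  set x₀ := γ₀ o' with hx₀
  have hx₀C : x₀ ∈ C := hinv γ₀ (hT γ₀ hγ₀).1 ▸ mem_image_of_mem _ ho'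
  suffices h : ∃ W : Finset (X ≃ᵢ X), (∀ w ∈ W, (w ∈ Γ ∧ dist (w o) o ≤ k * L) ∧
      ∃ c, IsNearest C (w x₀) c ∧ r < dist c o') ∧
      (∑ γ ∈ T, Real.exp (-(s * (dist (γ o) o + dist (f o) o)))) ^ k ≤
        ∑ w ∈ W, Real.exp (-(s * dist (w o) o)) by
    obtain ⟨W, hW, hsum⟩ := h
    exact ⟨W, fun w hw => (hW w hw).1, hsum⟩
  induction k with
  | zero =>
    refine ⟨{1}, fun w hw => ?_, by simp⟩
    rw [Finset.mem_singleton] at hw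
    subst hw
    refine ⟨⟨Γ.one_mem, by simp⟩, x₀, ⟨hx₀C, fun c' _ => ?_⟩, ?_⟩
    · simp
    · linarith [(hT γ₀ hγ₀).2]
  | succ k ih =>
    obtain ⟨W, hW, hsum⟩ := ih
    have hnear : ∀ w ∈ W, ∃ c, IsNearest C (f (w x₀)) c ∧ dist c o' ≤ r := by
      intro w hw
      obtain ⟨-, c, hc, hcr⟩ := hW w hw
      obtain ⟨c', hc'⟩ := exists_isNearest hclosed ⟨o', ho'⟩ (f (w x₀))
      exact ⟨c', hc', hpp _ _ _ hc hcr hc'⟩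
    have hinj : InjOn (fun p : (X ≃ᵢ X) × (X ≃ᵢ X) => p.1 * f * p.2) (T ×ˢ W : Finset _) := by
      rintro ⟨γ, w⟩ hp ⟨γ', w'⟩ hp' he
      simp only [Finset.coe_product, mem_prod, Finset.mem_coe] at hp hp' he
      obtain ⟨c, hc, hcr⟩ := hnear w hp.2
      obtain ⟨c', hc', hcr'⟩ := hnear w' hp'.2
      have e : γ (f (w x₀)) = γ' (f (w' x₀)) := DFunLike.congr_fun he x₀
      have h1 := hc.map hinv (hT γ hp.1).1
      rw [e] at h1
      have h2 := h1.unique hconv (hc'.map hinv (hT γ' hp'.1).1)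
      have h3 := dist_triangle_left (γ o') (γ' o') (γ c)
      rw [γ.dist_eq, h2, γ'.dist_eq] at h3
      obtain rfl := hsep γ hp.1 γ' hp'.1 (by linarith)
      rw [mul_assoc, mul_assoc] at he
      rw [mul_left_cancel (mul_left_cancel he)]
    refine ⟨(T ×ˢ W).image fun p => p.1 * f * p.2, fun v hv => ?_, ?_⟩
    · obtain ⟨⟨γ, w⟩, hp, rfl⟩ := Finset.mem_image.1 hv
      rw [Finset.mem_product] at hp
      obtain ⟨⟨hwΓ, hwd⟩, -⟩ := hW w hp.2
      refine ⟨⟨Γ.mul_mem (Γ.mul_mem (hle (hT γ hp.1).1) hf) hwΓ, ?_⟩, ?_⟩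
      · have h1 := dist_mul_apply_le (γ * f) w o
        have h2 := dist_mul_apply_le γ f o
        have h3 := hL γ hp.1
        push_cast
        linarith
      · obtain ⟨c, hc, hcr⟩ := hnear w hp.2
        refine ⟨γ c, hc.map hinv (hT γ hp.1).1, ?_⟩
        have h1 := dist_triangle_left (γ o') o' (γ c)
        rw [γ.dist_eq] at h1
        linarith [(hT γ hp.1).2]
    · rw [Finset.sum_image hinj, Finset.sum_product, pow_succ', Finset.sum_mul]
      refine Finset.sum_le_sum fun γ _ => ?_
      refine (mul_le_mul_of_nonneg_left hsum (Real.exp_pos _).le).trans ?_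
      rw [Finset.mul_sum]
      refine Finset.sum_le_sum fun w _ => ?_
      rw [← Real.exp_add]
      have h1 := dist_mul_apply_le (γ * f) w o
      have h2 := dist_mul_apply_le γ f o
      have h3 : s * dist ((γ * f * w) o) o ≤
        s * (dist (γ o) o + dist (f o) o + dist (w o) o) := by gcongr; linarith
      gcongr
      linarith

/-- An exponential bound on orbit counts bounds Poincaré sums over balls polynomially. -/
lemma sum_exp_le (hdisc : IsDiscreteSubgroup Γ) {s Q : ℝ}
    (hs : 0 ≤ s) (hQ : ∀ R ≥ 0, (orbitCount Γ o R : ℝ) ≤ Q * Real.exp (s * R)) (n : ℕ)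
    (W : Finset (X ≃ᵢ X)) (hW : ∀ w ∈ W, w ∈ Γ ∧ dist (w o) o < n) :
    ∑ w ∈ W, Real.exp (-(s * dist (w o) o)) ≤ n * (Q * Real.exp s) := by
  classical
  rw [← Finset.sum_fiberwise_of_maps_to (t := Finset.range n)
    (g := fun w : X ≃ᵢ X => ⌊dist (w o) o⌋₊) fun w hw =>
      Finset.mem_range.2 ((Nat.floor_lt dist_nonneg).2 (hW w hw).2)]
  refine (Finset.sum_le_card_nsmul (Finset.range n) _ (Q * Real.exp s) fun j _ => ?_).trans_eq
    (by simp)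
  refine (Finset.sum_le_card_nsmul _ _ (Real.exp (-(s * j))) fun w hw => ?_).trans ?_
  · obtain ⟨-, rfl⟩ := Finset.mem_filter.1 hw
    have := Nat.floor_le (dist_nonneg (x := w o) (y := o))
    gcongr
  · have h1 : (W.filter fun w => ⌊dist (w o) o⌋₊ = j).card ≤ orbitCount Γ o (j + 1) := by
      rw [orbitCount_eq_ncard, ← ncard_coe_finset]
      refine ncard_le_ncard (fun w hw => ?_) (finite_dist_le hdisc o o _)
      obtain ⟨hwW, rfl⟩ := Finset.mem_filter.1 hw
      exact ⟨(hW w hwW).1, (Nat.lt_floor_add_one _).le⟩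
    have h2 : ((W.filter fun w => ⌊dist (w o) o⌋₊ = j).card : ℝ) ≤
        Q * Real.exp (s * (j + 1)) := le_trans (by exact_mod_cast h1) (hQ (j + 1) (by positivity))
    rw [nsmul_eq_mul]
    refine (mul_le_mul_of_nonneg_right h2 (Real.exp_pos _).le).trans_eq ?_
    rw [mul_assoc, ← Real.exp_add]
    ring_nf

/-- An infinite convex cocompact subgroup of infinite index has strictly smaller exponent. -/
lemma critExp_lt_of_infinite [CAT0 X] [ProperSpace X] (hle : Γ₀ ≤ Γ)
    (hdisc : IsDiscreteSubgroup Γ) (hrk : RankOne Γ) (hfin : HasFiniteCritExp Γ o)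
    (hclosed : IsClosed C) (hconv : GeodConvex C)
    (hinv : ∀ g ∈ Γ₀, (g : X ≃ᵢ X) '' C = C) (ho' : o' ∈ C) {R : ℝ}
    (hcocpt : ∀ x ∈ C, ∃ g ∈ Γ₀, dist x ((g : X ≃ᵢ X) o') ≤ R)
    (hindex : (Γ₀.subgroupOf Γ).index = 0) [Infinite Γ₀] : critExp Γ₀ o < critExp Γ o := by
  have hdisc₀ := isDiscreteSubgroup_mono hdisc hle
  have hfin₀ := hasFiniteCritExp_mono hdisc hle hfin
  have hδ := critExp_nonneg hfin₀
  obtain ⟨κ, hκ, hsub⟩ := exists_orbitCount_add_le hdisc₀ o hconv hinv ho' hcocpt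
  have hdiv := not_summable_exp hdisc₀ hfin₀ fun n hn => exp_le_orbitCount hdisc₀ hκ hsub hn
  obtain ⟨h, hh, ℓ, hℓ, hflat, τ, hτ, htr⟩ := hrk
  obtain ⟨M, hM, hc⟩ := exists_contr hℓ hflat hτ htr
  obtain ⟨g, hg, B, hB⟩ := exists_bounded_projection hle hdisc hconv hinv ho' hcocpt hℓ hh hτ htr
    hc hindex
  obtain ⟨f, hf, r, hr, hpp⟩ := exists_pingpong (isGeodLine_comp hℓ g)
    (Γ.mul_mem (Γ.mul_mem hg hh) (Γ.inv_mem hg)) hτ (fun t => by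
      simp [IsometryEquiv.mul_apply, htr]) hM (hc.comp hℓ g) ho' hB
  obtain ⟨T, hT, hsep, hsum⟩ := exists_separated hdisc₀ hδ hdiv o'
    (mul_nonneg zero_le_two hr) (Real.exp (critExp Γ₀ o * dist (f o) o))
  have hq : 1 < ∑ γ ∈ T, Real.exp (-(critExp Γ₀ o * (dist (γ o) o + dist (f o) o))) := by
    simp only [mul_add, neg_add, Real.exp_add, ← Finset.sum_mul]
    rwa [Real.exp_neg (critExp Γ₀ o * dist (f o) o), ← div_eq_mul_inv, one_lt_div (Real.exp_pos _)]
  obtain ⟨s, hs, hqs⟩ : ∃ s > critExp Γ₀ o,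
      1 < ∑ γ ∈ T, Real.exp (-(s * (dist (γ o) o + dist (f o) o))) := by
    have hcont : Continuous fun s : ℝ =>
        ∑ γ ∈ T, Real.exp (-(s * (dist (γ o) o + dist (f o) o))) := by fun_prop
    have h1 := (hcont.tendsto (critExp Γ₀ o)).eventually (lt_mem_nhds hq)
    obtain ⟨s, hs1, hs2⟩ := ((h1.filter_mono nhdsWithin_le_nhds).and
      (self_mem_nhdsWithin (s := Ioi (critExp Γ₀ o)))).exists
    exact ⟨s, hs2, hs1⟩
  have hs0 : 0 ≤ s := hδ.trans hs.le
  have hTne : T.Nonempty := Finset.nonempty_iff_ne_empty.2 fun h => by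
    rw [h, Finset.sum_empty] at hqs; linarith
  obtain ⟨L, hL⟩ : ∃ L : ℕ, ∀ γ ∈ T, dist (γ o) o + dist (f o) o ≤ L := by
    obtain ⟨L, hL⟩ := exists_nat_ge (∑ γ ∈ T, (dist (γ o) o + dist (f o) o))
    exact ⟨L, fun γ hγ => (Finset.single_le_sum (f := fun γ : X ≃ᵢ X => dist (γ o) o + dist (f o) o)
      (fun _ _ => by positivity) hγ).trans hL⟩
  by_contra! hle'
  obtain ⟨Q, hQ⟩ := exists_orbitCount_le_exp hdisc hfin (hle'.trans_lt hs)
  set q := ∑ γ ∈ T, Real.exp (-(s * (dist (γ o) o + dist (f o) o)))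
  have hbound : ∀ k : ℕ, q ^ k ≤ (k * L + 1) * (Q * Real.exp s) := by
    intro k
    obtain ⟨W, hW, hqk⟩ := exists_words hle hclosed hconv hinv ho' hf hr hpp hT hsep hs0 hL hTne k
    refine hqk.trans ((sum_exp_le hdisc hs0 hQ (k * L + 1) W fun w hw => ⟨(hW w hw).1, ?_⟩).trans_eq
      (by push_cast; rfl))
    push_cast
    linarith [(hW w hw).2]
  have hlim : Filter.Tendsto (fun k : ℕ => ((k * L + 1) * (Q * Real.exp s)) / q ^ k) Filter.atTop
      (nhds 0) := by
    have h1 := tendsto_pow_const_div_const_pow_of_one_lt 1 hqs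
    have h2 := tendsto_pow_const_div_const_pow_of_one_lt 0 hqs
    have h3 := ((h1.mul_const (L : ℝ)).add h2).mul_const (Q * Real.exp s)
    simp only [zero_mul, add_zero] at h3
    refine h3.congr fun k => ?_
    ring
  obtain ⟨k, hk⟩ := (hlim.eventually (gt_mem_nhds one_pos)).exists
  rw [div_lt_one (by positivity)] at hk
  exact absurd hk (hbound k).not_gt

end RankOneGap

namespace RankOneGap

variable {X : Type*} [MetricSpace X] {Γ Γ₀ : Subgroup (X ≃ᵢ X)} {o : X}

lemma critExp_nonpos_of_finite (hdisc : IsDiscreteSubgroup Γ₀) [Finite Γ₀] : critExp Γ₀ o ≤ 0 := by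
  refine critExp_le_of_orbitCount_le hdisc (Q := Nat.card Γ₀) fun R _ => ?_
  rw [zero_mul, Real.exp_zero, mul_one, Nat.cast_le]
  exact Finite.card_subtype_le _

lemma isClosed_range_line {ℓ : ℝ → X} (hℓ : IsGeodLine ℓ) : IsClosed (range ℓ) :=
  (Isometry.of_dist_eq fun s t => hℓ s t).isClosedEmbedding.isClosed_range

lemma asympRay_of_asympRay_right {r₁ r₂ ℓ : ℝ → X} (h₁ : AsympRay r₁ ℓ) (h₂ : AsympRay r₂ ℓ) :
    AsympRay r₁ r₂ := by
  obtain ⟨M₁, h₁⟩ := h₁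
  obtain ⟨M₂, h₂⟩ := h₂
  exact ⟨M₁ + M₂, fun t ht =>
    (dist_triangle_right _ _ (ℓ t)).trans (add_le_add (h₁ t ht) (h₂ t ht))⟩

section CatZero

variable [CAT0 X] {ℓ : ℝ → X}

lemma line_eq_pt (hℓ : IsGeodLine ℓ) (u v : ℝ) {l : ℝ} (hl : l ∈ Icc (0 : ℝ) 1) :
    ℓ (u + l * (v - u)) = pt (ℓ u) (ℓ v) l := by
  refine eq_pt hl ?_ ?_
  · rw [hℓ, hℓ, show u - (u + l * (v - u)) = l * (u - v) by ring, abs_mul, abs_of_nonneg hl.1]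
  · rw [hℓ, hℓ, show u + l * (v - u) - v = (1 - l) * (u - v) by ring, abs_mul,
      abs_of_nonneg (sub_nonneg.2 hl.2)]

lemma geodConvex_range_line (hℓ : IsGeodLine ℓ) : GeodConvex (range ℓ) := by
  rintro γ a b hab hγ ⟨u, hu⟩ ⟨v, hv⟩ t ht
  have hbtw : Btw (ℓ u) (γ t) (ℓ v) := by
    rw [hu, hv, Btw, hγ a ⟨le_rfl, hab⟩ t ht, hγ t ht b ⟨hab, le_rfl⟩,
      hγ a ⟨le_rfl, hab⟩ b ⟨hab, le_rfl⟩, abs_of_nonpos (by linarith [ht.1]),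
      abs_of_nonpos (by linarith [ht.2]), abs_of_nonpos (by linarith)]
    ring
  obtain ⟨l, hl, e⟩ := hbtw.eq_pt
  exact ⟨_, (line_eq_pt hℓ u v hl).trans e.symm⟩

/-- A limit ray of orbit points that frequently lie near a half-line is asymptotic to it. -/
lemma asympRay_of_frequently (hℓ : IsGeodLine ℓ) {r : ℝ → X} {D : ℝ} {x : ℕ → X}
    (hx : Filter.Tendsto (fun n => dist o (x n)) Filter.atTop Filter.atTop)
    {γ : ℕ → ℝ → X} (hγ : ∀ n, GeodFromTo (γ n) o (x n))
    (hlim : ∀ t, 0 ≤ t →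
      Filter.Tendsto (fun n => γ n (min t (dist o (x n)))) Filter.atTop (nhds (r t)))
    (hfreq : ∃ᶠ n in Filter.atTop, ∃ u ≥ 0, dist (x n) (ℓ u) ≤ D) : AsympRay r ℓ := by
  refine ⟨2 * (D + dist o (ℓ 0)), fun t ht => ?_⟩
  have hclosed : IsClosed {y : X | dist y (ℓ t) ≤ 2 * (D + dist o (ℓ 0))} :=
    isClosed_le (continuous_id.dist continuous_const) continuous_const
  refine hclosed.mem_of_frequently_of_tendsto ?_ (hlim t ht)
  refine (hfreq.and_eventually (hx.eventually_ge_atTop (t + 1))).mono ?_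
  rintro n ⟨⟨u, hu, hd⟩, hn⟩
  set d := dist o (x n) with hd'
  have hd0 : 0 < d := by linarith
  have htd : t ≤ d := by linarith
  have hl : t / d ∈ Icc (0 : ℝ) 1 := ⟨by positivity, (div_le_one hd0).2 htd⟩
  obtain ⟨h1, h2, h3⟩ := hγ n
  have htI : t ∈ Icc 0 (dist o (x n)) := ⟨ht, htd⟩
  have e1 : γ n t = pt o (x n) (t / d) := by
    refine eq_pt hl ?_ ?_
    · conv_lhs => rw [← h2]
      rw [h1 0 ⟨le_rfl, hd0.le⟩ t htI, ← hd', div_mul_cancel₀ _ hd0.ne', zero_sub, abs_neg,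
        abs_of_nonneg ht]
    · conv_lhs => rw [← h3]
      rw [h1 t htI _ ⟨hd0.le, le_rfl⟩, ← hd', sub_mul, div_mul_cancel₀ _ hd0.ne',
        abs_of_nonpos (by linarith)]
      ring
  have e2 := line_eq_pt hℓ 0 u hl
  have h4 := dist_pt_pt_le o (x n) (ℓ 0) (ℓ u) hl
  rw [← e1, ← e2] at h4
  have hD : 0 ≤ D := dist_nonneg.trans hd
  have h5 : |u - d| ≤ D + dist o (ℓ 0) := by
    have a1 := dist_triangle4 (ℓ 0) o (x n) (ℓ u)
    have a2 := dist_triangle4 o (ℓ 0) (ℓ u) (x n)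
    rw [hℓ, zero_sub, abs_neg, abs_of_nonneg hu] at a1 a2
    rw [dist_comm (ℓ 0) o] at a1
    rw [dist_comm (ℓ u) (x n)] at a2
    rw [abs_le]
    constructor <;> linarith
  have h6 : dist (ℓ (0 + t / d * (u - 0))) (ℓ t) ≤ D + dist o (ℓ 0) := by
    rw [hℓ, show 0 + t / d * (u - 0) - t = t / d * (u - d) by field_simp; ring, abs_mul,
      abs_of_nonneg hl.1]
    exact (mul_le_of_le_one_left (abs_nonneg _) hl.2).trans h5
  have h7 := dist_triangle (γ n t) (ℓ (0 + t / d * (u - 0))) (ℓ t)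
  have h8 : (1 - t / d) * dist o (ℓ 0) ≤ dist o (ℓ 0) :=
    mul_le_of_le_one_left dist_nonneg (by linarith [hl.1])
  have h9 : t / d * dist (x n) (ℓ u) ≤ D :=
    (mul_le_of_le_one_left dist_nonneg hl.2).trans hd
  simp only [mem_ofPred_eq, min_eq_left htd]
  linarith

/-- The cyclic group generated by an axial isometry has infinite index in a non-elementary group. -/
lemma index_zpowers_eq_zero (hne : NonElementary Γ o) (hℓ : IsGeodLine ℓ) {h : X ≃ᵢ X} {τ : ℝ}
    (htr : ∀ t, h (ℓ t) = ℓ (t + τ)) : ((Subgroup.zpowers h).subgroupOf Γ).index = 0 := by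
  by_contra hindex
  obtain ⟨F, hF, -, hcov⟩ := exists_finite_cover_of_index_ne_zero hindex
  obtain ⟨D, hD⟩ : ∃ D, ∀ φ ∈ F, dist (φ o) (ℓ 0) ≤ D := by
    obtain ⟨D, hD⟩ := (hF.image fun φ : X ≃ᵢ X => dist (φ o) (ℓ 0)).bddAbove
    exact ⟨D, fun φ hφ => hD ⟨φ, hφ, rfl⟩⟩
  have hnear : ∀ g ∈ Γ, ∃ u, dist (g o) (ℓ u) ≤ D := by
    intro g hg
    obtain ⟨φ, hφ, n, hn⟩ := hcov g hg
    refine ⟨0 + n * τ, ?_⟩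
    have e : g = h ^ n * φ := by rw [show h ^ n = g * φ⁻¹ from hn, inv_mul_cancel_right]
    rw [← zpow_translate htr, e, IsometryEquiv.mul_apply, IsometryEquiv.dist_eq]
    exact hD φ hφ
  have hlim : ∀ r, InLimitSet Γ o r → AsympRay r ℓ ∨ AsympRay r fun t => ℓ (-t) := by
    rintro r ⟨-, -, g, hg, hx, γ, hγ, hr⟩
    choose u hu using fun n => hnear (g n) (hg n)
    have hfreq : ∃ᶠ n in (Filter.atTop : Filter ℕ), 0 ≤ u n ∨ u n ≤ 0 :=
      Filter.Frequently.of_forall fun n => le_total _ _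
    rcases Filter.frequently_or_distrib.1 hfreq with h | h
    · exact Or.inl (asympRay_of_frequently hℓ hx hγ hr (h.mono fun n hn => ⟨u n, hn, hu n⟩))
    · refine Or.inr (asympRay_of_frequently (D := D) (isGeodLine_neg hℓ) hx hγ hr
        (h.mono fun n hn => ⟨-u n, neg_nonneg.2 hn, ?_⟩))
      rw [neg_neg]; exact hu n
  obtain ⟨r₁, r₂, r₃, h₁, h₂, h₃, h₁₂, h₁₃, h₂₃⟩ := hne
  rcases hlim r₁ h₁ with a₁ | a₁ <;> rcases hlim r₂ h₂ with a₂ | a₂ <;>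
    rcases hlim r₃ h₃ with a₃ | a₃ <;>
    first
      | exact h₁₂ (asympRay_of_asympRay_right a₁ a₂)
      | exact h₁₃ (asympRay_of_asympRay_right a₁ a₃)
      | exact h₂₃ (asympRay_of_asympRay_right a₂ a₃)

/-- A non-elementary rank one group has positive critical exponent. -/
lemma critExp_pos [ProperSpace X] (hdisc : IsDiscreteSubgroup Γ) (hne : NonElementary Γ o)
    (hrk : RankOne Γ) (hfin : HasFiniteCritExp Γ o) : 0 < critExp Γ o := by
  obtain ⟨h, hh, ℓ, hℓ, -, τ, hτ, htr⟩ := id hrk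
  have hle : Subgroup.zpowers h ≤ Γ := Subgroup.zpowers_le.2 hh
  have hinj : Function.Injective ℓ := fun s t he => by
    have := hℓ s t
    rw [he, dist_self] at this
    exact sub_eq_zero.1 (abs_eq_zero.1 this.symm)
  have : Infinite (Subgroup.zpowers h) := by
    refine Infinite.of_injective (fun n : ℤ => (⟨h ^ n, n, rfl⟩ : Subgroup.zpowers h))
      fun m n he => ?_
    have e : (h ^ m) (ℓ 0) = (h ^ n) (ℓ 0) := by rw [Subtype.mk.inj he]
    rw [zpow_translate htr, zpow_translate htr] at e
    exact_mod_cast mul_right_cancel₀ hτ.ne' (add_left_cancel (hinj e))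
  refine (critExp_nonneg (hasFiniteCritExp_mono hdisc hle hfin)).trans_lt
    (critExp_lt_of_infinite hle hdisc hrk hfin (isClosed_range_line hℓ) (geodConvex_range_line hℓ)
      ?_ (mem_range_self 0) (R := τ) ?_ (index_zpowers_eq_zero hne hℓ htr))
  · rintro _ ⟨n, rfl⟩
    ext y
    constructor
    · rintro ⟨_, ⟨t, rfl⟩, rfl⟩
      exact ⟨_, (zpow_translate htr n t).symm⟩
    · rintro ⟨t, rfl⟩
      refine ⟨_, ⟨t - n * τ, rfl⟩, ?_⟩
      simp only [zpow_translate htr n, sub_add_cancel]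
  · rintro _ ⟨t, rfl⟩
    refine ⟨h ^ ⌊t / τ⌋, ⟨_, rfl⟩, ?_⟩
    rw [zpow_translate htr, hℓ]
    have h1 := Int.floor_le (t / τ)
    have h2 := (Int.lt_floor_add_one (t / τ)).le
    rw [le_div_iff₀ hτ] at h1
    rw [div_le_iff₀ hτ] at h2
    rw [abs_le]
    constructor <;> linarith

end CatZero

end RankOneGap

/-- Proposition 4.2: let `X` be a proper CAT(0) space, `Γ` a non-elementary rank one
discrete subgroup of isometries with finite critical exponent, and `Γ₀ ≤ Γ` a subgroup
acting cocompactly on a closed convex subset `C ⊆ X`.  Then `Γ₀` has infinite index in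
`Γ` if and only if `δ(Γ₀) < δ(Γ)`. -/
theorem infinite_index_iff_critExp_lt
    {X : Type*} [MetricSpace X] [ProperSpace X] [CAT0 X]
    (Γ Γ₀ : Subgroup (X ≃ᵢ X)) (hle : Γ₀ ≤ Γ)
    (hdisc : IsDiscreteSubgroup Γ)
    (o : X) (hne : NonElementary Γ o) (hrk : RankOne Γ) (hfin : HasFiniteCritExp Γ o)
    (C : Set X) (hCne : C.Nonempty) (hclosed : IsClosed C) (hconv : GeodConvex C)
    (hinv : ∀ g ∈ Γ₀, (g : X ≃ᵢ X) '' C = C)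
    (o' : X) (ho' : o' ∈ C) (R : ℝ)
    (hcocpt : ∀ x ∈ C, ∃ g ∈ Γ₀, dist x ((g : X ≃ᵢ X) o') ≤ R) :
    (Γ₀.subgroupOf Γ).index = 0 ↔ critExp Γ₀ o < critExp Γ o := by
  constructor
  · intro hindex
    rcases finite_or_infinite Γ₀ with hf | hf
    · exact (RankOneGap.critExp_nonpos_of_finite
        (RankOneGap.isDiscreteSubgroup_mono hdisc hle)).trans_lt
          (RankOneGap.critExp_pos hdisc hne hrk hfin)
    · exact RankOneGap.critExp_lt_of_infinite hle hdisc hrk hfin hclosed hconv hinv ho' hcocpt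
        hindex
  · intro hlt
    by_contra hindex
    exact (RankOneGap.critExp_le_of_index_ne_zero hdisc hle hfin hindex).not_gt hlt
end

section
/- Let X be a proper CAT(0) space, Γ ⊂ Isom(X) a discrete group, F a Γ-periodic Morse d-flat, Γ₀ = Stab_Γ(∂F), and let C be the closed convex hull of F and all geodesic lines parallel to geodesic lines in F. Then Γ₀ is almost malnormal in Γ: for every g ∈ Γ ∖ Γ₀, the intersection Γ₀ ∩ gΓ₀g⁻¹ is finite. -/
open Set Metric

/-- `γ` is an `(A,B)`-quasi-geodesic on `[a,b]`. -/
def IsQuasiGeodesicOn {X : Type*} [MetricSpace X] (A B : ℝ) (γ : ℝ → X) (a b : ℝ) : Prop :=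
  ∀ s ∈ Set.Icc a b, ∀ t ∈ Set.Icc a b,
    A⁻¹ * |s - t| - B ≤ dist (γ s) (γ t) ∧ dist (γ s) (γ t) ≤ A * |s - t| + B

/-- A subset `C` is Morse if every quasi-geodesic with endpoints in `C` stays within a
bounded distance of `C`, depending only on the quasi-geodesic constants. -/
def IsMorse {X : Type*} [MetricSpace X] (C : Set X) : Prop :=
  ∀ A : ℝ, 1 ≤ A → ∀ B : ℝ, 0 ≤ B → ∃ D : ℝ, 0 < D ∧
    ∀ γ : ℝ → X, ∀ a b : ℝ, a ≤ b → IsQuasiGeodesicOn A B γ a b →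
      γ a ∈ C → γ b ∈ C → ∀ t ∈ Set.Icc a b, Metric.infDist (γ t) C ≤ D

/-- `F` is a `d`-flat: an isometrically embedded copy of Euclidean `ℝ^d`. -/
def IsFlat {X : Type*} [MetricSpace X] (d : ℕ) (F : Set X) : Prop :=
  ∃ φ : EuclideanSpace ℝ (Fin d) → X, Isometry φ ∧ Set.range φ = F

/-- `r` is a geodesic ray contained in `F`. -/
def RayIn {X : Type*} [MetricSpace X] (F : Set X) (r : ℝ → X) : Prop :=
  IsGeodRay r ∧ ∀ t : ℝ, 0 ≤ t → r t ∈ F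

/-- An isometry `g` stabilizes the boundary sphere `∂F` of `F`: it maps asymptote
classes of rays in `F` to asymptote classes of rays in `F`, and conversely. -/
def StabBoundary {X : Type*} [MetricSpace X] (F : Set X) (g : X ≃ᵢ X) : Prop :=
  (∀ r : ℝ → X, RayIn F r → ∃ r' : ℝ → X, RayIn F r' ∧ AsympRay (fun t => g (r t)) r') ∧
  (∀ r : ℝ → X, RayIn F r → ∃ r' : ℝ → X, RayIn F r' ∧ AsympRay (fun t => g.symm (r t)) r')

section Flats

variable {X : Type*} [MetricSpace X] {E : Type*} [NormedAddCommGroup E] [InnerProductSpace ℝ E]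

lemma Isometry.dist_left_midpoint {ψ : E → X} (hψ : Isometry ψ) (a b : E) :
    dist (ψ a) (ψ (midpoint ℝ a b)) = dist (ψ a) (ψ b) / 2 := by
  rw [hψ.dist_eq, hψ.dist_eq, _root_.dist_left_midpoint]
  norm_num
  ring

lemma Isometry.dist_midpoint_right {ψ : E → X} (hψ : Isometry ψ) (a b : E) :
    dist (ψ (midpoint ℝ a b)) (ψ b) = dist (ψ a) (ψ b) / 2 := by
  rw [hψ.dist_eq, hψ.dist_eq, _root_.dist_midpoint_right]
  norm_num
  ring

variable [FiniteDimensional ℝ E] [ProperSpace X]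

lemma Isometry.exists_infDist_range_eq {φ : E → X} (hφ : Isometry φ) (x : X) :
    ∃ z : E, infDist x (range φ) = dist x (φ z) := by
  have : ProperSpace E := FiniteDimensional.proper ℝ E
  obtain ⟨_, ⟨z, rfl⟩, h⟩ :=
    hφ.isClosedEmbedding.isClosed_range.exists_infDist_eq_dist (range_nonempty φ) x
  exact ⟨z, h⟩

end Flats

section MidpointConvexity

variable {X : Type*} [MetricSpace X] [CAT0 X]

lemma CAT0.exists_midpoint (x y : X) :
    ∃ m : X, dist x m = dist x y / 2 ∧ dist m y = dist x y / 2 := by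
  obtain ⟨γ, hγ, h0, h1⟩ := CAT0.geodesic x y
  have hd : 0 ≤ dist x y := dist_nonneg
  have hm : dist x y / 2 ∈ Icc 0 (dist x y) := ⟨by linarith, by linarith⟩
  refine ⟨γ (dist x y / 2), ?_, ?_⟩
  · have := hγ 0 ⟨le_rfl, hd⟩ _ hm
    rw [h0] at this
    rw [this, abs_of_nonpos (by linarith)]
    ring
  · have := hγ _ hm (dist x y) ⟨hd, le_rfl⟩
    rw [h1] at this
    rw [this, abs_of_nonpos (by linarith)]
    ring

lemma CAT0.dist_midpoint_midpoint_le_of_common {x y z m n : X}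
    (hm₁ : dist x m = dist x y / 2) (hm₂ : dist m y = dist x y / 2)
    (hn₁ : dist x n = dist x z / 2) (hn₂ : dist n z = dist x z / 2) :
    dist m n ≤ dist y z / 2 := by
  have h1 := CAT0.cn m x z n hn₁ hn₂
  have h2 := CAT0.cn z x y m hm₁ hm₂
  rw [dist_comm m x, hm₁, dist_comm m z] at h1
  rw [dist_comm z x, dist_comm z y] at h2
  refine abs_le_of_sq_le_sq' (b := dist y z / 2) ?_ (by positivity) |>.2
  nlinarith

lemma CAT0.dist_midpoint_midpoint_le {a b a' b' m m' : X}
    (hm₁ : dist a m = dist a b / 2) (hm₂ : dist m b = dist a b / 2)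
    (hm₁' : dist a' m' = dist a' b' / 2) (hm₂' : dist m' b' = dist a' b' / 2) :
    dist m m' ≤ (dist a a' + dist b b') / 2 := by
  obtain ⟨n, hn₁, hn₂⟩ := CAT0.exists_midpoint a b'
  have h1 := CAT0.dist_midpoint_midpoint_le_of_common hm₁ hm₂ hn₁ hn₂
  have h2 : dist n m' ≤ dist a a' / 2 := by
    apply CAT0.dist_midpoint_midpoint_le_of_common (x := b') (y := a) (z := a')
    · rw [dist_comm, hn₂, dist_comm a]
    · rw [dist_comm, hn₁, dist_comm a]
    · rw [dist_comm, hm₂', dist_comm a']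
    · rw [dist_comm, hm₁', dist_comm a']
  linarith [dist_triangle m n m']

variable {E : Type*} [NormedAddCommGroup E] [InnerProductSpace ℝ E] [FiniteDimensional ℝ E]
  [ProperSpace X]

/-- The distance to a flat is midpoint convex along another flat. -/
lemma Isometry.infDist_midpoint_le {φ ψ : E → X} (hφ : Isometry φ) (hψ : Isometry ψ) (a b : E) :
    infDist (ψ (midpoint ℝ a b)) (range φ) ≤
      (infDist (ψ a) (range φ) + infDist (ψ b) (range φ)) / 2 := by
  obtain ⟨a', ha⟩ := hφ.exists_infDist_range_eq (ψ a)
  obtain ⟨b', hb⟩ := hφ.exists_infDist_range_eq (ψ b)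
  rw [ha, hb]
  exact (infDist_le_dist_of_mem (mem_range_self (midpoint ℝ a' b'))).trans
    (CAT0.dist_midpoint_midpoint_le (hψ.dist_left_midpoint a b) (hψ.dist_midpoint_right a b)
      (hφ.dist_left_midpoint a' b') (hφ.dist_midpoint_right a' b'))

lemma Isometry.infDist_eq_of_bounded {φ ψ : E → X} (hφ : Isometry φ) (hψ : Isometry ψ)
    (hb : ∀ x v : E, ∃ M, ∀ n : ℕ, infDist (ψ (x + (n : ℝ) • v)) (range φ) ≤ M) (x y : E) :
    infDist (ψ x) (range φ) = infDist (ψ y) (range φ) := by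
  suffices h : ∀ x y, infDist (ψ y) (range φ) ≤ infDist (ψ x) (range φ) from
    le_antisymm (h y x) (h x y)
  intro x y
  by_contra! hlt
  set f : ℕ → ℝ := fun n => infDist (ψ (x + (n : ℝ) • (y - x))) (range φ) with hf
  have hf0 : f 0 = infDist (ψ x) (range φ) := by simp [hf]
  have hf1 : f 1 = infDist (ψ y) (range φ) := by simp [hf]
  have hconv : ∀ n, 2 * f (n + 1) ≤ f n + f (n + 2) := by
    intro n
    have := hφ.infDist_midpoint_le hψ (x + (n : ℝ) • (y - x)) (x + ((n + 2 : ℕ) : ℝ) • (y - x))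
    have hm : midpoint ℝ (x + (n : ℝ) • (y - x)) (x + ((n + 2 : ℕ) : ℝ) • (y - x))
        = x + ((n + 1 : ℕ) : ℝ) • (y - x) := by
      rw [midpoint_eq_smul_add, invOf_eq_inv]
      push_cast
      module
    rw [hm] at this
    simp only [hf]
    linarith
  have hstep : ∀ n, f 1 - f 0 ≤ f (n + 1) - f n := by
    intro n
    induction n with
    | zero => simp
    | succ k ih => linarith [hconv k]
  have hgrow : ∀ n : ℕ, f 0 + n * (f 1 - f 0) ≤ f n := by
    intro n
    induction n with
    | zero => simp
    | succ k ih => push_cast; linarith [hstep k]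
  obtain ⟨M, hM⟩ := hb x (y - x)
  have hpos : 0 < f 1 - f 0 := by linarith
  obtain ⟨n, hn⟩ := exists_nat_gt ((M - f 0) / (f 1 - f 0))
  rw [div_lt_iff₀ hpos] at hn
  linarith [hgrow n, hM n]

/-- A ray staying close to a flat is asymptotic to a ray in that flat. -/
lemma Isometry.exists_asympRay_of_infDist_le {φ : E → X} (hφ : Isometry φ) {r : ℝ → X}
    (hr : IsGeodRay r) {K : ℝ} (hK : ∀ t, 0 ≤ t → infDist (r t) (range φ) ≤ K) :
    ∃ r', RayIn (range φ) r' ∧ AsympRay r r' := by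
  have : ProperSpace E := FiniteDimensional.proper ℝ E
  choose z hz using fun t => hφ.exists_infDist_range_eq (r t)
  have hzK : ∀ t, 0 ≤ t → dist (r t) (φ (z t)) ≤ K := fun t ht => (hz t).symm.trans_le (hK t ht)
  set e : ℕ → E := fun n => (n : ℝ)⁻¹ • (z n - z 0) with he
  have hseg : ∀ n : ℕ, ∀ t ∈ Icc (0 : ℝ) n, dist (r t) (φ (z 0 + t • e n)) ≤ K := by
    intro n
    rcases Nat.eq_zero_or_pos n with rfl | hn
    · intro t ht
      obtain rfl : t = 0 := le_antisymm (by simpa using ht.2) ht.1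
      simpa using hzK 0 le_rfl
    have hn' : (0 : ℝ) < n := by exact_mod_cast hn
    set k : ℝ → ℝ := fun t => dist (r t) (φ (z 0 + t • e n)) with hk
    have hrc : ContinuousOn r (Icc (0 : ℝ) n) := by
      refine LipschitzOnWith.continuousOn (K := 1) (LipschitzOnWith.of_dist_le_mul ?_)
      intro s hs t ht
      rw [hr s t hs.1 ht.1, Real.dist_eq]
      simp
    have hkc : ContinuousOn k (Icc (0 : ℝ) n) :=
      continuous_dist.comp_continuousOn (hrc.prodMk (hφ.continuous.comp (by fun_prop)).continuousOn)
    have hk0 : k 0 ≤ K := by simpa [hk] using hzK 0 le_rfl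
    have hkn : k n ≤ K := by
      have : z 0 + (n : ℝ) • e n = z n := by
        simp only [he]
        rw [smul_inv_smul₀ hn'.ne']
        abel
      simp only [hk, this]
      exact hzK n hn'.le
    have hmid : ∀ s t, 0 ≤ s → s ≤ t → k ((s + t) / 2) ≤ (k s + k t) / 2 := by
      intro s t hs hst
      have hm : z 0 + ((s + t) / 2) • e n = midpoint ℝ (z 0 + s • e n) (z 0 + t • e n) := by
        rw [midpoint_eq_smul_add, invOf_eq_inv]
        module
      simp only [hk]
      rw [hm]
      refine CAT0.dist_midpoint_midpoint_le ?_ ?_ (hφ.dist_left_midpoint _ _)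
        (hφ.dist_midpoint_right _ _)
      · rw [hr _ _ hs (by linarith), hr _ _ hs (by linarith), abs_of_nonpos (by linarith),
          abs_of_nonpos (by linarith)]
        ring
      · rw [hr _ _ (by linarith) (by linarith), hr _ _ hs (by linarith),
          abs_of_nonpos (by linarith), abs_of_nonpos (by linarith)]
        ring
    obtain ⟨t₀, ht₀, hmax⟩ := isCompact_Icc.exists_isMaxOn ⟨0, le_rfl, hn'.le⟩ hkc
    have hle : k t₀ ≤ K := by
      rcases le_total t₀ (n / 2) with h | h
      · have h1 := hmid 0 (2 * t₀) le_rfl (by linarith [ht₀.1])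
        have h2 : k (2 * t₀) ≤ k t₀ := hmax ⟨by linarith [ht₀.1], by linarith⟩
        rw [show (0 + 2 * t₀) / 2 = t₀ by ring] at h1
        linarith
      · have h1 := hmid (2 * t₀ - n) n (by linarith) (by linarith [ht₀.2])
        have h2 : k (2 * t₀ - n) ≤ k t₀ := hmax ⟨by linarith, by linarith [ht₀.2]⟩
        rw [show (2 * t₀ - n + n) / 2 = t₀ by ring] at h1
        linarith
    exact fun t ht => (show k t ≤ k t₀ from hmax ht).trans hle
  have hK0 : 0 ≤ K := infDist_nonneg.trans (hK 0 le_rfl)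
  have hnorm : ∀ n : ℕ, 0 < n → |‖e n‖ - 1| ≤ 2 * K / n := by
    intro n hn
    have hn' : (0 : ℝ) < n := by exact_mod_cast hn
    have h1 : ‖e n‖ = dist (φ (z n)) (φ (z 0)) / n := by
      simp only [he]
      rw [norm_smul, hφ.dist_eq, dist_eq_norm, norm_inv, Real.norm_of_nonneg hn'.le]
      ring
    have h2 : dist (r n) (r 0) = n := by
      rw [hr n 0 hn'.le le_rfl, sub_zero, abs_of_pos hn']
    have h3 := hzK n hn'.le
    have h4 := hzK 0 le_rfl
    have h5 := dist_triangle4 (φ (z n)) (r n) (r 0) (φ (z 0))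
    have h6 := dist_triangle4 (r n) (φ (z n)) (φ (z 0)) (r 0)
    rw [dist_comm (φ (z n)) (r n)] at h5
    rw [dist_comm (φ (z 0)) (r 0)] at h6
    rw [h1, show dist (φ (z n)) (φ (z 0)) / n - 1 = (dist (φ (z n)) (φ (z 0)) - n) / n by
      field_simp, abs_div, abs_of_pos hn']
    gcongr
    rw [abs_le]
    constructor <;> linarith
  have hball : ∀ n : ℕ, e n ∈ closedBall (0 : E) (1 + 2 * K) := by
    intro n
    rw [mem_closedBall_zero_iff]
    rcases Nat.eq_zero_or_pos n with rfl | hn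
    · simp only [he, Nat.cast_zero, inv_zero, zero_smul, norm_zero]
      positivity
    · have h1 := (abs_le.1 (hnorm n hn)).2
      have h2 : 2 * K / n ≤ 2 * K :=
        div_le_self (by positivity) (by exact_mod_cast hn)
      linarith
  obtain ⟨v, -, σ, hσ, hv⟩ := (isCompact_closedBall (0 : E) (1 + 2 * K)).tendsto_subseq hball
  have hvn : ‖v‖ = 1 := by
    have h1 : Filter.Tendsto (fun n => ‖e (σ n)‖ - 1) Filter.atTop (nhds (‖v‖ - 1)) :=
      hv.norm.sub_const 1
    have h2 : Filter.Tendsto (fun n => ‖e (σ n)‖ - 1) Filter.atTop (nhds 0) := by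
      have h3 : Filter.Tendsto (fun n => 2 * K / (σ n : ℝ)) Filter.atTop (nhds 0) :=
        (tendsto_const_div_atTop_nhds_zero_nat (2 * K)).comp hσ.tendsto_atTop
      refine squeeze_zero_norm' ?_ h3
      filter_upwards [hσ.tendsto_atTop.eventually_gt_atTop 0] with n hn
      exact hnorm _ hn
    linarith [tendsto_nhds_unique h1 h2]
  refine ⟨fun t => φ (z 0 + t • v), ⟨fun s t _ _ => ?_, fun t _ => mem_range_self _⟩, K, ?_⟩
  · rw [hφ.dist_eq, dist_eq_norm, add_sub_add_left_eq_sub, ← sub_smul, norm_smul, hvn, mul_one,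
      Real.norm_eq_abs]
  · intro t ht
    have h1 : Filter.Tendsto (fun n => dist (r t) (φ (z 0 + t • e (σ n)))) Filter.atTop
        (nhds (dist (r t) (φ (z 0 + t • v)))) :=
      tendsto_const_nhds.dist ((hφ.continuous.tendsto _).comp
        (tendsto_const_nhds.add (hv.const_smul t)))
    refine le_of_tendsto h1 ?_
    filter_upwards [hσ.tendsto_atTop.eventually_ge_atTop ⌈t⌉₊] with n hn
    exact hseg _ t ⟨ht, (Nat.le_ceil t).trans (by exact_mod_cast hn)⟩

end MidpointConvexity

section MorseFlats

variable {X : Type*} [MetricSpace X]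
  {E : Type*} [NormedAddCommGroup E] [InnerProductSpace ℝ E]

/-- A flat at constant distance from a Morse flat is uniformly close to it. -/
lemma exists_bound_of_infDist_const [CAT0 X] [ProperSpace X] [FiniteDimensional ℝ E]
    [Nontrivial E] {φ : E → X} (hφ : Isometry φ) (hMorse : IsMorse (range φ)) :
    ∃ D : ℝ, 0 ≤ D ∧ ∀ (ψ : E → X) (c : ℝ), Isometry ψ →
      (∀ x, infDist (ψ x) (range φ) = c) → c ≤ D := by
  obtain ⟨D, hD, hM⟩ := hMorse 3 (by norm_num) 0 le_rfl
  refine ⟨D, hD.le, fun ψ c hψ hc => ?_⟩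
  have hc0 : 0 ≤ c := by rw [← hc 0]; exact infDist_nonneg
  obtain ⟨e, he⟩ := exists_norm_eq E zero_le_one
  obtain ⟨q, hq⟩ := hφ.exists_infDist_range_eq (ψ 0)
  obtain ⟨q', hq'⟩ := hφ.exists_infDist_range_eq (ψ ((10 * c) • e))
  rw [hc] at hq hq'
  obtain ⟨α, hα, hα0, hα1⟩ := CAT0.geodesic (φ q) (ψ 0)
  obtain ⟨α', hα', hα0', hα1'⟩ := CAT0.geodesic (φ q') (ψ ((10 * c) • e))
  rw [dist_comm, ← hq] at hα hα1
  rw [dist_comm, ← hq'] at hα' hα1'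
  have hβ : ∀ s t : ℝ, dist (ψ (s • e)) (ψ (t • e)) = |s - t| := by
    intro s t
    rw [hψ.dist_eq, dist_eq_norm, ← sub_smul, norm_smul, he, mul_one, Real.norm_eq_abs]
  have hβd : ∀ (t : ℝ) (x : X) (z : E), c ≤ dist x (ψ (t • e)) + dist x (φ z) := by
    intro t x z
    rw [← hc (t • e)]
    have := infDist_le_dist_of_mem (x := ψ (t • e)) (mem_range_self (f := φ) z)
    linarith [dist_triangle_left (ψ (t • e)) (φ z) x]
  have hαβ : ∀ (s t : ℝ), s ∈ Icc 0 c → 0 ≤ t →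
      (c - s + t) / 3 ≤ dist (α s) (ψ (t • e)) ∧ dist (α s) (ψ (t • e)) ≤ c - s + t := by
    intro s t hs ht
    have h1 := hβd t (α s) q
    have h2 := hα s hs 0 ⟨le_rfl, hc0⟩
    have h3 := hα s hs c ⟨hc0, le_rfl⟩
    have h4 := hβ 0 t
    rw [hα0, sub_zero, abs_of_nonneg hs.1] at h2
    rw [hα1, abs_of_nonpos (by linarith [hs.2])] at h3
    rw [zero_smul, zero_sub, abs_neg, abs_of_nonneg ht] at h4
    have h5 := dist_triangle (α s) (ψ 0) (ψ (t • e))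
    have h6 := dist_triangle_left (ψ 0) (ψ (t • e)) (α s)
    constructor <;> linarith
  have hαβ' : ∀ (s t : ℝ), s ∈ Icc 0 c → t ≤ 10 * c →
      (c - s + (10 * c - t)) / 3 ≤ dist (α' s) (ψ (t • e)) ∧
        dist (α' s) (ψ (t • e)) ≤ c - s + (10 * c - t) := by
    intro s t hs ht
    have h1 := hβd t (α' s) q'
    have h2 := hα' s hs 0 ⟨le_rfl, hc0⟩
    have h3 := hα' s hs c ⟨hc0, le_rfl⟩
    have h4 := hβ (10 * c) t
    rw [hα0', sub_zero, abs_of_nonneg hs.1] at h2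
    rw [hα1', abs_of_nonpos (by linarith [hs.2])] at h3
    rw [abs_of_nonneg (by linarith)] at h4
    have h5 := dist_triangle (α' s) (ψ ((10 * c) • e)) (ψ (t • e))
    have h6 := dist_triangle_left (ψ ((10 * c) • e)) (ψ (t • e)) (α' s)
    constructor <;> linarith
  have hαα' : ∀ s s' : ℝ, s ∈ Icc 0 c → s' ∈ Icc 0 c →
      (c - s + 10 * c + (c - s')) / 3 ≤ dist (α s) (α' s') ∧
        dist (α s) (α' s') ≤ c - s + 10 * c + (c - s') := by
    intro s s' hs hs'
    have h3 := hα s hs c ⟨hc0, le_rfl⟩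
    have h3' := hα' s' hs' c ⟨hc0, le_rfl⟩
    rw [hα1, abs_of_nonpos (by linarith [hs.2])] at h3
    rw [hα1', abs_of_nonpos (by linarith [hs'.2])] at h3'
    have h4 := hβ 0 (10 * c)
    rw [zero_smul, abs_of_nonpos (by linarith)] at h4
    have h5 := dist_triangle4 (α s) (ψ 0) (ψ ((10 * c) • e)) (α' s')
    have h6 := dist_triangle4 (ψ 0) (α s) (α' s') (ψ ((10 * c) • e))
    rw [dist_comm (ψ ((10 * c) • e)) (α' s')] at h5
    rw [dist_comm (ψ 0) (α s)] at h6
    constructor <;> linarith [hs.1, hs'.1]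
  set γ : ℝ → X := fun t => if t ≤ c then α t else
    if t ≤ 11 * c then ψ ((t - c) • e) else α' (12 * c - t) with hγ
  have hγα : ∀ t ≤ c, γ t = α t := fun t ht => by simp [hγ, ht]
  have hγβ : ∀ t, c < t → t ≤ 11 * c → γ t = ψ ((t - c) • e) := fun t ht ht' => by
    simp [hγ, ht.not_ge, ht']
  have hγα' : ∀ t, 11 * c < t → γ t = α' (12 * c - t) := fun t ht => by
    simp [hγ, ht.not_ge, (show c < t by linarith).not_ge]
  have hquasi : ∀ s ∈ Icc 0 (12 * c), ∀ t ∈ Icc 0 (12 * c), s ≤ t →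
      (t - s) / 3 ≤ dist (γ s) (γ t) ∧ dist (γ s) (γ t) ≤ t - s := by
    intro s hs t ht hst
    rcases le_or_gt t c with htc | htc
    · rw [hγα t htc, hγα s (hst.trans htc),
        hα s ⟨hs.1, hst.trans htc⟩ t ⟨ht.1, htc⟩, abs_of_nonpos (by linarith)]
      constructor <;> linarith
    rcases le_or_gt s c with hsc | hsc
    · rw [hγα s hsc]
      rcases le_or_gt t (11 * c) with htc' | htc'
      · rw [hγβ t htc htc']
        have := hαβ s (t - c) ⟨hs.1, hsc⟩ (by linarith)
        constructor <;> linarith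
      · rw [hγα' t htc']
        have := hαα' s (12 * c - t) ⟨hs.1, hsc⟩ ⟨by linarith [ht.2], by linarith⟩
        constructor <;> linarith
    rcases le_or_gt t (11 * c) with htc' | htc'
    · rw [hγβ t htc htc', hγβ s hsc (hst.trans htc'), hβ, abs_of_nonpos (by linarith)]
      constructor <;> linarith
    rw [hγα' t htc']
    rcases le_or_gt s (11 * c) with hsc' | hsc'
    · rw [hγβ s hsc hsc', dist_comm]
      have := hαβ' (12 * c - t) (s - c) ⟨by linarith [ht.2], by linarith⟩ (by linarith)
      constructor <;> linarith
    · rw [hγα' s hsc', hα' _ ⟨by linarith [hs.2], by linarith⟩ _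
        ⟨by linarith [ht.2], by linarith⟩, abs_of_nonneg (by linarith)]
      constructor <;> linarith
  have hγ0 : γ 0 ∈ range φ := by rw [hγα 0 hc0, hα0]; exact mem_range_self _
  have hγ1 : γ (12 * c) ∈ range φ := by
    rcases hc0.eq_or_lt with h | h
    · rw [← h, mul_zero]; exact hγ0
    · rw [hγα' _ (by linarith), sub_self, hα0']; exact mem_range_self _
  have hfin := hM γ 0 (12 * c) (by linarith) ?_ hγ0 hγ1 c ⟨hc0, by linarith⟩
  · rw [hγα c le_rfl, hα1, hc] at hfin
    exact hfin
  · intro s hs t ht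
    rcases le_total s t with h | h
    · have := hquasi s hs t ht h
      rw [abs_of_nonpos (by linarith)]
      constructor <;> linarith
    · have := hquasi t ht s hs h
      rw [dist_comm, abs_of_nonneg (by linarith)]
      constructor <;> linarith

/-- A point of a flat seen under an obtuse angle from two points close to a Morse set is itself
close to the Morse set. -/
lemma IsMorse.exists_infDist_le_of_inner_nonpos {F : Set X} (hMorse : IsMorse F)
    (hF : F.Nonempty) {K : ℝ} (hK : 0 ≤ K) :
    ∃ D : ℝ, ∀ (ψ : E → X) (u w y : E), Isometry ψ → infDist (ψ u) F < K → infDist (ψ w) F < K →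
      inner ℝ (u - y) (w - y) ≤ 0 → infDist (ψ y) F ≤ D := by
  obtain ⟨D, hD, hM⟩ := hMorse 2 (by norm_num) (2 * K) (by positivity)
  refine ⟨D + K, fun ψ u w y hψ hu hw huw => ?_⟩
  obtain ⟨u', hu'F, hu'⟩ := (infDist_lt_iff hF).1 hu
  obtain ⟨w', hw'F, hw'⟩ := (infDist_lt_iff hF).1 hw
  set a := ‖u - y‖ with ha
  set b := ‖w - y‖ with hb
  have ha0 : 0 ≤ a := norm_nonneg _
  have hb0 : 0 ≤ b := norm_nonneg _
  set p : E := a⁻¹ • (u - y) with hp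
  set q : E := b⁻¹ • (w - y) with hq
  have hap : a • p = u - y := by
    rcases eq_or_ne a 0 with h | h
    · rw [h, zero_smul, eq_comm, ← norm_eq_zero, ← ha, h]
    · rw [hp, smul_inv_smul₀ h]
  have hbq : b • q = w - y := by
    rcases eq_or_ne b 0 with h | h
    · rw [h, zero_smul, eq_comm, ← norm_eq_zero, ← hb, h]
    · rw [hq, smul_inv_smul₀ h]
  have hp1 : a ≠ 0 → ‖p‖ = 1 := fun h => by
    rw [hp, norm_smul, norm_inv, Real.norm_of_nonneg ha0, ← ha, inv_mul_cancel₀ h]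
  have hq1 : b ≠ 0 → ‖q‖ = 1 := fun h => by
    rw [hq, norm_smul, norm_inv, Real.norm_of_nonneg hb0, ← hb, inv_mul_cancel₀ h]
  have hpq : inner ℝ p q ≤ 0 := by
    rw [hp, hq, real_inner_smul_left, real_inner_smul_right]
    exact mul_nonpos_of_nonneg_of_nonpos (by positivity)
      (mul_nonpos_of_nonneg_of_nonpos (by positivity) huw)
  set η : ℝ → E := fun t => if t ≤ 0 then y + (-t) • p else y + t • q with hη
  have hηquasi : ∀ s ∈ Icc (-a) b, ∀ t ∈ Icc (-a) b, s ≤ t →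
      (t - s) / 2 ≤ dist (η s) (η t) ∧ dist (η s) (η t) ≤ t - s := by
    intro s hs t ht hst
    rcases le_or_gt t 0 with ht0 | ht0
    · have hs0 : s ≤ 0 := hst.trans ht0
      have : dist (η s) (η t) = t - s := by
        simp only [hη, ht0, hs0, if_true]
        rw [dist_eq_norm, add_sub_add_left_eq_sub, ← sub_smul, norm_smul,
          Real.norm_of_nonneg (by linarith)]
        rcases eq_or_ne a 0 with h | h
        · have : t - s = 0 := by linarith [hs.1]
          rw [show -s - -t = t - s by ring, this, zero_mul]
        · rw [hp1 h]; ring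
      constructor <;> linarith
    have hq1 := hq1 (by linarith [ht.2])
    rcases le_or_gt s 0 with hs0 | hs0
    · rcases hs0.eq_or_lt with h0 | hs0'
      · have : dist (η s) (η t) = t - s := by
          simp only [hη, ht0.not_ge, h0, le_refl, if_true, if_false]
          rw [dist_eq_norm, add_sub_add_left_eq_sub, neg_zero, zero_smul, zero_sub, norm_neg,
            norm_smul, hq1, Real.norm_of_nonneg ht0.le]
          ring
        constructor <;> linarith
      have hp1 := hp1 (by linarith [hs.1])
      have hsq : dist (η s) (η t) ^ 2 = s ^ 2 + t ^ 2 + 2 * (s * t) * inner ℝ p q := by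
        simp only [hη, ht0.not_ge, hs0, if_true, if_false]
        rw [dist_eq_norm, add_sub_add_left_eq_sub, norm_sub_sq_real, norm_smul (-s) p,
          norm_smul t q, hp1, hq1, real_inner_smul_left, real_inner_smul_right, Real.norm_eq_abs,
          Real.norm_eq_abs, mul_one, mul_one, sq_abs, sq_abs]
        ring
      have h1 : 0 ≤ s * t * inner ℝ p q :=
        mul_nonneg_of_nonpos_of_nonpos (mul_nonpos_of_nonpos_of_nonneg hs0 ht0.le) hpq
      have h2 : -1 ≤ inner ℝ p q := by
        have := abs_real_inner_le_norm p q
        rw [hp1, hq1, mul_one] at this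
        exact (abs_le.1 this).1
      have h3 : s * t ≤ 0 := mul_nonpos_of_nonpos_of_nonneg hs0 ht0.le
      constructor
      · refine (abs_le_of_sq_le_sq' ?_ dist_nonneg).2
        rw [hsq]
        nlinarith [sq_nonneg (s + t)]
      · refine (abs_le_of_sq_le_sq' ?_ (by linarith)).2
        rw [hsq]
        nlinarith
    · have : dist (η s) (η t) = t - s := by
        simp only [hη, ht0.not_ge, hs0.not_ge, if_false]
        rw [dist_comm, dist_eq_norm, add_sub_add_left_eq_sub, ← sub_smul, norm_smul, hq1,
          Real.norm_of_nonneg (by linarith), mul_one]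
      constructor <;> linarith
  have hηa : η (-a) = u := by simp [hη, ha0, hap]
  have hηb : η b = w := by
    rcases hb0.eq_or_lt with h | h
    · have : w - y = 0 := by rw [← norm_eq_zero, ← hb, h]
      simp [hη, ← h, (sub_eq_zero.1 this)]
    · simp [hη, h.not_ge, hbq]
  set γ : ℝ → X := fun t => if t = -a then u' else if t = b then w' else ψ (η t) with hγ
  have hγη : ∀ t, dist (γ t) (ψ (η t)) ≤ K := by
    intro t
    simp only [hγ]
    split_ifs with h1 h2
    · rw [h1, hηa, dist_comm]; exact hu'.le
    · rw [h2, hηb, dist_comm]; exact hw'.le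
    · simpa using hK
  have hγa : γ (-a) ∈ F := by simpa [hγ] using hu'F
  have hγb : γ b ∈ F := by
    simp only [hγ]
    split_ifs
    exacts [hu'F, hw'F]
  have hfin := hM γ (-a) b (by linarith) ?_ hγa hγb 0 ⟨by linarith, hb0⟩
  · have h0 : η 0 = y := by simp [hη]
    have h1 := hγη 0
    rw [h0, dist_comm] at h1
    linarith [infDist_le_infDist_add_dist (s := F) (x := ψ y) (y := γ 0)]
  · have key : ∀ s ∈ Icc (-a) b, ∀ t ∈ Icc (-a) b, s ≤ t →
        (t - s) / 2 - 2 * K ≤ dist (γ s) (γ t) ∧ dist (γ s) (γ t) ≤ 2 * (t - s) + 2 * K := by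
      intro s hs t ht hst
      have h1 := hηquasi s hs t ht hst
      rw [← hψ.dist_eq] at h1
      have h2 := dist_triangle4 (γ s) (ψ (η s)) (ψ (η t)) (γ t)
      have h3 := dist_triangle4 (ψ (η s)) (γ s) (γ t) (ψ (η t))
      rw [dist_comm (ψ (η t)) (γ t)] at h2
      rw [dist_comm (ψ (η s)) (γ s)] at h3
      have h4 := hγη s
      have h5 := hγη t
      constructor <;> linarith
    intro s hs t ht
    rcases le_total s t with h | h
    · have := key s hs t ht h
      rw [abs_of_nonpos (by linarith)]
      constructor <;> linarith
    · have := key t ht s hs h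
      rw [dist_comm, abs_of_nonneg (by linarith)]
      constructor <;> linarith

end MorseFlats

section EuclideanGeometry

variable {E : Type*} [NormedAddCommGroup E] [InnerProductSpace ℝ E]

/-- If the angle at `p` of the triangle `0, p, q` is close to `π`, then so is the angle at `y` of
a triangle `u, y, w` with `y` close to `0` and `0, u, w` approximately congruent to `p, 0, q`. -/
lemma inner_sub_sub_nonpos_of_approx {p q u w y : E} {K : ℝ} (hK : 0 ≤ K)
    (hp : 100 * (K + ‖y‖) ≤ ‖p‖) (hq : 100 * (K + ‖y‖) ≤ ‖q - p‖)
    (hu : ‖u‖ ≤ ‖p‖ + K) (hw : ‖w‖ ≤ ‖q - p‖ + K) (huw : ‖q‖ - K ≤ ‖u - w‖)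
    (hpq : 9 / 10 * (‖p‖ * ‖q - p‖) ≤ inner ℝ p (q - p)) :
    inner ℝ (u - y) (w - y) ≤ 0 := by
  have hq2 : ‖q‖ ^ 2 = ‖p‖ ^ 2 + 2 * inner ℝ p (q - p) + ‖q - p‖ ^ 2 := by
    rw [← norm_add_sq_real, add_sub_cancel]
  have hqle : ‖q‖ ≤ ‖p‖ + ‖q - p‖ := norm_le_norm_add_norm_sub' q p
  have huw2 := norm_sub_sq_real u w
  have h1 := (abs_le.1 (abs_real_inner_le_norm u y)).1
  have h2 := (abs_le.1 (abs_real_inner_le_norm y w)).1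
  have hexp : inner ℝ (u - y) (w - y) =
      inner ℝ u w - inner ℝ u y - inner ℝ y w + ‖y‖ ^ 2 := by
    rw [inner_sub_left, inner_sub_right, inner_sub_right, real_inner_self_eq_norm_sq]
    ring
  rw [hexp]
  have hA0 := norm_nonneg p
  have hC0 := norm_nonneg (q - p)
  have hy0 := norm_nonneg y
  have hu0 := norm_nonneg u
  have hw0 := norm_nonneg w
  have hq0 := norm_nonneg q
  generalize inner ℝ p (q - p) = I at *
  generalize inner ℝ u w = J at *
  generalize inner ℝ u y = J₁ at *
  generalize inner ℝ y w = J₂ at *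
  generalize ‖u - w‖ = U at *
  generalize ‖p‖ = A at *
  generalize ‖q - p‖ = C at *
  generalize ‖q‖ = Q at *
  generalize ‖u‖ = u₀ at *
  generalize ‖w‖ = w₀ at *
  generalize ‖y‖ = ρ at *
  have hAC : 0 ≤ A * C := mul_nonneg hA0 hC0
  have hQA : A ≤ Q := (abs_le_of_sq_le_sq' (by linarith [sq_nonneg C]) hq0).2
  have hU : (Q - K) ^ 2 ≤ U ^ 2 := pow_le_pow_left₀ (by linarith) huw 2
  have hu2 : u₀ ^ 2 ≤ (A + K) ^ 2 := pow_le_pow_left₀ hu0 hu 2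
  have hw2 : w₀ ^ 2 ≤ (C + K) ^ 2 := pow_le_pow_left₀ hw0 hw 2
  have hKA : 100 * K * A ≤ C * A := by gcongr; linarith
  have hKC : 100 * K * C ≤ A * C := by gcongr; linarith
  have hρA : 100 * ρ * A ≤ C * A := by gcongr; linarith
  have hρC : 100 * ρ * C ≤ A * C := by gcongr; linarith
  have hKQ : K * Q ≤ K * (A + C) := by gcongr
  have hKK : K * (100 * K) ≤ K * A := by gcongr; linarith
  have hρρ : ρ * (100 * ρ) ≤ ρ * A := by gcongr; linarith
  have hKρ : ρ * (100 * K) ≤ ρ * A := by gcongr; linarith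
  have hu1 : u₀ * ρ ≤ (A + K) * ρ := by gcongr
  have hw1 : ρ * w₀ ≤ ρ * (C + K) := by gcongr
  linarith

/-- An unbounded sequence contains two points forming with the origin a triangle that is almost
degenerate at one of them, with long sides. -/
lemma exists_almost_straight_triangle [FiniteDimensional ℝ E] {p : ℕ → E}
    (hp : ∀ n : ℕ, (n : ℝ) ≤ ‖p n‖) (N : ℝ) :
    ∃ b c, N ≤ ‖p b‖ ∧ N ≤ ‖p c - p b‖ ∧
      9 / 10 * (‖p b‖ * ‖p c - p b‖) ≤ inner ℝ (p b) (p c - p b) := by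
  have : ProperSpace E := FiniteDimensional.proper ℝ E
  have hball : ∀ n, ‖p n‖⁻¹ • p n ∈ closedBall (0 : E) 1 := by
    intro n
    rw [mem_closedBall_zero_iff, norm_smul, norm_inv, norm_norm]
    exact inv_mul_le_one
  obtain ⟨v, -, σ, hσ, hv⟩ := (isCompact_closedBall (0 : E) 1).tendsto_subseq hball
  obtain ⟨M, hM⟩ := Metric.cauchySeq_iff.1 hv.cauchySeq (1 / 10) (by norm_num)
  obtain ⟨m, hm⟩ := exists_nat_ge (max (M : ℝ) (max N 1))
  obtain ⟨n, hn⟩ := exists_nat_ge (max (M : ℝ) (100 * ‖p (σ m)‖))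
  have hmM : M ≤ m := by exact_mod_cast (le_max_left _ _).trans hm
  have hnM : M ≤ n := by exact_mod_cast (le_max_left _ _).trans hn
  have hA : max N 1 ≤ ‖p (σ m)‖ :=
    (((le_max_right _ _).trans hm).trans (by exact_mod_cast hσ.le_apply)).trans (hp (σ m))
  have hC : 100 * ‖p (σ m)‖ ≤ ‖p (σ n)‖ :=
    (((le_max_right _ _).trans hn).trans (by exact_mod_cast hσ.le_apply)).trans (hp (σ n))
  have hdir := hM m hmM n hnM
  simp only [Function.comp_apply, dist_eq_norm] at hdir
  refine ⟨σ m, σ n, (le_max_left _ _).trans hA, ?_⟩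
  obtain ⟨hAN, hA1⟩ := max_le_iff.1 hA
  generalize p (σ m) = x at *
  generalize p (σ n) = z at *
  have hx : 0 < ‖x‖ := by linarith
  have hz : 0 < ‖z‖ := by linarith
  have hlow : ‖z‖ - ‖x‖ ≤ ‖z - x‖ := norm_sub_norm_le z x
  have hup : ‖z - x‖ ≤ ‖z‖ + ‖x‖ := norm_sub_le z x
  refine ⟨by linarith, ?_⟩
  have hsq : ‖‖x‖⁻¹ • x - ‖z‖⁻¹ • z‖ ^ 2 = 2 - 2 * (inner ℝ x z / (‖x‖ * ‖z‖)) := by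
    rw [norm_sub_sq_real, norm_smul, norm_smul, norm_inv, norm_inv, norm_norm, norm_norm,
      inv_mul_cancel₀ hx.ne', inv_mul_cancel₀ hz.ne', real_inner_smul_left,
      real_inner_smul_right]
    field_simp
    ring
  have hsq' : ‖‖x‖⁻¹ • x - ‖z‖⁻¹ • z‖ ^ 2 ≤ (1 / 10) ^ 2 :=
    pow_le_pow_left₀ (norm_nonneg _) hdir.le 2
  have hcos : 99 / 100 ≤ inner ℝ x z / (‖x‖ * ‖z‖) := by linarith
  rw [le_div_iff₀ (by positivity)] at hcos
  rw [inner_sub_right, real_inner_self_eq_norm_sq]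
  have h1 : ‖x‖ * ‖z - x‖ ≤ ‖x‖ * (‖z‖ + ‖x‖) := by gcongr
  have h2 : ‖x‖ * (100 * ‖x‖) ≤ ‖x‖ * ‖z‖ := by gcongr
  linarith [mul_pos hx hz]

end EuclideanGeometry

section BoundaryStabilizer

variable {X : Type*} [MetricSpace X] {F : Set X}

lemma StabBoundary.inv {g : X ≃ᵢ X} (hg : StabBoundary F g) : StabBoundary F g⁻¹ :=
  ⟨hg.2, hg.1⟩

lemma AsympRay.comp_isometry {r r' r'' : ℝ → X} {g : X → X} (hg : Isometry g)
    (h : AsympRay r r') (h' : AsympRay (fun t => g (r' t)) r'') :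
    AsympRay (fun t => g (r t)) r'' := by
  obtain ⟨M, hM⟩ := h
  obtain ⟨M', hM'⟩ := h'
  refine ⟨M + M', fun t ht => (dist_triangle _ (g (r' t)) _).trans ?_⟩
  rw [hg.dist_eq]
  exact add_le_add (hM t ht) (hM' t ht)

lemma StabBoundary.mul {g h : X ≃ᵢ X} (hg : StabBoundary F g) (hh : StabBoundary F h) :
    StabBoundary F (g * h) := by
  constructor
  · intro r hr
    obtain ⟨r', hr', hrr'⟩ := hh.1 r hr
    obtain ⟨r'', hr'', hrr''⟩ := hg.1 r' hr'
    exact ⟨r'', hr'', AsympRay.comp_isometry (g := g) g.isometry hrr' hrr''⟩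
  · intro r hr
    obtain ⟨r', hr', hrr'⟩ := hg.2 r hr
    obtain ⟨r'', hr'', hrr''⟩ := hh.2 r' hr'
    exact ⟨r'', hr'', AsympRay.comp_isometry (g := h.symm) h.symm.isometry hrr' hrr''⟩

lemma StabBoundary.infDist_bounded_along_line {E : Type*} [NormedAddCommGroup E]
    [InnerProductSpace ℝ E] {φ : E → X} (hφ : Isometry φ) {h : X ≃ᵢ X}
    (hh : StabBoundary (range φ) h) (x v : E) :
    ∃ M, ∀ n : ℕ, infDist (h (φ (x + (n : ℝ) • v))) (range φ) ≤ M := by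
  rcases eq_or_ne v 0 with rfl | hv
  · exact ⟨infDist (h (φ x)) (range φ), by simp⟩
  have hv' : ‖v‖ ≠ 0 := norm_ne_zero_iff.2 hv
  obtain ⟨r', hr', M, hM⟩ := hh.1 (fun t => φ (x + t • ‖v‖⁻¹ • v)) ⟨fun s t _ _ => by
    rw [hφ.dist_eq, dist_eq_norm, add_sub_add_left_eq_sub, ← sub_smul, norm_smul, norm_smul,
      norm_inv, norm_norm, inv_mul_cancel₀ hv', mul_one, Real.norm_eq_abs],
    fun t _ => mem_range_self _⟩
  refine ⟨M, fun n => ?_⟩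
  have h0 : 0 ≤ n * ‖v‖ := by positivity
  have h1 := hM _ h0
  beta_reduce at h1
  rw [smul_smul, mul_assoc, mul_inv_cancel₀ hv', mul_one] at h1
  exact (infDist_le_dist_of_mem (hr'.2 _ h0)).trans h1

variable [CAT0 X] [ProperSpace X]
  {E : Type*} [NormedAddCommGroup E] [InnerProductSpace ℝ E] [FiniteDimensional ℝ E]

/-- Isometries stabilizing the boundary of a Morse flat move it by a uniformly bounded amount. -/
lemma exists_infDist_le_of_stabBoundary [Nontrivial E] {φ : E → X} (hφ : Isometry φ)
    (hMorse : IsMorse (range φ)) :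
    ∃ D : ℝ, 0 ≤ D ∧ ∀ h : X ≃ᵢ X, StabBoundary (range φ) h →
      ∀ x, infDist (h (φ x)) (range φ) ≤ D := by
  obtain ⟨D, hD, hbound⟩ := exists_bound_of_infDist_const hφ hMorse
  refine ⟨D, hD, fun h hh x => ?_⟩
  have hψ : Isometry (h ∘ φ) := h.isometry.comp hφ
  exact hbound (h ∘ φ) _ hψ fun y =>
    hφ.infDist_eq_of_bounded hψ (hh.infDist_bounded_along_line hφ) y x

/-- If infinitely many elements of a discrete group stabilize both the boundary of a Morse flat
and that of its translate by `g`, then the translate is close to the flat. -/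
lemma exists_infDist_le_of_infinite [Nontrivial E] {φ : E → X} (hφ : Isometry φ)
    (hMorse : IsMorse (range φ)) {Γ : Subgroup (X ≃ᵢ X)} (hdisc : IsDiscreteSubgroup Γ)
    {g : X ≃ᵢ X}
    (hinf : {h : X ≃ᵢ X | h ∈ Γ ∧ StabBoundary (range φ) h ∧
      StabBoundary (range φ) (g⁻¹ * h * g)}.Infinite) :
    ∃ K : ℝ, ∀ x, infDist (g (φ x)) (range φ) ≤ K := by
  set S := {h : X ≃ᵢ X | h ∈ Γ ∧ StabBoundary (range φ) h ∧
    StabBoundary (range φ) (g⁻¹ * h * g)} with hS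
  obtain ⟨D, hD, hstab⟩ := exists_infDist_le_of_stabBoundary hφ hMorse
  have hSinv : ∀ h ∈ S, h⁻¹ ∈ S := fun h hh => ⟨Γ.inv_mem hh.1, hh.2.1.inv, by
    simpa [mul_assoc] using hh.2.2.inv⟩
  have hSmul : ∀ h ∈ S, ∀ k ∈ S, h * k ∈ S := fun h hh k hk =>
    ⟨Γ.mul_mem hh.1 hk.1, hh.2.1.mul hk.2.1, by simpa [mul_assoc] using hh.2.2.mul hk.2.2⟩
  set o := g (φ 0) with ho
  have hψ : Isometry (g ∘ φ) := g.isometry.comp hφ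
  have hZex : ∀ h ∈ S, ∃ z, dist (h o) (g (φ z)) ≤ D := by
    intro h hh
    have h1 := hstab _ hh.2.2 0
    obtain ⟨z, hz⟩ := hφ.exists_infDist_range_eq ((g⁻¹ * h * g) (φ 0))
    refine ⟨z, ?_⟩
    rw [hz, ← g.dist_eq] at h1
    simpa [IsometryEquiv.mul_apply] using h1
  choose! Z hZ using hZex
  have hZF : ∀ h ∈ S, infDist (g (φ (Z h))) (range φ) < 2 * D + dist o (φ 0) + 1 := by
    intro h hh
    have h1 := hstab h hh.2.1 0
    have h2 := infDist_le_infDist_add_dist (s := range φ) (x := g (φ (Z h))) (y := h (φ 0))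
    have h3 := dist_triangle_left (g (φ (Z h))) (h (φ 0)) (h o)
    rw [h.dist_eq] at h3
    linarith [hZ h hh]
  obtain ⟨K, hK⟩ := hMorse.exists_infDist_le_of_inner_nonpos (E := E) (range_nonempty φ)
    (K := 2 * D + dist o (φ 0) + 1) (by positivity)
  refine ⟨K, fun y => ?_⟩
  have hunb : ∀ n : ℕ, ∃ h ∈ S, (n : ℝ) ≤ ‖Z h‖ := by
    intro n
    by_contra! hcon
    refine hinf (((hdisc o (n + D)).image Subtype.val).subset fun h hh => ?_)
    refine ⟨⟨h, hh.1⟩, ?_, rfl⟩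
    have h1 : dist (g (φ (Z h))) o = ‖Z h‖ := by
      rw [ho, g.dist_eq, hφ.dist_eq, dist_zero_right]
    have h2 := hcon h hh
    have h3 := hZ h hh
    have h4 := dist_triangle (h o) (g (φ (Z h))) o
    change dist (h o) o ≤ n + D
    linarith
  choose s hs hsn using hunb
  obtain ⟨b, c, hb, hc, hbc⟩ := exists_almost_straight_triangle hsn (100 * (3 * D + ‖y‖))
  set β := s b
  set κ := s c
  have hβ : β⁻¹ ∈ S := hSinv _ (hs b)
  have hκ : β⁻¹ * κ ∈ S := hSmul _ hβ _ (hs c)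
  have hdist : ∀ x z : E, dist (g (φ x)) (g (φ z)) = ‖x - z‖ := fun x z => by
    rw [g.dist_eq, hφ.dist_eq, dist_eq_norm]
  have hnorm : ∀ x : E, dist (g (φ x)) o = ‖x‖ := fun x => by rw [ho, hdist, sub_zero]
  have hβo : dist (β⁻¹ o) o = dist (β o) o := by
    rw [← β.dist_eq, IsometryEquiv.apply_inv_self, dist_comm]
  have hκo : dist ((β⁻¹ * κ) o) o = dist (κ o) (β o) := by
    rw [← β.dist_eq, IsometryEquiv.mul_apply, IsometryEquiv.apply_inv_self]
  have hβκ : dist (β⁻¹ o) ((β⁻¹ * κ) o) = dist (κ o) o := by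
    rw [← β.dist_eq, IsometryEquiv.mul_apply, IsometryEquiv.apply_inv_self,
      IsometryEquiv.apply_inv_self, dist_comm]
  have e1 := hZ _ (hs b)
  have e2 := hZ _ (hs c)
  have e3 := hZ _ hβ
  have e4 := hZ _ hκ
  refine hK (g ∘ φ) (Z β⁻¹) (Z (β⁻¹ * κ)) y hψ (hZF _ hβ) (hZF _ hκ)
    (inner_sub_sub_nonpos_of_approx (K := 3 * D) (by positivity) hb hc ?_ ?_ ?_ hbc)
  · rw [← hnorm, ← hnorm]
    have t1 := dist_triangle_left (g (φ (Z β⁻¹))) o (β⁻¹ o)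
    have t2 := dist_triangle (β o) (g (φ (Z β))) o
    linarith
  · rw [← hnorm, ← hdist]
    have t1 := dist_triangle_left (g (φ (Z (β⁻¹ * κ)))) o ((β⁻¹ * κ) o)
    have t2 := dist_triangle4 (κ o) (g (φ (Z κ))) (g (φ (Z β))) (β o)
    rw [dist_comm (g (φ (Z β))) (β o)] at t2
    linarith
  · rw [← hnorm, ← hdist]
    have t1 := dist_triangle4 (β⁻¹ o) (g (φ (Z β⁻¹))) (g (φ (Z (β⁻¹ * κ)))) ((β⁻¹ * κ) o)
    have t2 := dist_triangle_left (g (φ (Z κ))) o (κ o)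
    rw [dist_comm (g (φ (Z (β⁻¹ * κ)))) ((β⁻¹ * κ) o)] at t1
    linarith

end BoundaryStabilizer

/-- Proposition 8.1(4): let `X` be a proper CAT(0) space, `Γ` a discrete group of
isometries, `F` a `Γ`-periodic Morse `d`-flat, and `Γ₀ = Stab_Γ(∂F)`.  Then `Γ₀` is
almost malnormal in `Γ`: for every `g ∈ Γ ∖ Γ₀`, the set `Γ₀ ∩ g Γ₀ g⁻¹` is finite. -/
theorem stab_boundary_almost_malnormal
    {X : Type*} [MetricSpace X] [ProperSpace X] [CAT0 X]
    (Γ : Subgroup (X ≃ᵢ X)) (hdisc : IsDiscreteSubgroup Γ)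
    (d : ℕ) (hd : 1 ≤ d) (F : Set X) (hF : IsFlat d F) (hMorse : IsMorse F)
    (o : X) (ho : o ∈ F) (R : ℝ)
    (hperiodic : ∀ x ∈ F, ∃ g ∈ Γ, (g : X ≃ᵢ X) '' F = F ∧ dist x ((g : X ≃ᵢ X) o) ≤ R) :
    ∀ g ∈ Γ, ¬ StabBoundary F g →
      {h : X ≃ᵢ X | h ∈ Γ ∧ StabBoundary F h ∧
        g⁻¹ * h * g ∈ Γ ∧ StabBoundary F (g⁻¹ * h * g)}.Finite := by
  obtain ⟨φ, hφ, rfl⟩ := hF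
  have : Nonempty (Fin d) := ⟨⟨0, hd⟩⟩
  intro g hg hgF
  by_contra hfin
  have hinf : {h : X ≃ᵢ X | h ∈ Γ ∧ StabBoundary (range φ) h ∧
      StabBoundary (range φ) (g⁻¹ * h * g)}.Infinite :=
    Set.Infinite.mono (fun h hh => ⟨hh.1, hh.2.1, hh.2.2.2⟩) hfin
  have hinf' : {h : X ≃ᵢ X | h ∈ Γ ∧ StabBoundary (range φ) h ∧
      StabBoundary (range φ) (g⁻¹⁻¹ * h * g⁻¹)}.Infinite := by
    refine (hinf.image (f := fun h => g⁻¹ * h * g) fun h _ k _ hhk => by simpa using hhk).mono ?_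
    rintro _ ⟨h, hh, rfl⟩
    exact ⟨Γ.mul_mem (Γ.mul_mem (Γ.inv_mem hg) hh.1) hg, hh.2.2, by
      simpa [mul_assoc] using hh.2.1⟩
  have hrays : ∀ k : X ≃ᵢ X, (∃ K : ℝ, ∀ x, infDist (k (φ x)) (range φ) ≤ K) →
      ∀ r, RayIn (range φ) r → ∃ r', RayIn (range φ) r' ∧ AsympRay (fun t => k (r t)) r' := by
    rintro k ⟨K, hK⟩ r ⟨hr, hrF⟩
    refine hφ.exists_asympRay_of_infDist_le (r := fun t => k (r t)) (K := K)
      (fun s t hs ht => by rw [k.dist_eq, hr s t hs ht]) fun t ht => ?_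
    obtain ⟨x, hx⟩ := hrF t ht
    rw [← hx]
    exact hK x
  exact hgF ⟨hrays g (exists_infDist_le_of_infinite hφ hMorse hdisc hinf),
    hrays g⁻¹ (exists_infDist_le_of_infinite hφ hMorse hdisc hinf')⟩
end
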